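/- arXiv:1604.03089 — 5 statements merged into one kernel-verified Lean document; each statement's English description precedes it below -/
import Mathlib

section
/- Let f : (0,∞) → ℝ be operator convex and let ρ, σ ∈ M_n(ℂ) be positive definite. Then the standard f-divergence is dominated by the maximal f-divergence: S_f(ρ‖σ) ≤ Ŝ_f(ρ‖σ); explicitly, Σ_{a,b} b·f(a/b)·Tr(P_a Q_b) ≤ Tr(σ^{1/2} f(σ^{−1/2} ρ σ^{−1/2}) σ^{1/2}), where the sum runs over the eigenvalues a of ρ and b of σ with spectral projections P_a, Q_b. -/
open Matrix
open scoped ComplexOrder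

/-- Moore–Penrose power of a matrix: apply `x ↦ x ^ t` to the nonzero eigenvalues
(with `0 ^ t := 0`) via the continuous functional calculus. -/
noncomputable def mpow {n : ℕ} (A : Matrix (Fin n) (Fin n) ℂ) (t : ℝ) :
    Matrix (Fin n) (Fin n) ℂ :=
  cfc (fun x : ℝ => if x = 0 then 0 else x ^ t) A

/-- `f : (0,∞) → ℝ` is operator convex: for every size `m`, positive definite
`A B : M_m(ℂ)` and `t ∈ [0,1]`, `f(tA + (1-t)B) ≤ t f(A) + (1-t) f(B)` in the
Loewner order (`f` applied by the spectral functional calculus). -/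
def OperatorConvexOn (f : ℝ → ℝ) : Prop :=
  ∀ (m : ℕ) (A B : Matrix (Fin m) (Fin m) ℂ), A.PosDef → B.PosDef →
    ∀ t : ℝ, 0 ≤ t → t ≤ 1 →
      (t • cfc f A + (1 - t) • cfc f B - cfc f (t • A + (1 - t) • B)).PosSemidef

/-- Spectral projection of a Hermitian matrix `A` onto the eigenvalue `a`. -/
noncomputable def specProj {n : ℕ} (A : Matrix (Fin n) (Fin n) ℂ) (a : ℝ) :
    Matrix (Fin n) (Fin n) ℂ :=
  cfc (fun x : ℝ => if x = a then (1 : ℝ) else 0) A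


section helpers

variable {p q : Type*} [Fintype p] [DecidableEq p] [Fintype q] [DecidableEq q]

lemma aux_cont (A : Matrix p p ℂ) (f : ℝ → ℝ) : ContinuousOn f (spectrum ℝ A) :=
  A.finite_real_spectrum.continuousOn f

lemma aux_poly (f : ℝ → ℝ) (A : Matrix p p ℂ) (B : Matrix q q ℂ)
    (hA : A.IsHermitian) (hB : B.IsHermitian) :
    ∃ P : Polynomial ℝ, cfc f A = Polynomial.aeval A P ∧ cfc f B = Polynomial.aeval B P := by
  classical
  let s : Finset ℝ := A.finite_real_spectrum.toFinset ∪ B.finite_real_spectrum.toFinset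
  have key : ∀ x ∈ s, f x = (Lagrange.interpolate s id f).eval x := fun x hx =>
    (Lagrange.eval_interpolate_at_node (v := id) f (Function.injective_id.injOn) hx).symm
  refine ⟨Lagrange.interpolate s id f, ?_, ?_⟩
  · rw [← cfc_polynomial _ A hA]
    exact cfc_congr fun x hx => key x (by simp [s, hx])
  · rw [← cfc_polynomial _ B hB]
    exact cfc_congr fun x hx => key x (by simp [s, hx])

lemma aux_intertwine (f : ℝ → ℝ) (A : Matrix p p ℂ) (B : Matrix q q ℂ)
    (hA : A.IsHermitian) (hB : B.IsHermitian) (V : Matrix p q ℂ) (h : A * V = V * B) :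
    cfc f A * V = V * cfc f B := by
  obtain ⟨P, h1, h2⟩ := aux_poly f A B hA hB
  have hpow : ∀ k : ℕ, A ^ k * V = V * B ^ k := by
    intro k
    induction k with
    | zero => simp
    | succ k ih => rw [pow_succ, pow_succ, Matrix.mul_assoc, h, ← Matrix.mul_assoc, ih,
        Matrix.mul_assoc]
  rw [h1, h2, Polynomial.aeval_eq_sum_range, Polynomial.aeval_eq_sum_range, Matrix.sum_mul,
    Matrix.mul_sum]
  exact Finset.sum_congr rfl fun k _ => by
    rw [Matrix.smul_mul, Matrix.mul_smul, hpow]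

lemma aux_eigen (f : ℝ → ℝ) (A : Matrix p p ℂ) (hA : A.IsHermitian) (v : p → ℂ) (r : ℝ)
    (h : A *ᵥ v = (r : ℂ) • v) : cfc f A *ᵥ v = (f r : ℂ) • v := by
  have hB : (algebraMap ℝ (Matrix Unit Unit ℂ) r).IsHermitian :=
    IsSelfAdjoint.algebraMap _ (IsSelfAdjoint.all r)
  have := aux_intertwine f A (algebraMap ℝ (Matrix Unit Unit ℂ) r) hA hB
    (Matrix.of fun i _ => v i) (by
      ext i j
      have := congrFun h i
      simp only [Matrix.mulVec, dotProduct, Pi.smul_apply, smul_eq_mul] at this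
      simp [Matrix.mul_apply, Matrix.algebraMap_matrix_apply, this, mul_comm])
  rw [cfc_algebraMap] at this
  ext i
  have := congrFun (congrFun this i) ()
  simp only [Matrix.mul_apply, Matrix.of_apply] at this
  simp only [Matrix.mulVec, dotProduct, this]
  simp [Matrix.algebraMap_matrix_apply, mul_comm]

/-- Operator convexity (midpoint) over an arbitrary finite index type. -/
lemma aux_conv (f : ℝ → ℝ) (hf : OperatorConvexOn f) (A B : Matrix p p ℂ) (hA : A.PosDef)
    (hB : B.PosDef) (t : ℝ) (h0 : 0 ≤ t) (h1 : t ≤ 1) :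
    (t • cfc f A + (1 - t) • cfc f B - cfc f (t • A + (1 - t) • B)).PosSemidef := by
  let e := Fintype.equivFin p
  have hc : ∀ X : Matrix p p ℂ, X.IsHermitian →
      cfc f (X.submatrix e.symm e.symm) = (cfc f X).submatrix e.symm e.symm := by
    intro X hX
    have := aux_intertwine f (X.submatrix e.symm e.symm) X (hX.submatrix _) hX
      ((1 : Matrix p p ℂ).submatrix e.symm id) (by
        ext i j
        have := Equiv.sum_comp e.symm (fun k => if k = j then X (e.symm i) k else 0)
        simpa [Matrix.mul_apply, Matrix.one_apply] using this)
    ext i j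
    have := congrFun (congrFun this i) (e.symm j)
    simpa [Matrix.mul_apply, Matrix.one_apply] using this
  have hA' := hA.submatrix e.symm.injective
  have hB' := hB.submatrix e.symm.injective
  have hH : (t • A + (1 - t) • B).IsHermitian :=
    IsSelfAdjoint.add (IsSelfAdjoint.smul (IsSelfAdjoint.all t) hA.isHermitian)
      (IsSelfAdjoint.smul (IsSelfAdjoint.all _) hB.isHermitian)
  have := hf _ _ _ hA' hB' t h0 h1
  rw [hc A hA.isHermitian, hc B hB.isHermitian] at this
  have h2 := hc _ hH
  change cfc f (t • A.submatrix e.symm e.symm + (1 - t) • B.submatrix e.symm e.symm) = _ at h2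
  rw [h2] at this
  have := this.submatrix e
  convert this using 1
  ext i j
  simp

/-- Jensen's operator inequality for an isometry. -/
lemma aux_jensen (f : ℝ → ℝ) (hf : OperatorConvexOn f) (A : Matrix p p ℂ) (hA : A.PosDef)
    (V : Matrix p q ℂ) (hV : Vᴴ * V = 1) :
    (Vᴴ * cfc f A * V - cfc f (Vᴴ * A * V)).PosSemidef := by
  set S : Matrix p p ℂ := 2 • (V * Vᴴ) - 1 with hS
  have hSH : Sᴴ = S := by
    simp only [hS, two_smul, Matrix.conjTranspose_sub, Matrix.conjTranspose_add,
      Matrix.conjTranspose_mul, Matrix.conjTranspose_conjTranspose, Matrix.conjTranspose_one]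
  have hVS : Vᴴ * S = Vᴴ := by
    rw [hS, Matrix.mul_sub, Matrix.mul_smul, ← Matrix.mul_assoc, hV, Matrix.one_mul,
      Matrix.mul_one, two_smul]
    abel
  have hSV : S * V = V := by
    have := congrArg Matrix.conjTranspose hVS
    simpa [hSH] using this
  have hSS : S * S = 1 := by
    nth_rw 1 [hS]
    rw [Matrix.sub_mul, Matrix.smul_mul, Matrix.mul_assoc, hVS, Matrix.one_mul, hS]
    abel
  have hSu : IsUnit S := IsUnit.of_mul_eq_one S hSS
  have hAH := hA.isHermitian
  have hSAS : (S * A * S).PosDef := by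
    have := (Matrix.IsUnit.posDef_star_left_conjugate_iff (x := A) hSu).2 hA
    rwa [Matrix.star_eq_conjTranspose, hSH] at this
  have hfS : cfc f (S * A * S) = S * cfc f A * S := by
    have := aux_intertwine f (S * A * S) A hSAS.isHermitian hAH S (by
      rw [Matrix.mul_assoc, hSS, Matrix.mul_one])
    rw [← this, Matrix.mul_assoc (cfc f _), hSS, Matrix.mul_one]
  have h := aux_conv f hf A (S * A * S) hA hSAS (1/2) (by norm_num) (by norm_num)
  rw [hfS] at h
  set C := (1/2 : ℝ) • A + (1 - 1/2 : ℝ) • (S * A * S) with hC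
  have hCH : C.IsHermitian :=
    IsSelfAdjoint.add (IsSelfAdjoint.smul (IsSelfAdjoint.all _) hAH)
      (IsSelfAdjoint.smul (IsSelfAdjoint.all _) hSAS.isHermitian)
  have hBH : (Vᴴ * A * V).IsHermitian := Matrix.isHermitian_conjTranspose_mul_mul V hAH
  have hCV : C * V = V * (Vᴴ * A * V) := by
    have e1 : C * V = (1/2 : ℝ) • ((1 + S) * (A * V)) := by
      rw [hC, Matrix.add_mul, Matrix.smul_mul, Matrix.smul_mul, Matrix.mul_assoc (S * A), hSV,
        Matrix.add_mul, Matrix.one_mul, smul_add, Matrix.mul_assoc]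
      norm_num
    have e2 : (1 + S) = (2 : ℝ) • (V * Vᴴ) := by
      rw [hS, two_smul, two_smul]; abel
    rw [e1, e2, Matrix.smul_mul, smul_smul]
    norm_num [Matrix.mul_assoc]
  have hfC := aux_intertwine f C _ hCH hBH V hCV
  have h2 := h.conjTranspose_mul_mul_same V
  convert h2 using 1
  rw [Matrix.mul_sub, Matrix.sub_mul, Matrix.mul_assoc Vᴴ (cfc f C), hfC, ← Matrix.mul_assoc, hV,
    Matrix.one_mul, Matrix.mul_add, Matrix.add_mul, Matrix.mul_smul, Matrix.mul_smul,
    Matrix.smul_mul, Matrix.smul_mul]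
  have e3 : Vᴴ * (S * cfc f A * S) * V = Vᴴ * cfc f A * V := by
    rw [Matrix.mul_assoc, Matrix.mul_assoc (S * _), hSV, Matrix.mul_assoc S, ← Matrix.mul_assoc,
      hVS, Matrix.mul_assoc]
  rw [e3, ← add_smul]
  norm_num

end helpers

section helpers2

variable {p q ι : Type*} [Fintype p] [DecidableEq p] [Fintype q] [DecidableEq q]
  [Fintype ι] [DecidableEq ι]

set_option linter.unusedSectionVars false

lemma aux_bd_mulVec (A : ι → Matrix p p ℂ) (x : p × ι → ℂ) (a : p) (i : ι) :
    (Matrix.blockDiagonal A *ᵥ x) (a, i) = (A i *ᵥ fun b => x (b, i)) a := by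
  simp only [Matrix.mulVec, dotProduct, Matrix.blockDiagonal_apply, Fintype.sum_prod_type]
  refine Finset.sum_congr rfl fun b _ => ?_
  simp

lemma aux_bd_posDef (A : ι → Matrix p p ℂ) (h : ∀ i, (A i).PosDef) :
    (Matrix.blockDiagonal A).PosDef := by
  rw [Matrix.posDef_iff_dotProduct_mulVec]
  refine ⟨?_, fun x hx => ?_⟩
  · rw [Matrix.IsHermitian, Matrix.blockDiagonal_conjTranspose]
    congr 1
    funext i
    exact (h i).isHermitian
  · have e : star x ⬝ᵥ (Matrix.blockDiagonal A *ᵥ x) =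
        ∑ i, star (fun b => x (b, i)) ⬝ᵥ (A i *ᵥ fun b => x (b, i)) := by
      simp only [dotProduct, Fintype.sum_prod_type, aux_bd_mulVec]
      rw [Finset.sum_comm]
      rfl
    rw [e]
    obtain ⟨⟨b, i⟩, hbi⟩ := Function.ne_iff.1 hx
    refine Finset.sum_pos' (fun j _ => (h j).posSemidef.dotProduct_mulVec_nonneg _) ⟨i, Finset.mem_univ _, ?_⟩
    exact (h i).dotProduct_mulVec_pos (Function.ne_iff.2 ⟨b, hbi⟩)

lemma aux_jensen_sum (f : ℝ → ℝ) (hf : OperatorConvexOn f) (A : ι → Matrix p p ℂ)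
    (hA : ∀ i, (A i).PosDef) (W : ι → Matrix p q ℂ) (hW : ∑ i, (W i)ᴴ * W i = 1)
    (ξ : q → ℂ) (t : ι → ℝ) (ht : ∀ i, A i *ᵥ (W i *ᵥ ξ) = (t i : ℂ) • (W i *ᵥ ξ)) :
    (star ξ ⬝ᵥ (cfc f (∑ i, (W i)ᴴ * A i * W i) *ᵥ ξ)).re ≤
      ∑ i, f (t i) * (star (W i *ᵥ ξ) ⬝ᵥ (W i *ᵥ ξ)).re := by
  let V : Matrix (p × ι) q ℂ := Matrix.of fun x y => W x.2 x.1 y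
  have hVV : Vᴴ * V = 1 := by
    rw [← hW]
    ext a b
    simp only [V, Matrix.mul_apply, Matrix.sum_apply, Fintype.sum_prod_type,
      Matrix.conjTranspose_apply, Matrix.of_apply]
    rw [Finset.sum_comm]
  have hAV : ∀ a i y, (Matrix.blockDiagonal A * V) (a, i) y = (A i * W i) a y := by
    intro a i y
    exact aux_bd_mulVec A (fun x => V x y) a i
  have hVAV : Vᴴ * Matrix.blockDiagonal A * V = ∑ i, (W i)ᴴ * A i * W i := by
    rw [Matrix.mul_assoc]
    ext a b
    rw [Matrix.mul_apply]
    simp only [Fintype.sum_prod_type, hAV, Matrix.sum_apply, Matrix.mul_assoc]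
    rw [Finset.sum_comm]
    rfl
  have hJ := aux_jensen f hf (Matrix.blockDiagonal A) (aux_bd_posDef A hA) V hVV
  rw [hVAV] at hJ
  let v : ι → p × ι → ℂ := fun i x => if x.2 = i then (W i *ᵥ ξ) x.1 else 0
  have hv : V *ᵥ ξ = ∑ i, v i := by
    ext ⟨a, i⟩
    simp [v, V, Matrix.mulVec, dotProduct]
  have hev : ∀ i, Matrix.blockDiagonal A *ᵥ v i = (t i : ℂ) • v i := by
    intro i
    ext ⟨a, j⟩
    rw [aux_bd_mulVec]
    by_cases hji : j = i
    · subst hji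
      simpa [v] using congrFun (ht j) a
    · simp only [v, hji, if_false, Pi.smul_apply, smul_zero]
      exact congrFun (Matrix.mulVec_zero (A j)) a
  have hfe := fun i => aux_eigen f _ (aux_bd_posDef A hA).isHermitian (v i) (t i) (hev i)
  have hnn := (Complex.le_def.1 (hJ.dotProduct_mulVec_nonneg ξ)).1
  have hmain : star ξ ⬝ᵥ ((Vᴴ * cfc f (Matrix.blockDiagonal A) * V) *ᵥ ξ) =
      ∑ i, (f (t i) : ℂ) * (star (W i *ᵥ ξ) ⬝ᵥ (W i *ᵥ ξ)) := by
    rw [← Matrix.mulVec_mulVec, ← Matrix.mulVec_mulVec, Matrix.dotProduct_mulVec,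
      ← Matrix.star_mulVec, hv, Matrix.mulVec_sum]
    simp only [hfe]
    simp only [dotProduct, Fintype.sum_prod_type, Pi.star_apply, Finset.sum_apply, v,
      Pi.smul_apply, smul_eq_mul, Finset.mul_sum]
    rw [Finset.sum_comm]
    simp [mul_left_comm]
  rw [Matrix.sub_mulVec, dotProduct_sub, Complex.sub_re, hmain] at hnn
  simp only [Complex.zero_re, Complex.re_sum, Complex.re_ofReal_mul] at hnn
  linarith

end helpers2

section helpers3

open scoped Kronecker

variable {p ι : Type*} [Fintype p] [DecidableEq p] [Fintype ι] [DecidableEq ι]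

lemma aux_cfc_mul (A : Matrix p p ℂ) (f g : ℝ → ℝ) :
    cfc f A * cfc g A = cfc (fun x => f x * g x) A :=
  (cfc_mul f g A (aux_cont A f) (aux_cont A g)).symm

lemma aux_cfc_herm (A : Matrix p p ℂ) (f : ℝ → ℝ) : (cfc f A)ᴴ = cfc f A :=
  cfc_predicate (R := ℝ) (p := IsSelfAdjoint) f A

lemma aux_spec_pos (A : Matrix p p ℂ) (hA : A.PosDef) (x : ℝ) (hx : x ∈ spectrum ℝ A) :
    0 < x := by
  rw [hA.isHermitian.spectrum_real_eq_range_eigenvalues] at hx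
  obtain ⟨i, rfl⟩ := hx
  exact hA.eigenvalues_pos i

lemma aux_sqrt (A : Matrix p p ℂ) (hA : A.PosDef) : ∃ h : Matrix p p ℂ, hᴴ = h ∧ h * h = A := by
  refine ⟨cfc Real.sqrt A, aux_cfc_herm _ _, ?_⟩
  rw [aux_cfc_mul]
  have hsa : IsSelfAdjoint A := hA.isHermitian
  conv_rhs => rw [← cfc_id' ℝ A]
  exact cfc_congr fun x hx => Real.mul_self_sqrt (aux_spec_pos A hA x hx).le

lemma aux_key (f : ℝ → ℝ) (hf : OperatorConvexOn f) (M : ι → Matrix p p ℂ)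
    (hM : ∀ i, (M i).PosDef) (t : ι → ℝ) (ht : ∀ i, 0 < t i) (σ ρ s : Matrix p p ℂ)
    (hσ : σ.PosDef) (hσM : ∑ i, M i = σ) (hρM : ∑ i, (t i : ℂ) • M i = ρ) (hs : sᴴ = s)
    (hss : s * s = σ) :
    (star (vec s) ⬝ᵥ (cfc f (σ⁻¹ᵀ ⊗ₖ ρ) *ᵥ vec s)).re ≤
      ∑ i, f (t i) * (M i).trace.re := by
  choose h hh hhM using fun i => aux_sqrt (M i) (hM i)
  have hsu : IsUnit s := by
    have : IsUnit (s * s) := hss ▸ hσ.isUnit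
    exact (Commute.isUnit_mul_iff rfl).1 this |>.1
  have hsdet : IsUnit s.det := (Matrix.isUnit_iff_isUnit_det s).1 hsu
  have hhdet : ∀ i, IsUnit (h i).det := fun i => by
    have : IsUnit (h i * h i) := hhM i ▸ (hM i).isUnit
    exact (Matrix.isUnit_iff_isUnit_det _).1 ((Commute.isUnit_mul_iff rfl).1 this |>.1)
  have hsi : (s⁻¹)ᴴ = s⁻¹ := by rw [Matrix.conjTranspose_nonsing_inv, hs]
  let W : ι → Matrix (p × p) (p × p) ℂ := fun i => (s⁻¹ * h i)ᵀ ⊗ₖ 1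
  let A : ι → Matrix (p × p) (p × p) ℂ := fun i => (M i)⁻¹ᵀ ⊗ₖ ((t i : ℂ) • M i)
  have hWH : ∀ i, (W i)ᴴ = (h i * s⁻¹)ᵀ ⊗ₖ 1 := by
    intro i
    simp only [W, Matrix.conjTranspose_kronecker, Matrix.conjTranspose_one]
    have e0 : ((s⁻¹ * h i)ᵀ)ᴴ = ((s⁻¹ * h i)ᴴ)ᵀ := rfl
    rw [e0, Matrix.conjTranspose_mul, hh, hsi]
  have hA : ∀ i, (A i).PosDef := fun i =>
    Matrix.PosDef.kronecker (hM i).inv.transpose ((hM i).smul (by exact_mod_cast ht i))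
  have hσi : σ⁻¹ = s⁻¹ * s⁻¹ := by rw [← hss, Matrix.mul_inv_rev]
  have hW : ∑ i, (W i)ᴴ * W i = 1 := by
    have : ∀ i, (W i)ᴴ * W i = (s⁻¹ * M i * s⁻¹)ᵀ ⊗ₖ (1 : Matrix p p ℂ) := by
      intro i
      rw [hWH]
      simp only [W]
      rw [← Matrix.mul_kronecker_mul, ← Matrix.transpose_mul, Matrix.one_mul, ← hhM i]
      simp only [Matrix.mul_assoc]
    simp only [this]
    have e : ∑ i, (s⁻¹ * M i * s⁻¹)ᵀ ⊗ₖ (1 : Matrix p p ℂ) =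
        (s⁻¹ * (∑ i, M i) * s⁻¹)ᵀ ⊗ₖ (1 : Matrix p p ℂ) := by
      rw [Matrix.mul_sum, Matrix.sum_mul, Matrix.transpose_sum]
      ext a b
      simp [Matrix.sum_apply, Finset.sum_mul]
    rw [e, hσM, ← hss, ← Matrix.mul_assoc, Matrix.nonsing_inv_mul _ hsdet, Matrix.one_mul,
      Matrix.mul_nonsing_inv _ hsdet, Matrix.transpose_one, Matrix.one_kronecker_one]
  have hB : ∑ i, (W i)ᴴ * A i * W i = σ⁻¹ᵀ ⊗ₖ ρ := by
    have : ∀ i, (W i)ᴴ * A i * W i = σ⁻¹ᵀ ⊗ₖ ((t i : ℂ) • M i) := by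
      intro i
      rw [hWH]
      simp only [W, A]
      rw [← Matrix.mul_kronecker_mul, ← Matrix.mul_kronecker_mul, ← Matrix.transpose_mul,
        ← Matrix.transpose_mul, Matrix.one_mul, Matrix.mul_one, hσi, ← hhM i, Matrix.mul_inv_rev]
      congr 2
      have e1 : s⁻¹ * h i * ((h i)⁻¹ * (h i)⁻¹ * (h i * s⁻¹)) =
          s⁻¹ * (h i * (h i)⁻¹) * ((h i)⁻¹ * h i) * s⁻¹ := by
        simp only [Matrix.mul_assoc]
      rw [e1, Matrix.mul_nonsing_inv _ (hhdet i), Matrix.nonsing_inv_mul _ (hhdet i),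
        Matrix.mul_one, Matrix.mul_one]
    simp only [this]
    rw [← hρM]
    ext a b
    simp [Matrix.sum_apply, Finset.mul_sum]
  have hWs : ∀ i, W i *ᵥ vec s = vec (h i) := by
    intro i
    simp only [W]
    rw [Matrix.kronecker_mulVec_vec, Matrix.transpose_transpose, Matrix.one_mul,
      ← Matrix.mul_assoc, Matrix.mul_nonsing_inv _ hsdet, Matrix.one_mul]
  have hev : ∀ i, A i *ᵥ (W i *ᵥ vec s) = (t i : ℂ) • (W i *ᵥ vec s) := by
    intro i
    rw [hWs]
    simp only [A]
    rw [Matrix.kronecker_mulVec_vec, Matrix.transpose_transpose, ← Matrix.vec_smul,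
      Matrix.smul_mul, Matrix.smul_mul]
    congr 2
    rw [← hhM i, Matrix.mul_inv_rev, ← Matrix.mul_assoc, Matrix.mul_assoc (h i * h i),
      Matrix.mul_nonsing_inv _ (hhdet i), Matrix.mul_one, Matrix.mul_assoc,
      Matrix.mul_nonsing_inv _ (hhdet i), Matrix.mul_one]
  have := aux_jensen_sum f hf A hA W hW (vec s) t hev
  rw [hB] at this
  simpa only [hWs, Matrix.star_vec_dotProduct_vec, hh, hhM] using this

end helpers3

section helpers4

open scoped Kronecker

variable {n : ℕ}

lemma aux_specProj_mul (A : Matrix (Fin n) (Fin n) ℂ) (f : ℝ → ℝ) (a : ℝ) :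
    cfc f A * specProj A a = (f a : ℂ) • specProj A a := by
  have e : ((f a : ℂ) • specProj A a) = f a • specProj A a := by
    ext i j; simp
  rw [e, specProj, aux_cfc_mul, ← cfc_smul (f a) _ A (aux_cont A _)]
  congr 1
  funext x
  by_cases h : x = a <;> simp [h]

lemma aux_specProj_mul' (A : Matrix (Fin n) (Fin n) ℂ) (f : ℝ → ℝ) (a : ℝ) :
    specProj A a * cfc f A = (f a : ℂ) • specProj A a := by
  rw [← aux_specProj_mul, specProj, aux_cfc_mul, aux_cfc_mul]
  simp only [mul_comm]

lemma aux_specProj_sum (A : Matrix (Fin n) (Fin n) ℂ) (f : ℝ → ℝ) :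
    cfc f A = ∑ a ∈ A.finite_real_spectrum.toFinset, (f a : ℂ) • specProj A a := by
  have e : ∀ a, ((f a : ℂ) • specProj A a) = f a • specProj A a := fun a => by
    ext i j; simp
  simp only [e]
  simp only [specProj]
  simp only [← cfc_smul _ _ A (aux_cont A _)]
  rw [← cfc_sum _ A _ (fun i _ => aux_cont A _)]
  refine cfc_congr fun x hx => ?_
  simp [Finset.sum_apply, hx]

lemma aux_specProj_one (A : Matrix (Fin n) (Fin n) ℂ) (hA : A.IsHermitian) :
    ∑ a ∈ A.finite_real_spectrum.toFinset, specProj A a = 1 := by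
  have := aux_specProj_sum A (fun _ => 1)
  have h1 : cfc (fun _ : ℝ => (1 : ℝ)) A = 1 := cfc_const_one ℝ A hA
  simpa [h1] using this.symm

lemma aux_shift (A : Matrix (Fin n) (Fin n) ℂ) (hA : A.IsHermitian) (α : ℝ) :
    cfc (fun x => x + α) A = A + (α : ℂ) • 1 := by
  have hsa : IsSelfAdjoint A := hA
  rw [cfc_add_const α (fun x => x) A (aux_cont A _), cfc_id' ℝ A]
  congr 1
  ext i j
  simp [Matrix.algebraMap_matrix_apply, Matrix.one_apply]

lemma aux_eval (f : ℝ → ℝ) (ρ σ : Matrix (Fin n) (Fin n) ℂ) (hρ : ρ.PosDef) (hσ : σ.PosDef)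
    (α β : ℝ) (hβ : 0 ≤ β)
    (hρ' : (ρ + (α : ℂ) • 1).PosDef) (hσ' : (σ + (β : ℂ) • 1).PosDef) :
    star (vec (cfc (fun x => √(x + β)) σ)) ⬝ᵥ
      (cfc f ((σ + (β : ℂ) • 1)⁻¹ᵀ ⊗ₖ (ρ + (α : ℂ) • 1)) *ᵥ vec (cfc (fun x => √(x + β)) σ)) =
    ∑ a ∈ ρ.finite_real_spectrum.toFinset, ∑ b ∈ σ.finite_real_spectrum.toFinset,
      (((b + β) * f ((a + α) / (b + β)) : ℝ) : ℂ) * (specProj ρ a * specProj σ b).trace := by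
  set s := cfc (fun x => √(x + β)) σ with hs
  have hsv : vec s = ∑ a ∈ ρ.finite_real_spectrum.toFinset,
      ∑ b ∈ σ.finite_real_spectrum.toFinset,
        ((√(b + β) : ℝ) : ℂ) • vec (specProj ρ a * specProj σ b) := by
    have : s = ∑ a ∈ ρ.finite_real_spectrum.toFinset,
      ∑ b ∈ σ.finite_real_spectrum.toFinset,
        ((√(b + β) : ℝ) : ℂ) • (specProj ρ a * specProj σ b) := by
      conv_lhs => rw [← Matrix.one_mul s, ← aux_specProj_one ρ hρ.isHermitian, hs,
        aux_specProj_sum σ]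
      rw [Matrix.sum_mul]
      refine Finset.sum_congr rfl fun a _ => ?_
      rw [Matrix.mul_sum]
      simp only [Matrix.mul_smul]
    conv_lhs => rw [this]
    simp only [Matrix.vec_sum, Matrix.vec_smul]
  have hH : ((σ + (β : ℂ) • 1)⁻¹ᵀ ⊗ₖ (ρ + (α : ℂ) • 1)).IsHermitian :=
    (Matrix.PosDef.kronecker hσ'.inv.transpose hρ').isHermitian
  have hev : ∀ a, ∀ b ∈ σ.finite_real_spectrum.toFinset,
      cfc f ((σ + (β : ℂ) • 1)⁻¹ᵀ ⊗ₖ (ρ + (α : ℂ) • 1)) *ᵥ vec (specProj ρ a * specProj σ b) =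
        (f ((a + α) / (b + β)) : ℂ) • vec (specProj ρ a * specProj σ b) := by
    intro a b hb
    have hb0 : 0 < b := aux_spec_pos σ hσ b (by simpa using hb)
    refine aux_eigen f _ hH _ _ ?_
    rw [Matrix.kronecker_mulVec_vec, Matrix.transpose_transpose, ← Matrix.vec_smul]
    congr 1
    have h1 := aux_specProj_mul ρ (fun x => x + α) a
    rw [aux_shift ρ hρ.isHermitian] at h1
    have h2 := aux_specProj_mul' σ (fun x => x + β) b
    rw [aux_shift σ hσ.isHermitian] at h2
    have hdet := (Matrix.isUnit_iff_isUnit_det _).1 hσ'.isUnit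
    have hne : ((b + β : ℝ) : ℂ) ≠ 0 := by
      exact_mod_cast (by positivity : (b + β) ≠ 0)
    have h3 : specProj σ b * (σ + (β : ℂ) • 1)⁻¹ = ((b + β : ℝ) : ℂ)⁻¹ • specProj σ b := by
      have := congrArg (fun X => ((b + β : ℝ) : ℂ)⁻¹ • (X * (σ + (β : ℂ) • 1)⁻¹)) h2
      simp only [Matrix.mul_assoc, Matrix.mul_nonsing_inv _ hdet, Matrix.mul_one,
        Matrix.smul_mul] at this
      rw [this, smul_smul, inv_mul_cancel₀ hne, one_smul]
    rw [← Matrix.mul_assoc, h1, Matrix.smul_mul, Matrix.smul_mul, Matrix.mul_assoc, h3,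
      Matrix.mul_smul, smul_smul]
    congr 1
    push_cast
    rw [div_eq_mul_inv]
  have hsH : sᴴ = s := aux_cfc_herm _ _
  conv_lhs => rw [hsv, Matrix.mulVec_sum, ← hsv]
  rw [dotProduct_sum]
  refine Finset.sum_congr rfl fun a _ => ?_
  rw [Matrix.mulVec_sum, dotProduct_sum]
  refine Finset.sum_congr rfl fun b hb => ?_
  have hb0 : 0 < b := aux_spec_pos σ hσ b (by simpa using hb)
  rw [Matrix.mulVec_smul, hev a b hb, dotProduct_smul, dotProduct_smul,
    Matrix.star_vec_dotProduct_vec, hsH, Matrix.trace_mul_comm, Matrix.mul_assoc, hs,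
    aux_specProj_mul', Matrix.mul_smul, Matrix.trace_smul]
  have : (((b + β : ℝ)) : ℂ) = ((√(b + β) : ℝ) : ℂ) * ((√(b + β) : ℝ) : ℂ) := by
    rw [← Complex.ofReal_mul, Real.mul_self_sqrt (by positivity)]
  rw [Complex.ofReal_mul, this]
  simp only [smul_eq_mul]
  ring

end helpers4

section helpers5

variable {n : ℕ}

lemma aux_continuous (f : ℝ → ℝ) (hf : OperatorConvexOn f) : ContinuousOn f (Set.Ioi 0) := by
  refine ConvexOn.continuousOn isOpen_Ioi ⟨convex_Ioi 0, fun x hx y hy a b ha hb hab => ?_⟩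
  have hpd : ∀ z : ℝ, 0 < z → (algebraMap ℝ (Matrix (Fin 1) (Fin 1) ℂ) z).PosDef := by
    intro z hz
    rw [Algebra.algebraMap_eq_smul_one]
    exact Matrix.PosDef.one.smul hz
  have hb' : b = 1 - a := by linarith
  subst hb'
  have h := hf 1 _ _ (hpd x hx) (hpd y hy) a ha (by linarith)
  have e : a • algebraMap ℝ (Matrix (Fin 1) (Fin 1) ℂ) x +
      (1 - a) • algebraMap ℝ (Matrix (Fin 1) (Fin 1) ℂ) y =
      algebraMap ℝ (Matrix (Fin 1) (Fin 1) ℂ) (a • x + (1 - a) • y) := by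
    simp [Algebra.algebraMap_eq_smul_one, add_smul, smul_smul]
  rw [e, cfc_algebraMap, cfc_algebraMap, cfc_algebraMap] at h
  have h0 := h.diag_nonneg (i := 0)
  have h1 := (Complex.le_def.1 h0).1
  simp [Matrix.algebraMap_matrix_apply] at h1
  simpa using h1

lemma aux_mpow_mul (σ : Matrix (Fin n) (Fin n) ℂ) (hσ : σ.PosDef) (u v : ℝ) (g : ℝ → ℝ)
    (h : ∀ x, 0 < x → x ^ (u + v) = g x) : mpow σ u * mpow σ v = cfc g σ := by
  rw [mpow, mpow, aux_cfc_mul]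
  refine cfc_congr fun x hx => ?_
  have hx0 := aux_spec_pos σ hσ x hx
  simp only [hx0.ne', if_false]
  rw [← h x hx0, Real.rpow_add hx0]

lemma aux_main (f : ℝ → ℝ) (hf : OperatorConvexOn f)
    (ρ σ : Matrix (Fin n) (Fin n) ℂ) (hρ : ρ.PosDef) (hσ : σ.PosDef) :
    (∑ a ∈ ρ.finite_real_spectrum.toFinset, ∑ b ∈ σ.finite_real_spectrum.toFinset,
        b * f (a / b) * (Matrix.trace (specProj ρ a * specProj σ b)).re)
      ≤ (Matrix.trace (mpow σ (1/2) *
          cfc f (mpow σ (-(1/2)) * ρ * mpow σ (-(1/2))) * mpow σ (1/2))).re := by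
  classical
  set r := mpow σ (1/2) with hr
  set ri := mpow σ (-(1/2)) with hri
  have hrH : rᴴ = r := aux_cfc_herm _ _
  have hriH : riᴴ = ri := aux_cfc_herm _ _
  have hsa : IsSelfAdjoint σ := hσ.isHermitian
  have hone : cfc (fun _ : ℝ => (1 : ℝ)) σ = 1 := cfc_const_one ℝ σ hσ.isHermitian
  have hrr : r * r = σ := by
    rw [hr, aux_mpow_mul σ hσ _ _ (fun x => x) (fun x _ => by norm_num), cfc_id' ℝ σ]
  have hrri : r * ri = 1 := by
    rw [hr, hri, aux_mpow_mul σ hσ _ _ (fun _ => 1) (fun x _ => by norm_num), hone]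
  have hrir : ri * r = 1 := by
    rw [hr, hri, aux_mpow_mul σ hσ _ _ (fun _ => 1) (fun x _ => by norm_num), hone]
  set T := ri * ρ * ri with hT
  have hTpd : T.PosDef := by
    have hu : IsUnit ri := IsUnit.of_mul_eq_one r hrir
    have := (Matrix.IsUnit.posDef_star_left_conjugate_iff (x := ρ) hu).2 hρ
    rwa [Matrix.star_eq_conjTranspose, hriH] at this
  set S := T.finite_real_spectrum.toFinset with hS
  have hSpos : ∀ t : S, 0 < (t : ℝ) := fun t =>
    aux_spec_pos T hTpd t ((Set.Finite.mem_toFinset _).1 t.2)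
  let M : S → Matrix (Fin n) (Fin n) ℂ := fun t => r * specProj T t * r
  have hMps : ∀ t, (M t).PosSemidef := by
    intro t
    have h1 : (specProj T t)ᴴ = specProj T t := aux_cfc_herm _ _
    have h2 : specProj T t * specProj T t = specProj T t := by
      rw [specProj, aux_cfc_mul]
      congr 1
      funext x
      by_cases h : x = (t : ℝ) <;> simp [h]
    have := Matrix.posSemidef_conjTranspose_mul_self (specProj T t * r)
    rw [Matrix.conjTranspose_mul, h1, hrH, Matrix.mul_assoc, ← Matrix.mul_assoc (specProj T t),
      h2, ← Matrix.mul_assoc] at this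
    exact this
  have hMsum : ∀ g : ℝ → ℝ, ∑ t : S, (g t : ℂ) • M t = r * cfc g T * r := by
    intro g
    rw [aux_specProj_sum T g, Matrix.mul_sum, Matrix.sum_mul]
    rw [← Finset.sum_coe_sort S (fun t => r * ((g t : ℂ) • specProj T t) * r)]
    refine Finset.sum_congr rfl fun t _ => ?_
    simp only [M, Matrix.mul_smul, Matrix.smul_mul]
  have hM1 : ∑ t : S, M t = σ := by
    have := hMsum (fun _ => 1)
    have h1 : cfc (fun _ : ℝ => (1 : ℝ)) T = 1 := cfc_const_one ℝ T hTpd.isHermitian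
    rw [h1] at this
    simpa [hrr] using this
  have hMt : ∑ t : S, ((t : ℝ) : ℂ) • M t = ρ := by
    have := hMsum (fun x => x)
    have hTs : IsSelfAdjoint T := hTpd.isHermitian
    rw [cfc_id' ℝ T] at this
    rw [this, hT]
    calc r * (ri * ρ * ri) * r = (r * ri) * ρ * (ri * r) := by simp only [Matrix.mul_assoc]
      _ = ρ := by rw [hrri, hrir, Matrix.one_mul, Matrix.mul_one]
  have hRHS : (r * cfc f T * r).trace.re = ∑ t : S, f t * (M t).trace.re := by
    rw [← hMsum f, Matrix.trace_sum, Complex.re_sum]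
    simp [Matrix.trace_smul]
  rw [hRHS]
  set k : ℝ := (Fintype.card S : ℝ) with hk
  set c : ℝ := ∑ t : S, (t : ℝ) with hc
  have hk0 : 0 ≤ k := by positivity
  have hc0 : 0 ≤ c := Finset.sum_nonneg fun t _ => (hSpos t).le
  have hpd : ∀ A : Matrix (Fin n) (Fin n) ℂ, A.PosDef → ∀ x : ℝ, 0 ≤ x →
      (A + (x : ℂ) • 1).PosDef := fun A hA x hx =>
    hA.add_posSemidef (Matrix.PosSemidef.one.smul (by exact_mod_cast hx))
  have hineq : ∀ ε : ℝ, 0 < ε →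
      (∑ a ∈ ρ.finite_real_spectrum.toFinset, ∑ b ∈ σ.finite_real_spectrum.toFinset,
        (b + k * ε) * f ((a + c * ε) / (b + k * ε)) *
          (Matrix.trace (specProj ρ a * specProj σ b)).re)
      ≤ ∑ t : S, f t * ((M t).trace.re + ε * n) := by
    intro ε hε
    have hα : 0 ≤ c * ε := by positivity
    have hβ : 0 ≤ k * ε := by positivity
    have hσ' := hpd σ hσ _ hβ
    have hρ' := hpd ρ hρ _ hα
    have hM' : ∀ t, (M t + (ε : ℂ) • 1).PosDef := fun t =>
      Matrix.PosDef.posSemidef_add (hMps t) (Matrix.PosDef.one.smul (by exact_mod_cast hε))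
    have hss : cfc (fun x => √(x + k * ε)) σ * cfc (fun x => √(x + k * ε)) σ =
        σ + ((k * ε : ℝ) : ℂ) • 1 := by
      rw [aux_cfc_mul, ← aux_shift σ hσ.isHermitian]
      refine cfc_congr fun x hx => ?_
      have := aux_spec_pos σ hσ x hx
      exact Real.mul_self_sqrt (by positivity)
    have key := aux_key f hf (fun t => M t + (ε : ℂ) • 1) hM' (fun t : S => (t : ℝ)) hSpos
      (σ + ((k * ε : ℝ) : ℂ) • 1) (ρ + ((c * ε : ℝ) : ℂ) • 1) (cfc (fun x => √(x + k * ε)) σ)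
      hσ'
      (by
        rw [Finset.sum_add_distrib, hM1, ← Finset.sum_smul]
        congr 2
        simp [hk])
      (by
        simp only [smul_add, smul_smul]
        rw [Finset.sum_add_distrib, hMt, ← Finset.sum_smul, ← Finset.sum_mul]
        congr 2
        simp [hc])
      (aux_cfc_herm _ _) hss
    rw [aux_eval f ρ σ hρ hσ _ _ hβ hρ' hσ'] at key
    simp only [Complex.re_sum, Complex.re_ofReal_mul, Matrix.trace_add, Matrix.trace_smul,
      Matrix.trace_one, Complex.add_re, smul_eq_mul, Fintype.card_fin, Complex.natCast_re] at key
    exact key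
  have hfc := aux_continuous f hf
  have hL : ContinuousAt (fun ε : ℝ =>
      ∑ a ∈ ρ.finite_real_spectrum.toFinset, ∑ b ∈ σ.finite_real_spectrum.toFinset,
        (b + k * ε) * f ((a + c * ε) / (b + k * ε)) *
          (Matrix.trace (specProj ρ a * specProj σ b)).re) 0 := by
    refine tendsto_finsetSum _ fun a ha => tendsto_finsetSum _ fun b hb => ?_
    have ha0 : 0 < a := aux_spec_pos ρ hρ a (by simpa using ha)
    have hb0 : 0 < b := aux_spec_pos σ hσ b (by simpa using hb)
    have hq : ContinuousAt (fun ε : ℝ => (a + c * ε) / (b + k * ε)) 0 := by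
      refine ContinuousAt.div (by fun_prop) (by fun_prop) (by simpa using hb0.ne')
    have hf0 : ContinuousAt f ((a + c * 0) / (b + k * 0)) :=
      hfc.continuousAt (Ioi_mem_nhds (by simp; positivity))
    have h2 : ContinuousAt (fun ε : ℝ => f ((a + c * ε) / (b + k * ε))) 0 :=
      ContinuousAt.comp (f := fun ε : ℝ => (a + c * ε) / (b + k * ε)) hf0 hq
    exact ((by fun_prop : ContinuousAt (fun ε : ℝ => b + k * ε) 0).mul h2).mul continuousAt_const
  have hR : ContinuousAt (fun ε : ℝ => ∑ t : S, f t * ((M t).trace.re + ε * n)) 0 := by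
    fun_prop
  have hlim := le_of_tendsto_of_tendsto
    (hL.tendsto.mono_left (nhdsWithin_le_nhds (s := Set.Ioi 0)))
    (hR.tendsto.mono_left (nhdsWithin_le_nhds (s := Set.Ioi 0)))
    (Filter.eventually_of_mem self_mem_nhdsWithin fun ε hε => hineq ε hε)
  simpa using hlim

end helpers5

/-- For an operator convex `f` and positive definite `ρ, σ`, the standard
`f`-divergence `S_f(ρ‖σ) = Σ_{a,b} b·f(a/b)·Tr(P_a Q_b)` is dominated by the maximal
`f`-divergence `Ŝ_f(ρ‖σ) = Tr(σ^{1/2} f(σ^{-1/2} ρ σ^{-1/2}) σ^{1/2})`. -/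
theorem stmt0 {n : ℕ} (f : ℝ → ℝ) (hf : OperatorConvexOn f)
    (ρ σ : Matrix (Fin n) (Fin n) ℂ) (hρ : ρ.PosDef) (hσ : σ.PosDef) :
    (∑ᶠ a ∈ spectrum ℝ ρ, ∑ᶠ b ∈ spectrum ℝ σ,
        b * f (a / b) * (Matrix.trace (specProj ρ a * specProj σ b)).re)
      ≤ (Matrix.trace (mpow σ (1/2) *
          cfc f (mpow σ (-(1/2)) * ρ * mpow σ (-(1/2))) * mpow σ (1/2))).re := by

  have h := aux_main f hf ρ σ hρ hσ
  rw [finsum_mem_eq_finite_toFinset_sum _ ρ.finite_real_spectrum]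
  simp only [finsum_mem_eq_finite_toFinset_sum _ σ.finite_real_spectrum]
  exact h
end

section
/- Let ρ, σ ∈ M_n(ℂ) be positive semidefinite with supp ρ ⊆ supp σ and ρσ ≠ σρ. Let f : [0,∞) → ℝ be continuous and admit the representation f(x) = f(0) + a·x + b·x² + ∫_{(0,∞)} ( x/(1+s) − x/(x+s) ) dμ(s) for all x ∈ (0,∞), where a ∈ ℝ, b ≥ 0, and μ is a positive measure on (0,∞) with ∫ (1+s)^{−2} dμ(s) < ∞. Assume the support of μ has cardinality at least that of the finite set spec(σ^{−1/2} ρ σ^{−1/2}) ∪ { a·b' : a an eigenvalue of ρ, b' an eigenvalue of the Moore–Penrose inverse σ^{−1} } (in particular an infinite support suffices). Then S_f(ρ‖σ) < Ŝ_f(ρ‖σ). -/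
open Matrix MeasureTheory
open scoped ComplexOrder

/-- The standard `f`-divergence of positive semidefinite matrices with `supp ρ ⊆ supp σ`:
`S_f(ρ‖σ) = Σ_{a ∈ spec ρ} Σ_{b ∈ spec σ, b ≠ 0} b·f(a/b)·Tr(P_a Q_b)`. -/
noncomputable def Sf {n : ℕ} (f : ℝ → ℝ) (ρ σ : Matrix (Fin n) (Fin n) ℂ) : ℝ :=
  ∑ᶠ a ∈ spectrum ℝ ρ, ∑ᶠ b ∈ spectrum ℝ σ,
    if b = 0 then 0 else
      b * f (a / b) * (Matrix.trace (specProj ρ a * specProj σ b)).re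

/-- The maximal `f`-divergence `Ŝ_f(ρ‖σ) = Tr(σ^{1/2} f(σ^{-1/2} ρ σ^{-1/2}) σ^{1/2})`,
with Moore–Penrose inverse square roots. -/
noncomputable def maxSf {n : ℕ} (f : ℝ → ℝ) (ρ σ : Matrix (Fin n) (Fin n) ℂ) : ℝ :=
  (Matrix.trace (mpow σ (1/2) *
    cfc f (mpow σ (-(1/2)) * ρ * mpow σ (-(1/2))) * mpow σ (1/2))).re

/-- The (topological) support of a measure on `ℝ`: points all of whose neighbourhoods
have positive measure. -/
def measSupport (μ : Measure ℝ) : Set ℝ := {x : ℝ | ∀ U ∈ nhds x, 0 < μ U}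


lemma aux_integrable (μ : Measure ℝ) (hμ0 : μ (Set.Iic (0 : ℝ)) = 0)
    (hμfin : ∫⁻ s, ENNReal.ofReal ((1 + s)⁻¹ ^ 2) ∂μ < ⊤) (x : ℝ) (hx : 0 ≤ x) :
    Integrable (fun s => x / (1 + s) - x / (x + s)) μ := by
  have hpos : ∀ᵐ s ∂μ, 0 < s := by
    rw [ae_iff]; convert hμ0 using 2; ext s; simp
  rcases hx.eq_or_lt with rfl | hx
  · simp
  have hI : Integrable (fun s : ℝ => (1 + s)⁻¹ ^ 2) μ := by
    refine ⟨by fun_prop, ?_⟩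
    rw [hasFiniteIntegral_iff_ofReal (Filter.Eventually.of_forall fun s => by positivity)]
    exact hμfin
  refine (hI.const_mul (x * |x - 1| * (1 + 1 / x))).mono' (by fun_prop) ?_
  filter_upwards [hpos] with s hs
  have h1 : x / (1 + s) - x / (x + s) = x * (x - 1) * ((1 + s)⁻¹ * (x + s)⁻¹) := by
    field_simp; ring
  have h2 : (x + s)⁻¹ ≤ (1 + 1 / x) * (1 + s)⁻¹ := by
    rw [← one_div, ← div_eq_mul_inv, div_le_div_iff₀ (by positivity) (by positivity)]
    have : (1 + 1 / x) * (x + s) = 1 + s + x + s / x := by field_simp; ring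
    rw [this]; have : 0 ≤ s / x := by positivity
    linarith
  rw [h1, Real.norm_eq_abs, abs_mul, abs_mul, abs_of_pos hx,
    abs_of_pos (show 0 < (1 + s)⁻¹ * (x + s)⁻¹ by positivity)]
  have : (1 + s)⁻¹ * (x + s)⁻¹ ≤ (1 + s)⁻¹ * ((1 + 1 / x) * (1 + s)⁻¹) := by gcongr
  calc _ ≤ x * |x - 1| * ((1 + s)⁻¹ * ((1 + 1 / x) * (1 + s)⁻¹)) := by gcongr
    _ = _ := by ring

lemma aux_meas {ι κ : Type*} [Fintype ι] [Fintype κ] (q t : ι → ℝ) (w x : κ → ℝ)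
    (ht : ∀ k, 0 ≤ t k) (hx : ∀ k, 0 ≤ x k)
    (m0 : ∑ k, w k = ∑ k, q k) (m1 : ∑ k, w k * x k = ∑ k, q k * t k)
    (m2 : ∑ k, w k * x k ^ 2 = ∑ k, q k * t k ^ 2)
    (hF : ∀ s : ℝ, 0 < s → ∑ k, w k / (x k + s) < ∑ k, q k / (t k + s))
    (f : ℝ → ℝ) 
    (a b : ℝ) (μ : Measure ℝ)
    (hμ0 : μ (Set.Iic (0 : ℝ)) = 0)
    (hμfin : ∫⁻ s, ENNReal.ofReal ((1 + s)⁻¹ ^ 2) ∂μ < ⊤)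
    (hrep : ∀ x : ℝ, 0 < x →
      f x = f 0 + a * x + b * x ^ 2 + ∫ s, (x / (1 + s) - x / (x + s)) ∂μ)
    (hμ : μ ≠ 0) : ∑ k, w k * f (x k) < ∑ k, q k * f (t k) := by
  have hpos : ∀ᵐ s ∂μ, 0 < s := by
    rw [ae_iff]; convert hμ0 using 2; ext s; simp
  have hrep' : ∀ x : ℝ, 0 ≤ x →
      f x = f 0 + a * x + b * x ^ 2 + ∫ s, (x / (1 + s) - x / (x + s)) ∂μ := by
    intro x hx
    rcases hx.eq_or_lt with rfl | hx
    · simp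
    · exact hrep x hx
  have key : ∀ {ι : Type _} [Fintype ι] (q t : ι → ℝ) (ht : ∀ k, 0 ≤ t k),
      ∑ k, q k * f (t k) = f 0 * ∑ k, q k + a * ∑ k, q k * t k + b * ∑ k, q k * t k ^ 2
        + ∫ s, ∑ k, q k * (t k / (1 + s) - t k / (t k + s)) ∂μ := by
    intro ι _ q t ht
    rw [integral_finsetSum _ (fun k _ => (aux_integrable μ hμ0 hμfin _ (ht k)).const_mul _)]
    simp_rw [integral_const_mul, Finset.mul_sum, ← Finset.sum_add_distrib]
    refine Finset.sum_congr rfl fun k _ => ?_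
    rw [hrep' _ (ht k)]; ring
  have key' : ∀ {ι : Type _} [Fintype ι] (q t : ι → ℝ) (ht : ∀ k, 0 ≤ t k),
      ∑ k, q k * f (t k) = f 0 * ∑ k, q k + a * ∑ k, q k * t k + b * ∑ k, q k * t k ^ 2
        + ∫ s, ∑ k, q k * (t k / (1 + s) - t k / (t k + s)) ∂μ := by
    intro ι _ q t ht
    rw [integral_finsetSum _ (fun k _ => (aux_integrable μ hμ0 hμfin _ (ht k)).const_mul _)]
    simp_rw [integral_const_mul, Finset.mul_sum, ← Finset.sum_add_distrib]
    refine Finset.sum_congr rfl fun k _ => ?_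
    rw [hrep' _ (ht k)]; ring
  have i1 : Integrable (fun s => ∑ k, w k * (x k / (1 + s) - x k / (x k + s))) μ :=
    integrable_finsetSum _ (fun k _ => (aux_integrable μ hμ0 hμfin _ (hx k)).const_mul _)
  have i2 : Integrable (fun s => ∑ k, q k * (t k / (1 + s) - t k / (t k + s))) μ :=
    integrable_finsetSum _ (fun k _ => (aux_integrable μ hμ0 hμfin _ (ht k)).const_mul _)
  rw [key w x hx, key' q t ht, m0, m1, m2]
  have hlt : ∀ᵐ s ∂μ, 0 < ∑ k, q k * (t k / (1 + s) - t k / (t k + s)) -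
      ∑ k, w k * (x k / (1 + s) - x k / (x k + s)) := by
    filter_upwards [hpos] with s hs
    have e : ∀ {ι : Type _} [Fintype ι] (q t : ι → ℝ) (ht : ∀ k, 0 ≤ t k),
       ∑ k, q k * (t k / (1 + s) - t k / (t k + s)) =
        (∑ k, q k * t k) / (1 + s) - ∑ k, q k + s * ∑ k, q k / (t k + s) := by
      intro ι _ q t ht
      rw [Finset.sum_div, Finset.mul_sum, ← Finset.sum_sub_distrib, ← Finset.sum_add_distrib]
      refine Finset.sum_congr rfl fun k _ => ?_
      have : 0 < t k + s := by linarith [ht k]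
      field_simp; ring
    have e' : ∀ {ι : Type _} [Fintype ι] (q t : ι → ℝ) (ht : ∀ k, 0 ≤ t k),
       ∑ k, q k * (t k / (1 + s) - t k / (t k + s)) =
        (∑ k, q k * t k) / (1 + s) - ∑ k, q k + s * ∑ k, q k / (t k + s) := by
      intro ι _ q t ht
      rw [Finset.sum_div, Finset.mul_sum, ← Finset.sum_sub_distrib, ← Finset.sum_add_distrib]
      refine Finset.sum_congr rfl fun k _ => ?_
      have : 0 < t k + s := by linarith [ht k]
      field_simp; ring
    rw [e q t ht, e' w x hx, m0, m1]
    have := mul_lt_mul_of_pos_left (hF s hs) hs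
    linarith
  have hp : 0 < ∫ s, (∑ k, q k * (t k / (1 + s) - t k / (t k + s)) -
      ∑ k, w k * (x k / (1 + s) - x k / (x k + s))) ∂μ := by
    rw [integral_pos_iff_support_of_nonneg_ae (hlt.mono fun s h => h.le) (i2.sub i1)]
    rw [pos_iff_ne_zero]
    intro h0
    apply hμ
    rw [← ae_eq_bot, ← Filter.eventually_false_iff_eq_bot]
    have h0' := measure_eq_zero_iff_ae_notMem.1 h0
    filter_upwards [h0', hlt] with s h1 h2
    exact h1 h2.ne'
  rw [integral_sub i2 i1] at hp
  linarith

lemma aux_eig {n : ℕ} {A : Matrix (Fin n) (Fin n) ℂ} (hA : A.IsHermitian) :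
    ∃ (U : Matrix (Fin n) (Fin n) ℂ) (l : Fin n → ℝ), Uᴴ * U = 1 ∧ U * Uᴴ = 1 ∧
      (∀ g : ℝ → ℝ, cfc g A = U * diagonal (fun i => (g (l i) : ℂ)) * Uᴴ) ∧
      A = U * diagonal (fun i => (l i : ℂ)) * Uᴴ ∧
      spectrum ℝ A = Set.range l ∧ (A.PosSemidef → ∀ i, 0 ≤ l i) := by
  refine ⟨hA.eigenvectorUnitary, hA.eigenvalues, ?_, ?_, ?_, ?_, ?_, ?_⟩
  · exact Unitary.coe_star_mul_self hA.eigenvectorUnitary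
  · exact Unitary.coe_mul_star_self hA.eigenvectorUnitary
  · intro g
    rw [hA.cfc_eq]; rfl
  · conv_lhs => rw [hA.spectral_theorem]
    rfl
  · exact hA.spectrum_real_eq_range_eigenvalues
  · intro h i; exact h.eigenvalues_nonneg i

/-- strictness at one parameter -/
lemma aux_strict {n : ℕ} (ρ σ M W : Matrix (Fin n) (Fin n) ℂ) (t : Fin n → ℝ) (s : ℝ)
    (hs : 0 < s) (ht : ∀ k, 0 ≤ t k) (hρh : ρᴴ = ρ) (hσh : σᴴ = σ)
    (hM : M * Mᴴ = σ) (hMt : M * diagonal (fun k => (t k : ℂ)) * Mᴴ = ρ)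
    (hW : ρ * W + (s : ℂ) • (W * σ) = σ) (hcomm : ρ * σ ≠ σ * ρ) :
    (trace (W * σ)).re < ∑ k, ((Mᴴ * M) k k).re / (t k + s) := by
  have hts : ∀ k, 0 < t k + s := fun k => by linarith [ht k]
  have htsc : ∀ k, (t k : ℂ) + s ≠ 0 := fun k => by exact_mod_cast (hts k).ne'
  set Θ : Matrix (Fin n) (Fin n) ℂ := diagonal (fun k => (t k : ℂ)) with hΘ
  set R : Matrix (Fin n) (Fin n) ℂ := diagonal (fun k => ((Real.sqrt (t k) : ℝ) : ℂ)) with hR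
  set D : Matrix (Fin n) (Fin n) ℂ := diagonal (fun k => ((t k : ℂ) + s)⁻¹) with hD
  have hΘD : Θ * D + (s : ℂ) • D = 1 := by
    rw [hΘ, hD, diagonal_mul_diagonal, ← diagonal_smul, diagonal_add, ← diagonal_one]
    congr 1; ext k; have := htsc k; simp; field_simp
  have hDΘ : D * Θ = Θ * D := by
    rw [hΘ, hD, diagonal_mul_diagonal, diagonal_mul_diagonal]; congr 1; ext k; ring
  have hRR : R * R = Θ := by
    rw [hR, hΘ, diagonal_mul_diagonal]; congr 1; ext k
    rw [← Complex.ofReal_mul, Real.mul_self_sqrt (ht k)]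
  have hRh : Rᴴ = R := by
    rw [hR, diagonal_conjTranspose]; congr 1; ext k; simp
  have hΘh : Θᴴ = Θ := by
    rw [hΘ, diagonal_conjTranspose]; congr 1; ext k; simp
  have hDh : Dᴴ = D := by
    rw [hD, diagonal_conjTranspose]; congr 1; ext k; simp
  set X := (M * D - Wᴴ * M) * R with hX
  set Y := M * D - W * M with hY
  have hXh : X * Rᴴ = (M * D - Wᴴ * M) * Θ := by
    rw [hX, hRh, Matrix.mul_assoc, hRR]
  -- the trace identity
  have t1 : trace (Xᴴ * X) = trace (Θ * D * Mᴴ * M * D) - trace (Θ * D * Mᴴ * Wᴴ * M)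
      - trace (Θ * Mᴴ * W * M * D) + trace (Θ * Mᴴ * W * Wᴴ * M) := by
    have : trace (Xᴴ * X) = trace (Θ * ((M * D - Wᴴ * M)ᴴ * (M * D - Wᴴ * M))) := by
      rw [hX, conjTranspose_mul, hRh, ← Matrix.mul_assoc, trace_mul_comm, ← hRR]
      simp only [Matrix.mul_assoc]
    rw [this]
    simp only [conjTranspose_sub, conjTranspose_mul, conjTranspose_conjTranspose, hDh,
      Matrix.mul_sub, Matrix.sub_mul, trace_sub, ← Matrix.mul_assoc]
    ring
  have t2 : trace (Yᴴ * Y) = trace (D * Mᴴ * M * D) - trace (D * Mᴴ * W * M)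
      - trace (Mᴴ * Wᴴ * M * D) + trace (Mᴴ * Wᴴ * W * M) := by
    simp only [hY, conjTranspose_sub, conjTranspose_mul, hDh,
      Matrix.mul_sub, Matrix.sub_mul, trace_sub, ← Matrix.mul_assoc]
    ring
  have e1 : trace (Θ * D * Mᴴ * M * D) + s * trace (D * Mᴴ * M * D) = trace (Mᴴ * M * D) := by
    rw [← smul_eq_mul (s : ℂ), ← trace_smul, ← trace_add]
    congr 1
    calc _ = (Θ * D + (s : ℂ) • D) * (Mᴴ * M * D) := by
            simp only [Matrix.add_mul, Matrix.smul_mul, Matrix.mul_assoc]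
      _ = _ := by rw [hΘD, Matrix.one_mul]
  have e2 : trace (Θ * D * Mᴴ * Wᴴ * M) + s * trace (Mᴴ * Wᴴ * M * D) = trace (Wᴴ * σ) := by
    rw [trace_mul_comm _ D, ← smul_eq_mul (s : ℂ), ← trace_smul, ← trace_add]
    calc _ = trace ((Θ * D + (s : ℂ) • D) * (Mᴴ * Wᴴ * M)) := by
            simp only [Matrix.add_mul, Matrix.smul_mul, Matrix.mul_assoc]
      _ = _ := by rw [hΘD, Matrix.one_mul, Matrix.mul_assoc, trace_mul_comm, Matrix.mul_assoc, hM]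
  have e3 : trace (Θ * Mᴴ * W * M * D) + s * trace (D * Mᴴ * W * M) = trace (W * σ) := by
    rw [trace_mul_comm _ D, ← smul_eq_mul (s : ℂ), ← trace_smul, ← trace_add]
    calc _ = trace ((Θ * D + (s : ℂ) • D) * (Mᴴ * W * M)) := by
            simp only [Matrix.add_mul, Matrix.smul_mul, ← hDΘ, Matrix.mul_assoc]
      _ = _ := by rw [hΘD, Matrix.one_mul, Matrix.mul_assoc, trace_mul_comm, Matrix.mul_assoc, hM]
  have e4 : trace (Θ * Mᴴ * W * Wᴴ * M) + s * trace (Mᴴ * Wᴴ * W * M) = trace (Wᴴ * σ) := by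
    have a1 : trace (Θ * Mᴴ * W * Wᴴ * M) = trace (Wᴴ * (ρ * W)) := by
      rw [trace_mul_comm _ M, ← hMt, trace_mul_comm Wᴴ]
      simp only [Matrix.mul_assoc]
    have a2 : trace (Mᴴ * Wᴴ * W * M) = trace (Wᴴ * (W * σ)) := by
      rw [trace_mul_comm _ M, ← Matrix.mul_assoc Wᴴ, trace_mul_comm _ σ, ← hM]
      simp only [Matrix.mul_assoc]
    rw [a1, a2, ← smul_eq_mul (s : ℂ), ← trace_smul, ← trace_add, ← Matrix.mul_smul, ← Matrix.mul_add, hW]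
  have tot : trace (Xᴴ * X) + s * trace (Yᴴ * Y) = trace (Mᴴ * M * D) - trace (W * σ) := by
    rw [t1, t2]
    linear_combination e1 - e2 - e3 + e4
  have hQ : (trace (Mᴴ * M * D)).re = ∑ k, ((Mᴴ * M) k k).re / (t k + s) := by
    rw [trace, Complex.re_sum]
    refine Finset.sum_congr rfl fun k _ => ?_
    rw [diag_apply, hD, mul_diagonal]
    rw [← Complex.ofReal_add, ← Complex.ofReal_inv, Complex.re_mul_ofReal, div_eq_mul_inv]
  have nonneg : ∀ Z : Matrix (Fin n) (Fin n) ℂ, 0 ≤ (trace (Zᴴ * Z)).re ∧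
      ((trace (Zᴴ * Z)).re = 0 → Z = 0) := by
    intro Z
    have h := (posSemidef_conjTranspose_mul_self Z).trace_nonneg
    rw [Complex.le_def] at h
    refine ⟨h.1, fun h0 => ?_⟩
    rw [← trace_conjTranspose_mul_self_eq_zero_iff]
    exact Complex.ext h0 h.2.symm
  have totr := congrArg Complex.re tot
  rw [Complex.add_re, Complex.re_ofReal_mul, Complex.sub_re, hQ] at totr
  by_contra hcon
  push Not at hcon
  apply hcomm
  have nX := nonneg X
  have nY := nonneg Y
  have hsY : 0 ≤ s * (trace (Yᴴ * Y)).re := mul_nonneg hs.le nY.1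
  have hX0 : X = 0 := nX.2 (by linarith [nX.1])
  have hY0 : Y = 0 := nY.2 (by
    have : s * (trace (Yᴴ * Y)).re = 0 := by linarith [nX.1]
    exact (mul_eq_zero.1 this).resolve_left hs.ne')
  have w1 : W * M = M * D := by rw [hY, sub_eq_zero] at hY0; exact hY0.symm
  have w2 : Wᴴ * M * Θ = M * D * Θ := by
    rw [hX0, Matrix.zero_mul, Matrix.sub_mul] at hXh
    exact (sub_eq_zero.1 hXh.symm).symm
  have w2' : Θ * Mᴴ * W = Θ * D * Mᴴ := by
    have := congrArg conjTranspose w2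
    simpa [conjTranspose_mul, hΘh, hDh, ← Matrix.mul_assoc] using this
  have Wρ : W * ρ = M * D * Θ * Mᴴ := by
    rw [← hMt, ← Matrix.mul_assoc, ← Matrix.mul_assoc, w1]
  have ρW : ρ * W = M * D * Θ * Mᴴ := by
    rw [← hMt, Matrix.mul_assoc, Matrix.mul_assoc, ← Matrix.mul_assoc Θ, w2', ← hDΘ]
    simp only [Matrix.mul_assoc]
  have Wc : W * ρ = ρ * W := Wρ.trans ρW.symm
  set C := ρ * σ - σ * ρ with hC
  have hCz : C - (s : ℂ) • (W * C) = 0 := by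
    have h1 : σ - (s : ℂ) • (W * σ) = ρ * W := by rw [sub_eq_iff_eq_add]; exact hW.symm
    have : C - (s : ℂ) • (W * C) = ρ * (σ - (s : ℂ) • (W * σ)) - (σ - (s : ℂ) • (W * σ)) * ρ := by
      rw [hC, Matrix.mul_sub W, ← Matrix.mul_assoc W, Wc]
      simp only [Matrix.mul_sub, Matrix.sub_mul, Matrix.mul_smul, Matrix.smul_mul, smul_sub,
        Matrix.mul_assoc]
      abel
    rw [this, h1, Matrix.mul_assoc, Wc, sub_self]
  have hz : Θ * Θ * D * (Mᴴ * C) = 0 := by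
    have h2 : Θ * Mᴴ * (C - (s : ℂ) • (W * C)) = 0 := by rw [hCz, Matrix.mul_zero]
    rw [Matrix.mul_sub, Matrix.mul_smul, ← Matrix.mul_assoc _ W, w2'] at h2
    have h3 : Θ = Θ * Θ * D + (s : ℂ) • (Θ * D) := by
      calc Θ = Θ * (Θ * D + (s : ℂ) • D) := by rw [hΘD, Matrix.mul_one]
        _ = _ := by rw [Matrix.mul_add, Matrix.mul_smul, Matrix.mul_assoc]
    have h4 : Θ * Mᴴ * C = (Θ * Θ * D + (s : ℂ) • (Θ * D)) * Mᴴ * C := by rw [← h3]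
    rw [← h2, h4]
    simp only [Matrix.add_mul, Matrix.smul_mul, Matrix.mul_assoc]
    abel
  have hz' : Θ * (Mᴴ * C) = 0 := by
    ext i j
    have := congrFun (congrFun hz i) j
    rw [hΘ, hD, diagonal_mul_diagonal, diagonal_mul_diagonal, diagonal_mul] at this
    rw [hΘ, diagonal_mul]
    simp only [Matrix.zero_apply, mul_eq_zero, inv_eq_zero, htsc i, or_false, or_self] at this ⊢
    exact this
  have hρC : ρ * C = 0 := by
    rw [← hMt, Matrix.mul_assoc, Matrix.mul_assoc, hz', Matrix.mul_zero]
  have hCh : Cᴴ = -C := by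
    rw [hC, conjTranspose_sub, conjTranspose_mul, conjTranspose_mul, hρh, hσh]; abel
  have hCρ : C * ρ = 0 := by
    have := congrArg conjTranspose hρC
    rw [conjTranspose_mul, hCh, hρh, conjTranspose_zero, Matrix.neg_mul, neg_eq_zero] at this
    exact this
  have hC0 : C = 0 := by
    rw [← trace_conjTranspose_mul_self_eq_zero_iff, hCh]
    nth_rewrite 2 [hC]
    rw [Matrix.neg_mul, Matrix.mul_sub, ← Matrix.mul_assoc, hCρ, Matrix.zero_mul, zero_sub, neg_neg,
      ← Matrix.mul_assoc, trace_mul_comm, ← Matrix.mul_assoc, hρC, Matrix.zero_mul, trace_zero]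
  exact sub_eq_zero.1 hC0

lemma aux_trace {n : ℕ} (U V : Matrix (Fin n) (Fin n) ℂ) (g h : Fin n → ℝ) :
    (trace ((U * diagonal (fun i => (g i : ℂ)) * Uᴴ) *
      (V * diagonal (fun i => (h i : ℂ)) * Vᴴ))).re =
    ∑ p : Fin n × Fin n, g p.1 * h p.2 * Complex.normSq ((Uᴴ * V) p.1 p.2) := by
  have e : trace ((U * diagonal (fun i => (g i : ℂ)) * Uᴴ) *
      (V * diagonal (fun i => (h i : ℂ)) * Vᴴ)) =
      trace ((diagonal (fun i => (g i : ℂ)) * (Uᴴ * V) * diagonal (fun i => (h i : ℂ))) *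
        (Uᴴ * V)ᴴ) := by
    rw [Matrix.mul_assoc U, Matrix.mul_assoc U, trace_mul_comm, conjTranspose_mul,
      conjTranspose_conjTranspose]
    simp only [Matrix.mul_assoc]
  rw [e, trace, Complex.re_sum, Fintype.sum_prod_type]
  refine Finset.sum_congr rfl fun i _ => ?_
  rw [diag_apply, mul_apply, Complex.re_sum]
  refine Finset.sum_congr rfl fun j _ => ?_
  rw [mul_diagonal, diagonal_mul, conjTranspose_apply, Complex.star_def]
  generalize (Uᴴ * V) i j = z
  rw [show (g i : ℂ) * z * h j * (starRingEnd ℂ) z = ((g i * h j : ℝ) : ℂ) * (z * (starRingEnd ℂ) z) by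
    push_cast; ring, Complex.mul_conj, ← Complex.ofReal_mul, Complex.ofReal_re]

lemma aux_W {n : ℕ} (U V ρ σ : Matrix (Fin n) (Fin n) ℂ) (l m : Fin n → ℝ) (s : ℝ) (hs : 0 < s)
    (hl : ∀ i, 0 ≤ l i) (hm : ∀ i, 0 ≤ m i)
    (hU : Uᴴ * U = 1) (hU' : U * Uᴴ = 1) (hV : Vᴴ * V = 1)
    (hρ : ρ = U * diagonal (fun i => (l i : ℂ)) * Uᴴ)
    (hσ : σ = V * diagonal (fun i => (m i : ℂ)) * Vᴴ) :
    ∃ W : Matrix (Fin n) (Fin n) ℂ, ρ * W + (s : ℂ) • (W * σ) = σ ∧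
      (trace (W * σ)).re = ∑ p : Fin n × Fin n,
        (m p.2 * Complex.normSq ((Uᴴ * V) p.1 p.2)) / (l p.1 / m p.2 + s) := by
  set K := Uᴴ * V with hK
  set Z : Matrix (Fin n) (Fin n) ℂ :=
    of fun i j => K i j * ((m j / (l i + s * m j) : ℝ) : ℂ) with hZ
  set A : Matrix (Fin n) (Fin n) ℂ := diagonal (fun i => (l i : ℂ)) with hA
  set B : Matrix (Fin n) (Fin n) ℂ := diagonal (fun i => (m i : ℂ)) with hB
  have eZ : A * Z + (s : ℂ) • (Z * B) = K * B := by
    ext i j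
    rw [Matrix.add_apply, Matrix.smul_apply, hA, hB, diagonal_mul, mul_diagonal, mul_diagonal, hZ, of_apply]
    have : (l i + s * m j) * (m j / (l i + s * m j)) = m j := by
      by_cases h : l i + s * m j = 0
      · have h1 : 0 ≤ s * m j := mul_nonneg hs.le (hm j)
        have h2 : s * m j = 0 := by linarith [hl i]
        have h3 : m j = 0 := (mul_eq_zero.1 h2).resolve_left hs.ne'
        rw [h, h3]; simp
      · field_simp
    have h' := congrArg (fun r : ℝ => (r : ℂ)) this
    simp only [Complex.ofReal_mul, Complex.ofReal_add] at h'
    rw [smul_eq_mul]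
    linear_combination (K i j) * h'
  have w1 : (U * Z * Vᴴ) * σ = U * (Z * B) * Vᴴ := by
    rw [hσ]
    calc _ = U * Z * (Vᴴ * V) * B * Vᴴ := by simp only [Matrix.mul_assoc]
      _ = _ := by rw [hV, Matrix.mul_one]; simp only [Matrix.mul_assoc]
  have w2 : ρ * (U * Z * Vᴴ) = U * (A * Z) * Vᴴ := by
    rw [hρ]
    calc _ = U * A * (Uᴴ * U) * Z * Vᴴ := by simp only [Matrix.mul_assoc]
      _ = _ := by rw [hU, Matrix.mul_one]; simp only [Matrix.mul_assoc]
  refine ⟨U * Z * Vᴴ, ?_, ?_⟩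
  · rw [w1, w2, ← Matrix.smul_mul, ← Matrix.mul_smul, ← Matrix.add_mul, ← Matrix.mul_add, eZ, hσ, hK,
      ← Matrix.mul_assoc, ← Matrix.mul_assoc, hU', Matrix.one_mul]
  · have e : trace (U * (Z * B) * Vᴴ) = trace (Z * B * Kᴴ) := by
      rw [Matrix.mul_assoc U, trace_mul_comm, hK, conjTranspose_mul, conjTranspose_conjTranspose,
        Matrix.mul_assoc (Z * B)]
    rw [w1, e, trace, Complex.re_sum, Fintype.sum_prod_type]
    refine Finset.sum_congr rfl fun i _ => ?_
    rw [diag_apply, mul_apply, Complex.re_sum]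
    refine Finset.sum_congr rfl fun j _ => ?_
    rw [hB, mul_diagonal, conjTranspose_apply, Complex.star_def, hZ, of_apply]
    simp only
    generalize K i j = z
    rw [show z * ((m j / (l i + s * m j) : ℝ) : ℂ) * (m j : ℂ) * (starRingEnd ℂ) z =
      ((m j / (l i + s * m j) * m j : ℝ) : ℂ) * (z * (starRingEnd ℂ) z) by
      push_cast; ring, Complex.mul_conj, ← Complex.ofReal_mul, Complex.ofReal_re]
    by_cases h : m j = 0
    · simp [h]
    · have h0 : 0 < m j := lt_of_le_of_ne (hm j) (Ne.symm h)
      have h1 : 0 < l i + s * m j := by have := mul_pos hs h0; linarith [hl i]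
      have h2 : l i / m j + s = (l i + s * m j) / m j := by field_simp
      rw [h2]; field_simp

lemma aux_Sf {n : ℕ} (f : ℝ → ℝ) (ρ σ U V : Matrix (Fin n) (Fin n) ℂ) (l m : Fin n → ℝ)
    (cρ : ∀ g : ℝ → ℝ, cfc g ρ = U * diagonal (fun i => (g (l i) : ℂ)) * Uᴴ)
    (cσ : ∀ g : ℝ → ℝ, cfc g σ = V * diagonal (fun i => (g (m i) : ℂ)) * Vᴴ)
    (sρ : spectrum ℝ ρ = Set.range l) (sσ : spectrum ℝ σ = Set.range m) :
    Sf f ρ σ = ∑ p : Fin n × Fin n,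
      (m p.2 * Complex.normSq ((Uᴴ * V) p.1 p.2)) * f (l p.1 / m p.2) := by
  classical
  have h1 : spectrum ℝ ρ = ↑(Finset.univ.image l) := by rw [sρ]; simp
  have h2 : spectrum ℝ σ = ↑(Finset.univ.image m) := by rw [sσ]; simp
  unfold Sf
  rw [h1, h2]
  simp_rw [finsum_mem_coe_finset]
  have e : ∀ a b : ℝ, (if b = 0 then 0 else
      b * f (a / b) * (Matrix.trace (specProj ρ a * specProj σ b)).re) =
      ∑ p : Fin n × Fin n, if l p.1 = a then (if m p.2 = b then
        (m p.2 * Complex.normSq ((Uᴴ * V) p.1 p.2)) * f (l p.1 / m p.2) else 0) else 0 := by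
    intro a b
    unfold specProj
    rw [cρ, cσ, aux_trace]
    have : (if b = 0 then 0 else b * f (a / b) * ∑ p : Fin n × Fin n,
      (if l p.1 = a then (1:ℝ) else 0) * (if m p.2 = b then (1:ℝ) else 0) *
        Complex.normSq ((Uᴴ * V) p.1 p.2)) = b * f (a / b) * ∑ p : Fin n × Fin n,
      (if l p.1 = a then (1:ℝ) else 0) * (if m p.2 = b then (1:ℝ) else 0) *
        Complex.normSq ((Uᴴ * V) p.1 p.2) := by
      split_ifs with hb
      · rw [hb]; simp
      · rfl
    rw [this, Finset.mul_sum]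
    refine Finset.sum_congr rfl fun p _ => ?_
    split_ifs with h3 h4
    · rw [h3, h4]; ring
    · ring
    · ring
    · ring
  simp_rw [e]
  rw [Finset.sum_congr rfl fun a _ => Finset.sum_comm, Finset.sum_comm]
  refine Finset.sum_congr rfl fun p _ => ?_
  rw [Finset.sum_comm]
  simp

lemma aux_cfc_mul_s1 {n : ℕ} (σ V : Matrix (Fin n) (Fin n) ℂ) (m : Fin n → ℝ) (hV : Vᴴ * V = 1)
    (cσ : ∀ g : ℝ → ℝ, cfc g σ = V * diagonal (fun i => (g (m i) : ℂ)) * Vᴴ) (g h : ℝ → ℝ) :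
    cfc g σ * cfc h σ = cfc (fun x => g x * h x) σ := by
  rw [cσ, cσ, cσ]
  calc _ = V * diagonal (fun i => (g (m i) : ℂ)) * (Vᴴ * V) * diagonal (fun i => (h (m i) : ℂ)) * Vᴴ := by
        simp only [Matrix.mul_assoc]
    _ = _ := by
      rw [hV, Matrix.mul_one, Matrix.mul_assoc V, diagonal_mul_diagonal]
      simp

lemma aux_trace1 {n : ℕ} (M : Matrix (Fin n) (Fin n) ℂ) (g : Fin n → ℝ) :
    (trace (M * diagonal (fun i => (g i : ℂ)) * Mᴴ)).re = ∑ k, ((Mᴴ * M) k k).re * g k := by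
  rw [trace_mul_comm, ← Matrix.mul_assoc, trace, Complex.re_sum]
  refine Finset.sum_congr rfl fun k _ => ?_
  rw [diag_apply, mul_diagonal, Complex.re_mul_ofReal]

lemma aux_supp {n : ℕ} (ρ σ X : Matrix (Fin n) (Fin n) ℂ)
    (hsupp : ∀ v : Fin n → ℂ, σ *ᵥ v = 0 → ρ *ᵥ v = 0) (h : σ * X = 0) : ρ * X = 0 := by
  ext i j
  have h1 : σ *ᵥ (fun k => X k j) = 0 := by
    ext i; exact congrFun (congrFun h i) j
  exact congrFun (hsupp _ h1) i

/-- if `ρ, σ` are positive semidefinite with `supp ρ ⊆ supp σ` and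
`ρσ ≠ σρ`, and `f` is continuous on `[0,∞)` with the integral representation
`f(x) = f(0) + a x + b x² + ∫ (x/(1+s) − x/(x+s)) dμ(s)` whose representing measure `μ`
has support of cardinality at least that of
`spec(σ^{-1/2} ρ σ^{-1/2}) ∪ {a·b' : a ∈ spec ρ, b' ∈ spec σ⁻¹}`, then
`S_f(ρ‖σ) < Ŝ_f(ρ‖σ)`. -/
theorem stmt1 {n : ℕ} (ρ σ : Matrix (Fin n) (Fin n) ℂ)
    (hρ : ρ.PosSemidef) (hσ : σ.PosSemidef)
    (hsupp : ∀ v : Fin n → ℂ, σ *ᵥ v = 0 → ρ *ᵥ v = 0)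
    (hcomm : ρ * σ ≠ σ * ρ)
    (f : ℝ → ℝ) (hcont : ContinuousOn f (Set.Ici (0 : ℝ)))
    (a b : ℝ) (hb : 0 ≤ b) (μ : Measure ℝ)
    (hμ0 : μ (Set.Iic (0 : ℝ)) = 0)
    (hμfin : ∫⁻ s, ENNReal.ofReal ((1 + s)⁻¹ ^ 2) ∂μ < ⊤)
    (hrep : ∀ x : ℝ, 0 < x →
      f x = f 0 + a * x + b * x ^ 2 + ∫ s, (x / (1 + s) - x / (x + s)) ∂μ)
    (hμsupp : ∃ S : Finset ℝ, (↑S : Set ℝ) ⊆ measSupport μ ∧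
      (spectrum ℝ (mpow σ (-(1/2)) * ρ * mpow σ (-(1/2))) ∪
        Set.image2 (fun x y => x * y) (spectrum ℝ ρ)
          (spectrum ℝ (mpow σ (-1)))).ncard ≤ S.card) :
    Sf f ρ σ < maxSf f ρ σ := by
  obtain ⟨U, l, hU, hU', cρ, eρ, sρ, pρ⟩ := aux_eig hρ.1
  obtain ⟨V, m, hV, hV', cσ, eσ, sσ, pσ⟩ := aux_eig hσ.1
  have hl := pρ hρ
  have hm := pσ hσ
  have cg : ∀ g h : ℝ → ℝ, (∀ j, g (m j) = h (m j)) → cfc g σ = cfc h σ := by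
    intro g h hgh
    rw [cσ, cσ]; simp only [hgh]
  have σid : cfc (fun x : ℝ => x) σ = σ := by rw [cσ, ← eσ]
  have ρid : cfc (fun x : ℝ => x) ρ = ρ := by rw [cρ, ← eρ]
  set H := mpow σ (1 / 2) with hH
  set G := mpow σ (-(1 / 2)) with hG
  set P := cfc (fun x : ℝ => if x = 0 then (0 : ℝ) else 1) σ with hP
  have Hh : Hᴴ = H := (cfc_predicate _ σ : IsSelfAdjoint _)
  have Gh : Gᴴ = G := (cfc_predicate _ σ : IsSelfAdjoint _)
  have Ph : Pᴴ = P := (cfc_predicate _ σ : IsSelfAdjoint _)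
  have HH : H * H = σ := by
    rw [hH, mpow, aux_cfc_mul_s1 σ V m hV cσ]
    conv_rhs => rw [← σid]
    apply cg
    intro j
    by_cases h : m j = 0
    · simp [h]
    · have h0 : 0 < m j := lt_of_le_of_ne (hm j) (Ne.symm h)
      simp only [h, if_false]
      rw [← Real.rpow_add h0]; norm_num
  have HG : H * G = P := by
    rw [hH, hG, hP, mpow, mpow, aux_cfc_mul_s1 σ V m hV cσ]
    apply cg
    intro j
    by_cases h : m j = 0
    · simp [h]
    · have h0 : 0 < m j := lt_of_le_of_ne (hm j) (Ne.symm h)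
      simp only [h, if_false]
      rw [← Real.rpow_add h0]; norm_num
  have GH : G * H = P := by
    have := congrArg conjTranspose HG
    rwa [conjTranspose_mul, Hh, Gh, Ph] at this
  have GG : G * G = cfc (fun x : ℝ => if x = 0 then (0 : ℝ) else x⁻¹) σ := by
    rw [hG, mpow, aux_cfc_mul_s1 σ V m hV cσ]
    apply cg
    intro j
    by_cases h : m j = 0
    · simp [h]
    · have h0 : 0 < m j := lt_of_le_of_ne (hm j) (Ne.symm h)
      simp only [h, if_false]
      rw [← Real.rpow_add h0, ← Real.rpow_neg_one]; norm_num
  have σP : σ * P = σ := by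
    conv_lhs => rw [← σid, hP]
    rw [aux_cfc_mul_s1 σ V m hV cσ]
    conv_rhs => rw [← σid]
    apply cg
    intro j
    by_cases h : m j = 0
    · simp [h]
    · simp [h]
  have ρP : ρ * P = ρ := by
    have h1 : ρ * (1 - P) = 0 := aux_supp ρ σ _ hsupp (by rw [Matrix.mul_sub, σP]; simp)
    rw [Matrix.mul_sub, Matrix.mul_one, sub_eq_zero] at h1
    exact h1.symm
  have ρh : ρᴴ = ρ := hρ.1
  have Pρ : P * ρ = ρ := by
    have := congrArg conjTranspose ρP
    rwa [conjTranspose_mul, ρh, Ph] at this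
  have hT : (G * ρ * G).PosSemidef := by
    have := hρ.conjTranspose_mul_mul_same G
    rwa [Gh] at this
  obtain ⟨E, t, hE, hE', cT, eT, sT, pT⟩ := aux_eig hT.1
  have ht := pT hT
  have Mh : (H * E)ᴴ = Eᴴ * H := by rw [conjTranspose_mul, Hh]
  have hM : (H * E) * (H * E)ᴴ = σ := by
    rw [Mh, Matrix.mul_assoc, ← Matrix.mul_assoc E, hE', Matrix.one_mul, HH]
  have hMg : ∀ g : ℝ → ℝ, (H * E) * diagonal (fun k => (g (t k) : ℂ)) * (H * E)ᴴ =
      H * cfc g (G * ρ * G) * H := by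
    intro g
    rw [Mh, cT]; simp only [Matrix.mul_assoc]
  have Tid : cfc (fun x : ℝ => x) (G * ρ * G) = G * ρ * G := by rw [cT, ← eT]
  have hMt : (H * E) * diagonal (fun k => (t k : ℂ)) * (H * E)ᴴ = ρ := by
    rw [hMg (fun x => x), Tid]
    calc _ = (H * G) * ρ * (G * H) := by simp only [Matrix.mul_assoc]
      _ = ρ := by rw [HG, GH, Pρ, ρP]
  have hmax : maxSf f ρ σ = ∑ k, (((H * E)ᴴ * (H * E)) k k).re * f (t k) := by
    rw [← aux_trace1 (H * E) (fun k => f (t k)), hMg]; rfl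
  rw [hmax, aux_Sf f ρ σ U V l m cρ cσ sρ sσ]
  have m0 : ∑ p : Fin n × Fin n, m p.2 * Complex.normSq ((Uᴴ * V) p.1 p.2) =
      ∑ k, (((H * E)ᴴ * (H * E)) k k).re := by
    have h1 := aux_trace U V (fun _ => 1) m
    have h2 := aux_trace1 (H * E) (fun _ => 1)
    rw [← eσ] at h1
    simp only [Complex.ofReal_one, diagonal_one, Matrix.mul_one, hU', Matrix.one_mul, one_mul,
      mul_one, hM] at h1 h2
    rw [← h1, ← h2]
  have m1 : ∑ p : Fin n × Fin n, m p.2 * Complex.normSq ((Uᴴ * V) p.1 p.2) * (l p.1 / m p.2) =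
      ∑ k, (((H * E)ᴴ * (H * E)) k k).re * t k := by
    rw [← aux_trace1, hMt]
    have h1 := aux_trace U V l (fun j => if m j = 0 then 0 else 1)
    rw [← eρ, ← cσ (fun x : ℝ => if x = 0 then (0 : ℝ) else 1), ← hP, ρP] at h1
    rw [h1]
    refine Finset.sum_congr rfl fun p _ => ?_
    by_cases h : m p.2 = 0
    · simp [h]
    · simp only [h, if_false]; field_simp
  have m2 : ∑ p : Fin n × Fin n, m p.2 * Complex.normSq ((Uᴴ * V) p.1 p.2) * (l p.1 / m p.2) ^ 2 =
      ∑ k, (((H * E)ᴴ * (H * E)) k k).re * t k ^ 2 := by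
    have h2 := aux_trace1 (H * E) (fun k => t k ^ 2)
    rw [hMg (fun x => x ^ 2)] at h2
    have h3 : cfc (fun x : ℝ => x ^ 2) (G * ρ * G) = (G * ρ * G) * (G * ρ * G) := by
      have := aux_cfc_mul_s1 _ E t hE cT (fun x => x) (fun x => x)
      rw [Tid] at this
      rw [this]; simp only [pow_two]
    have h4 : H * ((G * ρ * G) * (G * ρ * G)) * H = ρ * (G * G) * ρ := by
      calc _ = ((H * G) * ρ) * (G * G) * (ρ * (G * H)) := by simp only [Matrix.mul_assoc]
        _ = _ := by rw [HG, GH, Pρ, ρP]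
    have h1 := aux_trace U V (fun i => l i ^ 2) (fun j => if m j = 0 then 0 else (m j)⁻¹)
    have h5 : cfc (fun x : ℝ => x ^ 2) ρ = ρ * ρ := by
      have := aux_cfc_mul_s1 _ U l hU cρ (fun x => x) (fun x => x)
      rw [ρid] at this
      rw [this]; simp only [pow_two]
    rw [← cρ (fun x : ℝ => x ^ 2), ← cσ (fun x : ℝ => if x = 0 then (0 : ℝ) else x⁻¹), ← GG, h5] at h1
    rw [← h2, h3, h4, trace_mul_comm, ← Matrix.mul_assoc, h1]
    refine Finset.sum_congr rfl fun p _ => ?_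
    by_cases h : m p.2 = 0
    · simp [h]
    · simp only [h, if_false]; field_simp
  have hμ : μ ≠ 0 := by
    rintro rfl
    obtain ⟨S, hS, hcard⟩ := hμsupp
    have hn : Nonempty (Fin n) := by
      by_contra hne
      rw [not_nonempty_iff] at hne
      exact hcomm (Subsingleton.elim _ _)
    have hpos : 0 < S.card := by
      refine lt_of_lt_of_le ?_ hcard
      rw [Set.ncard_pos ((Matrix.finite_real_spectrum).union
        (Set.Finite.image2 _ Matrix.finite_real_spectrum Matrix.finite_real_spectrum))]
      refine Set.Nonempty.inl ?_
      rw [sT]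
      exact Set.range_nonempty _
    obtain ⟨y, hy⟩ := Finset.card_pos.1 hpos
    have := hS hy Set.univ Filter.univ_mem
    simp at this
  refine aux_meas (fun k => (((H * E)ᴴ * (H * E)) k k).re) t
    (fun p : Fin n × Fin n => m p.2 * Complex.normSq ((Uᴴ * V) p.1 p.2))
    (fun p => l p.1 / m p.2) ht (fun p => div_nonneg (hl _) (hm _)) m0 m1 m2 ?_
    f a b μ hμ0 hμfin hrep hμ
  intro s hs
  obtain ⟨W, hW, hWt⟩ := aux_W U V ρ σ l m s hs hl hm hU hU' hV eρ eσ
  rw [← hWt]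
  exact aux_strict ρ σ (H * E) W t s hs ht ρh hσ.1 hM hMt hW hcomm
end

section
/- Let ρ, σ ∈ M_n(ℂ) be positive semidefinite with supp ρ ⊆ supp σ, and let Φ : M_n(ℂ) → M_m(ℂ) be a positive trace-preserving linear map. Then the following are equivalent, where σ^{−1} and Φ(σ)^{−1} denote Moore–Penrose inverses: (a) Ŝ_f(Φ(ρ)‖Φ(σ)) = Ŝ_f(ρ‖σ) for some continuous operator convex function f : [0,∞) → ℝ that is not of the form x ↦ αx + β; (b) Ŝ_f(Φ(ρ)‖Φ(σ)) = Ŝ_f(ρ‖σ) for every continuous operator convex function f : [0,∞) → ℝ; (c) Tr( Φ(ρ) Φ(σ)^{−1} Φ(ρ) ) = Tr( ρ σ^{−1} ρ ); (d) Φ( ρ σ^{−1} ρ ) = Φ(ρ) Φ(σ)^{−1} Φ(ρ). -/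
open Matrix
open scoped ComplexOrder

lemma cfc_poly {N : Type*} [Fintype N] [DecidableEq N] (f : ℝ → ℝ) (A : Matrix N N ℂ) (hA : A.IsHermitian) 
  (p : Polynomial ℝ) (hp : ∀ x ∈ spectrum ℝ A, p.eval x = f x) : cfc f A = Polynomial.aeval A p := by
  have h : IsSelfAdjoint A := hA
  rw [← cfc_polynomial p A h]
  exact cfc_congr fun x hx => (hp x hx).symm

lemma aeval_intertwine {N M : Type*} [Fintype N] [DecidableEq N] [Fintype M] [DecidableEq M]
    (A : Matrix N N ℂ) (B : Matrix M M ℂ) (V : Matrix N M ℂ) (h : A * V = V * B) (p : Polynomial ℝ) :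
    Polynomial.aeval A p * V = V * Polynomial.aeval B p := by
  induction p using Polynomial.induction_on' with
  | add p q hp hq => rw [map_add, map_add, Matrix.add_mul, Matrix.mul_add, hp, hq]
  | monomial k a =>
    have : A ^ k * V = V * B ^ k := by
      induction k with
      | zero => simp
      | succ k ih => rw [pow_succ, Matrix.mul_assoc, h, ← Matrix.mul_assoc, ih, Matrix.mul_assoc, pow_succ]
    simp [Polynomial.aeval_monomial, Algebra.algebraMap_eq_smul_one, this]

lemma cfc_intertwine {N M : Type*} [Fintype N] [DecidableEq N] [Fintype M] [DecidableEq M] (f : ℝ → ℝ)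
    (A : Matrix N N ℂ) (B : Matrix M M ℂ) (V : Matrix N M ℂ) (hA : A.IsHermitian) (hB : B.IsHermitian)
    (h : A * V = V * B) : cfc f A * V = V * cfc f B := by
  classical
  have hfin : (spectrum ℝ A ∪ spectrum ℝ B).Finite := A.finite_real_spectrum.union B.finite_real_spectrum
  have key : ∀ x ∈ hfin.toFinset, (Lagrange.interpolate hfin.toFinset id f).eval x = f x := by
    intro x hx
    exact Lagrange.eval_interpolate_at_node (v := id) f (Function.injective_id.injOn) hx
  rw [cfc_poly f A hA (Lagrange.interpolate hfin.toFinset id f) (fun x hx => key x (by simp [hx])),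
    cfc_poly f B hB (Lagrange.interpolate hfin.toFinset id f) (fun x hx => key x (by simp [hx]))]
  exact aeval_intertwine A B V h _

lemma cfc_eig {N M : Type*} [Fintype N] [DecidableEq N] [Fintype M] [DecidableEq M] (f : ℝ → ℝ)
    (A : Matrix N N ℂ) (V : Matrix N M ℂ) (hA : A.IsHermitian) (x : ℝ)
    (h : A * V = x • V) : cfc f A * V = f x • V := by
  have hB : (algebraMap ℝ (Matrix M M ℂ) x).IsHermitian := by
    rw [Algebra.algebraMap_eq_smul_one]
    simp [Matrix.IsHermitian, conjTranspose_smul]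
  rw [cfc_intertwine f A (algebraMap ℝ _ x) V hA hB, cfc_algebraMap]
  · simp [Algebra.algebraMap_eq_smul_one]
  · simp [Algebra.algebraMap_eq_smul_one, h]

lemma spec_vec {N : Type*} [Fintype N] [DecidableEq N] (A : Matrix N N ℂ) (hA : A.IsHermitian) :
    ∃ (x : N → ℝ) (v : N → N → ℂ), (∀ i, A *ᵥ v i = x i • v i) ∧ (∀ i, star (v i) ⬝ᵥ v i = 1) ∧
      ∑ i, vecMulVec (v i) (star (v i)) = 1 := by
  refine ⟨hA.eigenvalues, fun i => (hA.eigenvectorBasis i).ofLp, hA.mulVec_eigenvectorBasis, ?_, ?_⟩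
  · intro i
    have := hA.eigenvectorBasis.orthonormal.1 i
    have h2 := inner_self_eq_norm_sq_to_K (𝕜 := ℂ) (hA.eigenvectorBasis i)
    rw [this, EuclideanSpace.inner_eq_star_dotProduct, dotProduct_comm] at h2
    simpa using h2
  · have := (hA.eigenvectorUnitary).2
    have h2 := (Matrix.mem_unitaryGroup_iff).1 this
    rw [← h2]
    ext a b
    simp [Matrix.sum_apply, vecMulVec_apply, mul_apply, star_apply]

lemma mul_vecMulVec_eig {N : Type*} [Fintype N] [DecidableEq N] (A : Matrix N N ℂ) (v w : N → ℂ) (x : ℝ)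
   (h : A *ᵥ v = x • v) : A * vecMulVec v w = x • vecMulVec v w := by
  rw [mul_vecMulVec, h]; ext; simp [vecMulVec_apply, mul_assoc]

lemma spec_mat {N : Type*} [Fintype N] [DecidableEq N] (A : Matrix N N ℂ) (hA : A.PosSemidef) :
    ∃ (x : N → ℝ) (p : N → Matrix N N ℂ), (∀ i, 0 ≤ x i) ∧ (∀ i, (p i).PosSemidef) ∧
      (∀ i, A * p i = x i • p i) ∧ ∑ i, p i = 1 := by
  obtain ⟨x, v, h1, h2, h3⟩ := spec_vec A hA.1
  refine ⟨x, fun i => vecMulVec (v i) (star (v i)), ?_, fun i => posSemidef_vecMulVec_self_star _,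
    fun i => mul_vecMulVec_eig A _ _ _ (h1 i), h3⟩
  intro i
  have := hA.dotProduct_mulVec_nonneg (v i)
  rw [h1, dotProduct_smul, h2] at this
  simpa using this

lemma cfc_sum_eig {N ι : Type*} [Fintype N] [DecidableEq N] [Fintype ι] (f : ℝ → ℝ)
    (A : Matrix N N ℂ) (hA : A.IsHermitian) (x : ι → ℝ) (p : ι → Matrix N N ℂ)
    (h : ∀ i, A * p i = x i • p i) (h1 : ∑ i, p i = 1) : cfc f A = ∑ i, f (x i) • p i := by
  rw [← mul_one (cfc f A), ← h1, Finset.mul_sum]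
  exact Finset.sum_congr rfl fun i _ => cfc_eig f A _ hA _ (h i)

lemma cfc_herm {N : Type*} [Fintype N] [DecidableEq N] (f : ℝ → ℝ) (A : Matrix N N ℂ) : (cfc f A).IsHermitian :=
  cfc_predicate (R := ℝ) f A

lemma real_smul_psd {N : Type*} [Fintype N] {A : Matrix N N ℂ} (hA : A.PosSemidef) {t : ℝ} (ht : 0 ≤ t) :
    (t • A).PosSemidef := by
  exact hA.smul ht

lemma psd_factor {N : Type*} [Fintype N] [DecidableEq N] (A : Matrix N N ℂ) (hA : A.PosSemidef) :
    ∃ K : Matrix N N ℂ, A = Kᴴ * K := by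
  obtain ⟨x, v, h1, h2, h3⟩ := spec_vec A hA.1
  refine ⟨cfc Real.sqrt A, ?_⟩
  rw [(cfc_herm Real.sqrt A).eq]
  have h : IsSelfAdjoint A := hA.1
  conv_lhs => rw [← cfc_id ℝ A]
  rw [← cfc_mul _ _ A]
  refine cfc_congr fun x hx => ?_
  have : 0 ≤ x := by
    rw [hA.1.spectrum_real_eq_range_eigenvalues] at hx
    obtain ⟨i, rfl⟩ := hx
    exact hA.eigenvalues_nonneg i
  simp [this]

lemma cfc_diag {N : Type*} [Fintype N] [DecidableEq N] (f : ℝ → ℝ) (x : N → ℝ) :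
    cfc f (diagonal (fun i => (x i : ℂ))) = diagonal (fun i => (f (x i) : ℂ)) := by
  have hh : (diagonal (fun i => (x i : ℂ))).IsHermitian := by
    rw [isHermitian_diagonal_iff]; intro i; simp [isSelfAdjoint_iff]
  rw [cfc_sum_eig f _ hh x (fun i => Matrix.single i i 1)]
  · ext a b
    simp only [Matrix.sum_apply, Matrix.smul_apply, Matrix.single_apply, diagonal_apply]
    by_cases h : a = b
    · subst h; simp
    · simp only [h, if_false]
      refine Finset.sum_eq_zero fun i _ => ?_
      have : ¬ (i = a ∧ i = b) := by rintro ⟨rfl, rfl⟩; exact h rfl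
      simp [this]
  · intro i
    ext a b
    simp [diagonal_mul, Matrix.single_apply]
    by_cases h : i = a
    · simp [h]
    · simp [h]
  · ext a b
    simp only [Matrix.sum_apply, Matrix.single_apply, one_apply]
    by_cases h : a = b
    · subst h; simp
    · simp only [h, if_false]
      refine Finset.sum_eq_zero fun i _ => ?_
      have : ¬ (i = a ∧ i = b) := by rintro ⟨rfl, rfl⟩; exact h rfl
      simp [this]

lemma jensen_isometry {k m : ℕ} (f : ℝ → ℝ) (hf : OperatorConvexOn f) (D : Matrix (Fin k) (Fin k) ℂ)
    (hD : D.PosDef) (V : Matrix (Fin k) (Fin m) ℂ) (hV : Vᴴ * V = 1) :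
    (Vᴴ * cfc f D * V - cfc f (Vᴴ * D * V)).PosSemidef := by
  set U : Matrix (Fin k) (Fin k) ℂ := (2:ℝ) • (V * Vᴴ) - 1 with hU
  have hUh : Uᴴ = U := by simp [hU, conjTranspose_smul]
  have hPP : (V * Vᴴ) * (V * Vᴴ) = V * Vᴴ := by
    rw [Matrix.mul_assoc, ← Matrix.mul_assoc Vᴴ, hV, Matrix.one_mul]
  have hUU : U * U = 1 := by
    simp only [hU, Matrix.sub_mul, Matrix.mul_sub, smul_mul_assoc, mul_smul_comm, hPP]
    simp only [mul_one, one_mul]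
    module
  have hUV : U * V = V := by
    simp only [hU, Matrix.sub_mul, Matrix.smul_mul, Matrix.mul_assoc, hV, Matrix.mul_one, Matrix.one_mul]
    module
  have hVU : Vᴴ * U = Vᴴ := by
    have := congrArg conjTranspose hUV
    rwa [conjTranspose_mul, hUh] at this
  have hD' : (U * D * U).PosDef := by
    have := hD.conjTranspose_mul_mul_same (B := U) (Function.LeftInverse.injective (g := U.mulVec) (by intro v; simp [hUU]))
    rwa [hUh] at this
  have hTh : (Vᴴ * D * V).IsHermitian := by
    have := isHermitian_conjTranspose_mul_mul V hD.1
    exact this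
  have h := hf k D (U * D * U) hD hD' (1/2) (by norm_num) (by norm_num)
  have hfD' : cfc f (U * D * U) = U * cfc f D * U := by
    have := cfc_intertwine f (U * D * U) D U hD'.1 hD.1 (by rw [Matrix.mul_assoc _ U U, hUU, Matrix.mul_one])
    rw [← this, Matrix.mul_assoc (cfc _ _) U U, hUU, Matrix.mul_one]
  set M := (1/2:ℝ) • D + (1 - 1/2:ℝ) • (U * D * U) with hM
  have hMh : M.IsHermitian := by
    have e1 : Dᴴ = D := hD.1
    have e2 : (U * D * U)ᴴ = U * D * U := hD'.1
    rw [IsHermitian, hM, conjTranspose_add, conjTranspose_smul, conjTranspose_smul, e1, e2]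
    simp
  have hMV : M * V = V * (Vᴴ * D * V) := by
    have : U * (D * V) = (2:ℝ) • (V * (Vᴴ * (D * V))) - D * V := by
      simp only [hU, Matrix.sub_mul, Matrix.smul_mul, Matrix.mul_assoc, Matrix.one_mul]
    rw [hM, Matrix.add_mul, Matrix.smul_mul, Matrix.smul_mul, Matrix.mul_assoc, hUV, Matrix.mul_assoc, this,
      Matrix.mul_assoc]
    module
  have h3 := cfc_intertwine f M _ V hMh hTh hMV
  have h4 := h.conjTranspose_mul_mul_same V
  rw [hfD'] at h4
  convert h4 using 1
  rw [Matrix.mul_assoc Vᴴ (_ - _) V, Matrix.sub_mul, h3, Matrix.mul_sub, ← Matrix.mul_assoc Vᴴ V, hV, Matrix.one_mul]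
  congr 1
  rw [Matrix.add_mul, Matrix.smul_mul, Matrix.smul_mul, Matrix.mul_assoc _ U V, hUV, Matrix.mul_add, Matrix.mul_smul,
    Matrix.mul_smul, Matrix.mul_assoc U, ← Matrix.mul_assoc Vᴴ U, hVU, Matrix.mul_assoc]
  module

lemma jensen_pos {m : ℕ} {ι : Type*} [Fintype ι] [DecidableEq ι] (f : ℝ → ℝ) (hf : OperatorConvexOn f)
    (E : ι → Matrix (Fin m) (Fin m) ℂ) (hE : ∀ i, (E i).PosSemidef) (hE1 : ∑ i, E i = 1)
    (x : ι → ℝ) (hx : ∀ i, 0 < x i) :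
    ((∑ i, f (x i) • E i) - cfc f (∑ i, x i • E i)).PosSemidef := by
  choose K hK using fun i => psd_factor (E i) (hE i)
  let e : Fin (Fintype.card (ι × Fin m)) ≃ ι × Fin m := (Fintype.equivFin _).symm
  let V : Matrix (Fin (Fintype.card (ι × Fin m))) (Fin m) ℂ := Matrix.of fun k b => K (e k).1 (e k).2 b
  have key : ∀ g : ι → ℝ, Vᴴ * diagonal (fun k => (g (e k).1 : ℂ)) * V = ∑ i, g i • E i := by
    intro g
    ext a b
    rw [mul_apply]
    simp only [mul_diagonal, conjTranspose_apply, V, Matrix.of_apply]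
    rw [e.sum_comp (fun p : ι × Fin m => star (K p.1 p.2 a) * (g p.1 : ℂ) * K p.1 p.2 b), Fintype.sum_prod_type,
      Matrix.sum_apply]
    refine Finset.sum_congr rfl fun i _ => ?_
    rw [hK, Matrix.smul_apply, mul_apply, Finset.smul_sum]
    refine Finset.sum_congr rfl fun j _ => ?_
    simp; ring
  have hV : Vᴴ * V = 1 := by
    have := key (fun _ => 1)
    simpa [hE1] using this
  have hD : (diagonal (fun k => (x (e k).1 : ℂ))).PosDef := by
    rw [posDef_diagonal_iff]; intro k; exact_mod_cast hx _
  have := jensen_isometry f hf _ hD V hV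
  rw [cfc_diag f (fun k => x (e k).1), key x, key (fun i => f (x i))] at this
  exact this

open Filter Topology in
lemma jensen {m : ℕ} {ι : Type*} [Fintype ι] [DecidableEq ι] (f : ℝ → ℝ) (hf : OperatorConvexOn f)
    (hc : ContinuousOn f (Set.Ici 0))
    (E : ι → Matrix (Fin m) (Fin m) ℂ) (hE : ∀ i, (E i).PosSemidef) (hE1 : ∑ i, E i = 1)
    (x : ι → ℝ) (hx : ∀ i, 0 ≤ x i) :
    ((∑ i, f (x i) • E i) - cfc f (∑ i, x i • E i)).PosSemidef := by
  set T := ∑ i, x i • E i with hT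
  have hTp : T.PosSemidef := posSemidef_sum _ fun i _ => real_smul_psd (hE i) (hx i)
  obtain ⟨t, p, ht, hp, hTe, hp1⟩ := spec_mat T hTp
  have h1 : ∀ ε : ℝ, 0 < ε → ((∑ i, f (x i + ε) • E i) - ∑ j, f (t j + ε) • p j).PosSemidef := by
    intro ε hε
    have h := jensen_pos f hf E hE hE1 (fun i => x i + ε) (fun i => add_pos_of_nonneg_of_pos (hx i) hε)
    have e : ∑ i, (x i + ε) • E i = T + ε • 1 := by
      simp only [add_smul, Finset.sum_add_distrib, ← Finset.smul_sum, hE1, hT]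
    simp only [e] at h
    have hh : (T + ε • (1 : Matrix (Fin m) (Fin m) ℂ)).IsHermitian := by
      rw [← e]
      exact (posSemidef_sum _ fun i _ => real_smul_psd (hE i) (add_nonneg (hx i) hε.le)).1
    rwa [cfc_sum_eig f _ hh (fun j => t j + ε) p (fun j => by simp [add_mul, hTe, add_smul]) hp1] at h
  rw [cfc_sum_eig f T hTp.1 t p hTe hp1]
  refine PosSemidef.of_dotProduct_mulVec_nonneg ?_ ?_
  · refine IsHermitian.sub ?_ ?_
    · exact isSelfAdjoint_sum _ fun i _ => IsSelfAdjoint.smul (by simp [isSelfAdjoint_iff]) (hE i).1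
    · exact isSelfAdjoint_sum _ fun i _ => IsSelfAdjoint.smul (by simp [isSelfAdjoint_iff]) (hp i).1
  · intro v
    have ex : ∀ g h : _ → ℝ, star v ⬝ᵥ ((∑ i, g i • E i) - ∑ j, h j • p j) *ᵥ v =
       ∑ i, (g i : ℂ) * (star v ⬝ᵥ E i *ᵥ v) - ∑ j, (h j : ℂ) * (star v ⬝ᵥ p j *ᵥ v) := by
      intro g h
      rw [sub_mulVec, sum_mulVec, sum_mulVec, dotProduct_sub, dotProduct_sum, dotProduct_sum]
      simp only [smul_mulVec, dotProduct_smul, Complex.real_smul]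
    have lim : ∀ y : ℝ, 0 ≤ y → Tendsto (fun ε => (f (y + ε) : ℂ)) (𝓝[>] 0) (𝓝 (f y : ℂ)) := by
      intro y hy
      refine (Complex.continuous_ofReal.tendsto _).comp ?_
      refine (hc y hy).tendsto.comp ?_
      refine tendsto_nhdsWithin_iff.2 ⟨?_, ?_⟩
      · refine Tendsto.mono_left ?_ nhdsWithin_le_nhds
        have : Continuous (fun ε : ℝ => y + ε) := by fun_prop
        simpa using this.tendsto 0
      · filter_upwards [self_mem_nhdsWithin] with ε hε
        exact add_nonneg hy (le_of_lt hε)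
    have lim2 : Tendsto (fun ε => star v ⬝ᵥ ((∑ i, f (x i + ε) • E i) - ∑ j, f (t j + ε) • p j) *ᵥ v) (𝓝[>] 0)
      (𝓝 (star v ⬝ᵥ ((∑ i, f (x i) • E i) - ∑ j, f (t j) • p j) *ᵥ v)) := by
      simp only [ex]
      exact (tendsto_finsetSum _ fun i _ => (lim _ (hx i)).mul_const _).sub
        (tendsto_finsetSum _ fun i _ => (lim _ (ht i)).mul_const _)
    refine ge_of_tendsto lim2 ?_
    filter_upwards [self_mem_nhdsWithin] with ε hε
    exact (h1 ε hε).dotProduct_mulVec_nonneg v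

lemma opconv_sub_affine (f : ℝ → ℝ) (hf : OperatorConvexOn f) (α β : ℝ) :
    OperatorConvexOn (fun x => f x - (α * x + β)) := by
  have key : ∀ (m : ℕ) (A : Matrix (Fin m) (Fin m) ℂ), A.IsHermitian →
      cfc (fun x => f x - (α * x + β)) A = cfc f A - (α • A + β • 1) := by
    intro m A hA
    obtain ⟨x, v, h1, h2, h3⟩ := spec_vec A hA
    have h4 := fun i => mul_vecMulVec_eig A (v i) (star (v i)) _ (h1 i)
    rw [cfc_sum_eig _ A hA x _ h4 h3, cfc_sum_eig f A hA x _ h4 h3]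
    have : A = ∑ i, x i • vecMulVec (v i) (star (v i)) := by
      conv_lhs => rw [← mul_one A, ← h3, Finset.mul_sum]
      exact Finset.sum_congr rfl fun i _ => h4 i
    conv_rhs => rw [this, ← h3]
    simp only [sub_smul, add_smul, Finset.sum_sub_distrib, Finset.sum_add_distrib, Finset.smul_sum, mul_smul]
  intro m A B hA hB t h0 h1
  have h := hf m A B hA hB t h0 h1
  have hM : (t • A + (1 - t) • B).IsHermitian :=
    ((real_smul_psd hA.posSemidef h0).add (real_smul_psd hB.posSemidef (sub_nonneg.2 h1))).1
  rw [key m A hA.1, key m B hB.1, key m _ hM]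
  convert h using 1
  module

lemma proj_psd {N : Type*} [Fintype N] [DecidableEq N] {W : Matrix N N ℂ} (h1 : W.IsHermitian) (h2 : W * W = W) :
    W.PosSemidef := by
  have := posSemidef_conjTranspose_mul_self W
  rwa [h1.eq, h2] at this

lemma proj_compl {N : Type*} [Fintype N] [DecidableEq N] {W : Matrix N N ℂ} (h1 : W.IsHermitian) (h2 : W * W = W) :
    (1 - W).PosSemidef := by
  refine proj_psd (isHermitian_one.sub h1) ?_
  simp [sub_mul, mul_sub, h2]

lemma proj_posDef {N : Type*} [Fintype N] [DecidableEq N] {W : Matrix N N ℂ} (h1 : W.IsHermitian) (h2 : W * W = W)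
    {p q : ℝ} (hp : 0 < p) (hq : 0 < q) : (p • W + q • (1 - W)).PosDef := by
  have hμ : 0 < min p q := lt_min hp hq
  have e : p • W + q • (1 - W) = (min p q) • (1 : Matrix N N ℂ) + ((p - min p q) • W + (q - min p q) • (1 - W)) := by
    module
  rw [e]
  refine PosDef.add_posSemidef (PosDef.one.smul hμ) ?_
  exact (real_smul_psd (proj_psd h1 h2) (by simp)).add (real_smul_psd (proj_compl h1 h2) (by simp))

lemma proj_cfc {N : Type*} [Fintype N] [DecidableEq N] {W : Matrix N N ℂ} (h1 : W.IsHermitian) (h2 : W * W = W)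
    {p q : ℝ} (hp : 0 < p) (hq : 0 < q) (f : ℝ → ℝ) : cfc f (p • W + q • (1 - W)) = f p • W + f q • (1 - W) := by
  have h3 : (1 - W) * W = 0 := by simp [sub_mul, h2]
  have h4 : W * (1 - W) = 0 := by simp [mul_sub, h2]
  have h5 : (1 - W) * (1 - W) = 1 - W := by simp [sub_mul, mul_sub, h2]
  rw [cfc_sum_eig f _ (proj_posDef h1 h2 hp hq).1 (fun b : Bool => if b then p else q)
    (fun b : Bool => if b then W else 1 - W)]
  · simp
  · rintro (_ | _)
    · simp [add_mul, h4, h5]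
    · simp [add_mul, h3, h2]
  · simp

lemma flat_zero (g : ℝ → ℝ) (hg : OperatorConvexOn g) (hnn : ∀ x, 0 < x → 0 ≤ g x) (p q r δ : ℝ) (hp : 0 < p)
    (hq : 0 < q) (hr : 0 < r) (hpq : p ≠ q) (hδ : 0 < δ) (hδ1 : δ < 1) (gp : g p = 0) (gq : g q = 0) :
    ∃ W P : Matrix (Fin 2) (Fin 2) ℂ, W.IsHermitian ∧ W * W = W ∧ P.IsHermitian ∧ P * P = P ∧
      W 0 0 = ((1 - δ : ℝ) : ℂ) ∧ P 0 0 = 1 ∧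
      cfc g ((1/2:ℝ) • (p • W + q • (1 - W)) + (1-1/2:ℝ) • (r • P + q • (1 - P))) = 0 := by
  obtain ⟨c, hc, hc2⟩ : ∃ c : ℝ, c ≠ 0 ∧ c * c = δ * (1 - δ) := by
    have : 0 < δ * (1 - δ) := mul_pos hδ (sub_pos.2 hδ1)
    exact ⟨√(δ * (1 - δ)), (Real.sqrt_pos.2 this).ne', Real.mul_self_sqrt this.le⟩
  have hc3 : (c : ℂ) * c = δ * (1 - δ) := by exact_mod_cast hc2
  set W : Matrix (Fin 2) (Fin 2) ℂ := !![1 - (δ:ℂ), (c:ℂ); (c:ℂ), (δ:ℂ)] with hW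
  set P : Matrix (Fin 2) (Fin 2) ℂ := !![1, 0; 0, 0] with hP
  have hWh : W.IsHermitian := by
    ext i j; fin_cases i <;> fin_cases j <;> simp [hW]
  have hPh : P.IsHermitian := by
    ext i j; fin_cases i <;> fin_cases j <;> simp [hP]
  have hWW : W * W = W := by
    ext i j; fin_cases i <;> fin_cases j <;> simp [hW, hc3] <;> ring
  have hPP : P * P = P := by
    ext i j; fin_cases i <;> fin_cases j <;> simp [hP]
  refine ⟨W, P, hWh, hWW, hPh, hPP, by simp [hW], by simp [hP], ?_⟩
  have hA := proj_posDef hWh hWW hp hq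
  have hB := proj_posDef hPh hPP hr hq
  have h := hg 2 _ _ hA hB (1/2) (by norm_num) (by norm_num)
  rw [proj_cfc hWh hWW hp hq, proj_cfc hPh hPP hr hq, gp, gq] at h
  set M := (1/2:ℝ) • (p • W + q • (1 - W)) + (1-1/2:ℝ) • (r • P + q • (1 - P)) with hM
  have hMp : M.PosDef := (hA.smul (by norm_num)).add (hB.smul (by norm_num))
  set G := cfc g M with hG
  have hGp : G.PosSemidef := by
    obtain ⟨x, v, h1, h2, h3⟩ := spec_vec M hMp.1
    have h4 := fun i => mul_vecMulVec_eig M (v i) (star (v i)) _ (h1 i)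
    rw [hG, cfc_sum_eig _ M hMp.1 x _ h4 h3]
    refine posSemidef_sum _ fun i _ => real_smul_psd (posSemidef_vecMulVec_self_star _) (hnn _ ?_)
    have h0 : v i ≠ 0 := by
      intro h0
      have := h2 i
      simp [h0] at this
    have := hMp.dotProduct_mulVec_pos h0
    rw [h1, dotProduct_smul, h2] at this
    simpa using this
  have z : ∀ i, G i i = 0 → ∀ j, G j i = 0 := by
    intro i hi j
    have := (hGp.dotProduct_mulVec_zero_iff (Pi.single i 1)).1 (by simp [hi])
    have := congrFun this j
    simpa using this
  have G11 : G 1 1 = 0 := by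
    have e1 := h.diag_nonneg (i := 1)
    have e2 := hGp.diag_nonneg (i := 1)
    have : 0 ≤ - G 1 1 := by simpa [hP] using e1
    exact le_antisymm (by simpa using this) e2
  have G01 := z 1 G11 0
  have comm := cfc_intertwine g M M M hMp.1 hMp.1 rfl
  have c01 := congrFun (congrFun comm 0) 1
  rw [← hG] at c01
  have M01 : M 0 1 = (1/2 * (p - q) * c : ℝ) := by
    simp [hM, hW, hP]; ring
  simp only [mul_apply, Fin.sum_univ_two, G01, G11, mul_zero, zero_mul, add_zero] at c01
  have G00 : G 0 0 = 0 := by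
    rcases mul_eq_zero.1 c01 with h | h
    · exact h
    · exfalso
      rw [M01] at h
      have h' : (1/2 * (p - q) * c : ℝ) = 0 := by exact_mod_cast h
      have : p - q ≠ 0 := sub_ne_zero.2 hpq
      simp [this, hc] at h'
  ext i j
  fin_cases i <;> fin_cases j
  · exact G00
  · exact G01
  · exact z 0 G00 1
  · exact G11

lemma flat_extend (g : ℝ → ℝ) (hg : OperatorConvexOn g) (hnn : ∀ x, 0 < x → 0 ≤ g x) (p q r : ℝ) (hp : 0 < p)
    (hq : 0 < q) (hr : 0 < r) (hs : 0 < (p - q) * (r - p)) (gp : g p = 0) (gq : g q = 0) :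
    ∃ u, g u = 0 ∧ 0 < (u - p) * (r - p) ∧ 0 ≤ (r - u) * (r - p) := by
  have hs0 : r - p ≠ 0 := fun h => by simp [h] at hs
  have hs2 : 0 < (r - p) ^ 2 := by positivity
  have hpq : p ≠ q := fun h => by simp [h] at hs
  set k := (p - q) * (r - p) with hk
  set δ := (r - p) ^ 2 / (2 * ((r - p) ^ 2 + k)) with hδ
  have hδ0 : 0 < δ := by positivity
  have hδ1 : δ < 1 := by rw [hδ, div_lt_one (by positivity)]; linarith
  have hδ2 : δ * k < (r - p) ^ 2 := by
    rw [hδ, div_mul_eq_mul_div, div_lt_iff₀ (by positivity)]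
    nlinarith
  obtain ⟨W, P, hWh, hWW, hPh, hPP, W00, P00, hz⟩ := flat_zero g hg hnn p q r δ hp hq hr hpq hδ0 hδ1 gp gq
  have hA := proj_posDef hWh hWW hp hq
  have hB := proj_posDef hPh hPP hr hq
  set M := (1/2:ℝ) • (p • W + q • (1 - W)) + (1-1/2:ℝ) • (r • P + q • (1 - P)) with hM
  have hMp : M.PosDef := (hA.smul (by norm_num)).add (hB.smul (by norm_num))
  have hrq : 0 < (r - q) * (r - p) := by nlinarith
  have hup : ((r - p) • (r • (1 : Matrix (Fin 2) (Fin 2) ℂ) - M)).PosSemidef := by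
    have e : (r - p) • (r • (1 : Matrix (Fin 2) (Fin 2) ℂ) - M) =
       (1/2 * ((r - q) * (r - p))) • (1 - W) + (1/2 * (r - p)^2) • W + (1/2 * ((r - q) * (r - p))) • (1 - P) := by
      rw [hM]; module
    rw [e]
    exact ((real_smul_psd (proj_compl hWh hWW) (by positivity)).add (real_smul_psd (proj_psd hWh hWW) (by positivity))).add
      (real_smul_psd (proj_compl hPh hPP) (by positivity))
  obtain ⟨x, v, h1, h2, h3⟩ := spec_vec M hMp.1
  have h4 := fun i => mul_vecMulVec_eig M (v i) (star (v i)) _ (h1 i)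
  have hgx : ∀ i, g (x i) = 0 := by
    intro i
    have := cfc_eig g M _ hMp.1 _ (h4 i)
    rw [hz, zero_mul] at this
    rcases smul_eq_zero.1 this.symm with h | h
    · exact h
    · exfalso
      have h5 := congrArg trace h
      rw [trace_vecMulVec, dotProduct_comm, h2] at h5
      simp at h5
  have hxr : ∀ i, 0 ≤ (r - x i) * (r - p) := by
    intro i
    have := hup.dotProduct_mulVec_nonneg (v i)
    rw [smul_mulVec, sub_mulVec, smul_mulVec, h1, one_mulVec, ← sub_smul, dotProduct_smul, dotProduct_smul, h2] at this
    have h' : (0:ℂ) ≤ (((r - x i) * (r - p) : ℝ) : ℂ) := by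
      convert this using 1
      simp; ring
    exact_mod_cast h'
  by_contra hcon
  push Not at hcon
  have hle : ∀ i, (x i - p) * (r - p) ≤ 0 := by
    intro i
    by_contra hh
    exact absurd (hxr i) (not_le.2 (hcon (x i) (hgx i) (not_le.1 hh)))
  have hdown : ((r - p) • (p • (1 : Matrix (Fin 2) (Fin 2) ℂ) - M)).PosSemidef := by
    have e : (r - p) • (p • (1 : Matrix (Fin 2) (Fin 2) ℂ) - M) =
        ∑ i, (-((x i - p) * (r - p))) • vecMulVec (v i) (star (v i)) := by
      have : M = ∑ i, x i • vecMulVec (v i) (star (v i)) := by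
        conv_lhs => rw [← mul_one M, ← h3, Finset.mul_sum]
        exact Finset.sum_congr rfl fun i _ => h4 i
      rw [this, ← h3, Finset.smul_sum, ← Finset.sum_sub_distrib, Finset.smul_sum]
      refine Finset.sum_congr rfl fun i _ => ?_
      module
    rw [e]
    exact posSemidef_sum _ fun i _ => real_smul_psd (posSemidef_vecMulVec_self_star _) (by linarith [hle i])
  have h00 := hdown.diag_nonneg (i := 0)
  have e00 : ((r - p) • (p • (1 : Matrix (Fin 2) (Fin 2) ℂ) - M)) 0 0 = ((1/2 * (δ * k - (r-p)^2) : ℝ) : ℂ) := by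
    simp [hM, W00, P00, hk]; ring
  rw [e00] at h00
  have : 0 ≤ 1/2 * (δ * k - (r-p)^2) := by exact_mod_cast h00
  linarith

lemma cfc_sq {m : ℕ} (A : Matrix (Fin m) (Fin m) ℂ) (hA : A.IsHermitian) : cfc (fun x : ℝ => x ^ 2) A = A ^ 2 := by
  rw [cfc_poly _ A hA (Polynomial.X ^ 2) (by simp)]
  simp

lemma opconv_convex (f : ℝ → ℝ) (hf : OperatorConvexOn f) (hc : ContinuousOn f (Set.Ici 0)) :
    ConvexOn ℝ (Set.Ici 0) f := by
  refine ⟨convex_Ici 0, ?_⟩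
  intro x hx y hy a b ha hb hab
  have h := jensen (m := 1) (ι := Bool) f hf hc (fun i => (if i then a else b) • 1)
    (fun i => real_smul_psd PosSemidef.one (by cases i <;> simp [ha, hb])) (by simp [← add_smul, hab])
    (fun i => if i then x else y) (by rintro (_ | _) <;> simpa)
  have e : ∑ i : Bool, (if i then x else y) • (if i then a else b) • (1 : Matrix (Fin 1) (Fin 1) ℂ) =
     algebraMap ℝ _ (a * x + b * y) := by
    simp [Algebra.algebraMap_eq_smul_one]; module
  rw [e, cfc_algebraMap] at h
  have h0 := h.diag_nonneg (i := 0)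
  have h1 : (0:ℂ) ≤ ((a * f x + b * f y - f (a * x + b * y) : ℝ) : ℂ) := by
    convert h0 using 1
    simp [Algebra.algebraMap_eq_smul_one]; ring
  have h2 : 0 ≤ a * f x + b * f y - f (a * x + b * y) := by exact_mod_cast h1
  simp only [smul_eq_mul]; linarith

lemma convex_three {g : ℝ → ℝ} (hg : ConvexOn ℝ (Set.Ici 0) g) {x z y : ℝ} (hx : 0 ≤ x) (hxz : x ≤ z) (hzy : z ≤ y) :
    (y - x) * g z ≤ (y - z) * g x + (z - x) * g y := by
  rcases eq_or_lt_of_le (hxz.trans hzy) with h | h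
  · have : z = x := by linarith
    subst this; subst h; simp
  · have hd : 0 < y - x := by linarith
    have := hg.2 (show x ∈ Set.Ici 0 from hx) (show y ∈ Set.Ici 0 from hx.trans h.le)
      (show 0 ≤ (y - z) / (y - x) from div_nonneg (by linarith) hd.le)
      (show 0 ≤ (z - x) / (y - x) from div_nonneg (by linarith) hd.le) (by field_simp; ring)
    have e : ((y - z) / (y - x)) • x + ((z - x) / (y - x)) • y = z := by
      simp only [smul_eq_mul]; field_simp; ring
    rw [e] at this
    simp only [smul_eq_mul] at this
    have h2 := mul_le_mul_of_nonneg_left this hd.le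
    have e2 : (y - x) * ((y - z) / (y - x) * g x + (z - x) / (y - x) * g y) = (y - z) * g x + (z - x) * g y := by
      field_simp
    linarith

lemma flat_all (g : ℝ → ℝ) (hg : OperatorConvexOn g) (hc : ContinuousOn g (Set.Ici 0)) (hnn : ∀ x, 0 ≤ x → 0 ≤ g x)
    (z y : ℝ) (hz : 0 < z) (hzy : z < y) (gz : g z = 0) (gy : g y = 0) : ∀ c, 0 < c → g c = 0 := by
  have hcv := opconv_convex g hg hc
  intro c hc0
  by_contra hgc
  have hcl : ∀ a b : ℝ, 0 ≤ a → IsCompact {w ∈ Set.Icc a b | g w = 0} := by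
    intro a b ha
    have : IsClosed (Set.Icc a b ∩ g ⁻¹' {0}) :=
      (hc.mono (fun w hw => ha.trans hw.1)).preimage_isClosed_of_isClosed isClosed_Icc isClosed_singleton
    exact isCompact_Icc.of_isClosed_subset this (fun w hw => hw.1)
  rcases lt_or_ge y c with h | h
  · obtain ⟨p, ⟨hp, gp⟩, hmax⟩ := (hcl y c (hz.trans hzy).le).exists_isMaxOn (f := id) ⟨y, ⟨le_refl _, h.le⟩, gy⟩
      continuousOn_id
    have hpc : p < c := lt_of_le_of_ne hp.2 (fun e => hgc (e ▸ gp))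
    have hyp := hp.1
    obtain ⟨u, gu, hu1, hu2⟩ := flat_extend g hg (fun x hx => hnn x hx.le) p z c (by linarith) hz hc0
      (mul_pos (by linarith) (by linarith)) gp gz
    have h1 : 0 < u - p := (pos_iff_pos_of_mul_pos hu1).2 (by linarith)
    have h2 : u ≤ c := by
      by_contra hh
      nlinarith
    have := hmax (a := u) ⟨⟨by linarith, h2⟩, gu⟩
    simp at this
    linarith
  · rcases lt_or_ge c z with h' | h'
    · obtain ⟨p, ⟨hp, gp⟩, hmax⟩ := (hcl c z hc0.le).exists_isMinOn (f := id) ⟨z, ⟨h'.le, le_refl _⟩, gz⟩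
        continuousOn_id
      have hpc : c < p := lt_of_le_of_ne hp.1 (fun e => hgc (e ▸ gp))
      have hyp := hp.2
      obtain ⟨u, gu, hu1, hu2⟩ := flat_extend g hg (fun x hx => hnn x hx.le) p y c (by linarith) (by linarith) hc0
        (mul_pos_of_neg_of_neg (by linarith) (by linarith)) gp gy
      have h1 : u - p < 0 := (neg_iff_neg_of_mul_pos hu1).2 (by linarith)
      have h2 : c ≤ u := by
        by_contra hh
        nlinarith
      have := hmax (a := u) ⟨⟨h2, by linarith⟩, gu⟩
      simp at this
      linarith
    · have := convex_three hcv hz.le h' h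
      rw [gz, gy] at this
      have h3 : 0 < g c := lt_of_le_of_ne (hnn c hc0.le) (Ne.symm hgc)
      have : 0 < (y - z) * g c := mul_pos (by linarith) h3
      linarith

open Filter Topology in
lemma opconv_strict (f : ℝ → ℝ) (hf : OperatorConvexOn f) (hc : ContinuousOn f (Set.Ici 0))
    (hna : ¬ ∃ p q : ℝ, ∀ x : ℝ, 0 ≤ x → f x = p * x + q) : StrictConvexOn ℝ (Set.Ici 0) f := by
  by_contra hns
  apply hna
  have hcv := opconv_convex f hf hc
  obtain ⟨x, z, y, hx, hxz, hzy, hfz⟩ : ∃ x z y : ℝ, 0 ≤ x ∧ x < z ∧ z < y ∧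
      (y - z) * f x + (z - x) * f y ≤ (y - x) * f z := by
    by_contra hcon
    push Not at hcon
    apply hns
    refine LinearOrder.strictConvexOn_of_lt (convex_Ici 0) ?_
    intro x hx y hy hxy a b ha hb hab
    have ea : a = 1 - b := by linarith
    subst ea
    have hz := hcon x ((1 - b) * x + b * y) y hx (by nlinarith) (by nlinarith)
    have hd : 0 < y - x := by linarith
    simp only [smul_eq_mul]
    by_contra hh
    have := mul_le_mul_of_nonneg_left (not_lt.1 hh) hd.le
    nlinarith
  have hd : 0 < y - x := by linarith
  set α := (f y - f x) / (y - x) with hα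
  set β := f x - α * x with hβ
  have hαd : α * (y - x) = f y - f x := by rw [hα]; field_simp
  set g : ℝ → ℝ := fun w => f w - (α * w + β) with hg
  have gop : OperatorConvexOn g := opconv_sub_affine f hf α β
  have gc : ContinuousOn g (Set.Ici 0) := by
    refine hc.sub (Continuous.continuousOn ?_)
    fun_prop
  have gcv := opconv_convex g gop gc
  have gx : g x = 0 := by simp [hg, hβ]
  have gy : g y = 0 := by simp only [hg, hβ]; linarith
  have gz : g z = 0 := by
    have h1 := convex_three gcv hx hxz.le hzy.le
    rw [gx, gy] at h1
    have h2 : 0 ≤ (y - x) * g z := by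
      have : (y - x) * g z = (y - x) * f z - ((y - z) * f x + (z - x) * f y) := by
        simp only [hg, hβ]
        linear_combination (x - z) * hαd
      linarith
    have : (y - x) * g z = 0 := by linarith
    rcases mul_eq_zero.1 this with h | h
    · linarith
    · exact h
  have gnn : ∀ w, 0 ≤ w → 0 ≤ g w := by
    intro w hw
    by_contra hh
    push Not at hh
    rcases le_total w z with h | h
    · have := convex_three gcv hw h hzy.le
      rw [gz, gy] at this
      have : (y - z) * g w < 0 := mul_neg_of_pos_of_neg (by linarith) hh
      linarith
    · have := convex_three gcv hx hxz.le h
      rw [gz, gx] at this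
      have : (z - x) * g w < 0 := mul_neg_of_pos_of_neg (by linarith) hh
      linarith
  have gall := flat_all g gop gc gnn z y (by linarith) hzy gz gy
  have g0 : g 0 = 0 := by
    have h1 : Tendsto g (𝓝[>] 0) (𝓝 (g 0)) := (gc 0 (Set.mem_Ici.2 le_rfl)).mono_left (nhdsWithin_mono _ Set.Ioi_subset_Ici_self)
    have h2 : Tendsto g (𝓝[>] 0) (𝓝 0) := by
      refine tendsto_const_nhds.congr' ?_
      filter_upwards [self_mem_nhdsWithin] with w hw
      exact (gall w hw).symm
    exact tendsto_nhds_unique h1 h2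
  refine ⟨α, β, fun w hw => ?_⟩
  have : g w = 0 := by
    rcases eq_or_lt_of_le hw with h | h
    · rw [← h]; exact g0
    · exact gall w h
  simp only [hg] at this
  linarith

lemma sq_opconv : OperatorConvexOn (fun x => x ^ 2) := by
  intro m A B hA hB t h0 h1
  have hM : (t • A + (1 - t) • B).IsHermitian :=
    ((real_smul_psd hA.posSemidef h0).add (real_smul_psd hB.posSemidef (sub_nonneg.2 h1))).1
  rw [cfc_sq A hA.1, cfc_sq B hB.1, cfc_sq _ hM]
  have e : t • A ^ 2 + (1 - t) • B ^ 2 - (t • A + (1 - t) • B) ^ 2 = (t * (1 - t)) • ((A - B)ᴴ * (A - B)) := by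
    rw [(hA.1.sub hB.1).eq]
    simp only [pow_two, add_mul, mul_add, sub_mul, mul_sub, smul_mul_assoc, mul_smul_comm]
    module
  rw [e]
  exact real_smul_psd (posSemidef_conjTranspose_mul_self _) (mul_nonneg h0 (sub_nonneg.2 h1))

lemma sq_nonaffine : ¬ ∃ p q : ℝ, ∀ x : ℝ, 0 ≤ x → (fun x : ℝ => x ^ 2) x = p * x + q := by
  rintro ⟨p, q, h⟩
  have h0 := h 0 le_rfl
  have h1 := h 1 zero_le_one
  have h2 := h 2 zero_le_two
  norm_num at h0 h1 h2
  linarith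

lemma eig_of_eq {m : ℕ} {ι : Type*} [Fintype ι] [DecidableEq ι] (f : ℝ → ℝ) (hf : StrictConvexOn ℝ (Set.Ici 0) f)
    (E : ι → Matrix (Fin m) (Fin m) ℂ) (hE : ∀ i, (E i).PosSemidef) (hE1 : ∑ i, E i = 1)
    (x : ι → ℝ) (hx : ∀ i, 0 ≤ x i) (T : Matrix (Fin m) (Fin m) ℂ) (hT : ∑ i, x i • E i = T)
    (heq : ∑ i, f (x i) • E i = cfc f T) : ∀ i, T * E i = x i • E i := by
  have hTp : T.PosSemidef := hT ▸ posSemidef_sum _ fun i _ => real_smul_psd (hE i) (hx i)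
  obtain ⟨t, v, h1, h2, h3⟩ := spec_vec T hTp.1
  have h4 := fun i => mul_vecMulVec_eig T (v i) (star (v i)) _ (h1 i)
  have h5 : ∀ j, cfc f T *ᵥ v j = f (t j) • v j := by
    intro j
    have e : vecMulVec (v j) (star (v j)) *ᵥ v j = v j := by
      rw [vecMulVec_mulVec, h2]; simp
    have := congrArg (fun A => A *ᵥ v j) (cfc_eig f T _ hTp.1 _ (h4 j))
    simpa [← mulVec_mulVec, e, smul_mulVec] using this
  have h6 : ∀ i j, E i *ᵥ (T *ᵥ v j) = x i • (E i *ᵥ v j) := by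
    intro i j
    rw [h1, mulVec_smul]
    set w : ι → ℝ := fun i => (star (v j) ⬝ᵥ E i *ᵥ v j).re with hw
    have hwc : ∀ i, star (v j) ⬝ᵥ E i *ᵥ v j = (w i : ℂ) := by
      intro i
      have := (hE i).dotProduct_mulVec_nonneg (v j)
      exact Complex.ext rfl (by simpa using (Complex.le_def.1 this).2.symm)
    have hw0 : ∀ i, 0 ≤ w i := by
      intro i
      have := (hE i).dotProduct_mulVec_nonneg (v j)
      rw [hwc] at this
      exact_mod_cast this
    have gen : ∀ g : ι → ℝ, star (v j) ⬝ᵥ (∑ i, g i • E i) *ᵥ v j = ((∑ i, w i * g i : ℝ) : ℂ) := by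
      intro g
      rw [sum_mulVec, dotProduct_sum]
      push_cast
      refine Finset.sum_congr rfl fun i _ => ?_
      rw [smul_mulVec, dotProduct_smul, hwc]
      simp [mul_comm]
    have w1 : ∑ i, w i = 1 := by
      have := gen (fun _ => 1)
      simp only [one_smul, hE1, one_mulVec, h2, mul_one] at this
      exact_mod_cast this.symm
    have wt : ∑ i, w i * x i = t j := by
      have := gen x
      rw [hT, h1, dotProduct_smul, h2] at this
      simp only [Complex.real_smul, mul_one] at this
      exact_mod_cast this.symm
    have wf : ∑ i, w i * f (x i) = f (t j) := by
      have := gen (fun i => f (x i))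
      rw [heq, h5, dotProduct_smul, h2] at this
      simp only [Complex.real_smul, mul_one] at this
      exact_mod_cast this.symm
    have key := (hf.map_sum_eq_iff_of_nonneg (t := Finset.univ) (w := w) (p := x) (fun i _ => hw0 i) w1
      (fun i _ => hx i)).1 (by simp only [smul_eq_mul]; rw [wt, wf])
    by_cases hwi : w i = 0
    · have : E i *ᵥ v j = 0 := ((hE i).dotProduct_mulVec_zero_iff (v j)).1 (by rw [hwc, hwi]; simp)
      simp [this]
    · have : t j = x i := by
        rw [← wt, ← one_mul (x i), ← w1, Finset.sum_mul]
        refine Finset.sum_congr rfl fun k _ => ?_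
        by_cases hk : w k = 0
        · simp [hk]
        · rw [key (Finset.mem_univ i) hwi (Finset.mem_univ k) hk]
      rw [this]
  intro i
  have h7 : E i * T = x i • E i := by
    rw [← mul_one T, ← mul_one (x i • E i), ← h3, Finset.mul_sum, Finset.mul_sum, Finset.mul_sum]
    refine Finset.sum_congr rfl fun j _ => ?_
    rw [mul_vecMulVec, mul_vecMulVec, h6, mul_vecMulVec, smul_mulVec]
  have := congrArg conjTranspose h7
  rwa [conjTranspose_mul, conjTranspose_smul, (hE i).1.eq, hTp.1.eq, star_trivial] at this

lemma mp_facts {n : ℕ} (σ : Matrix (Fin n) (Fin n) ℂ) (hσ : σ.PosSemidef) :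
    ∃ q : Matrix (Fin n) (Fin n) ℂ, q.IsHermitian ∧ q * q = q ∧ (mpow σ (1/2)).IsHermitian ∧
      (mpow σ (-(1/2))).IsHermitian ∧ mpow σ (1/2) * mpow σ (1/2) = σ ∧
      mpow σ (-(1/2)) * mpow σ (-(1/2)) = mpow σ (-1) ∧ mpow σ (1/2) * mpow σ (-(1/2)) = q ∧
      mpow σ (-(1/2)) * mpow σ (1/2) = q ∧ σ * q = σ ∧ mpow σ (1/2) * q = mpow σ (1/2) ∧
      mpow σ (-(1/2)) * q = mpow σ (-(1/2)) := by
  have hsa : IsSelfAdjoint σ := hσ.1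
  have hc : ∀ f : ℝ → ℝ, ContinuousOn f (spectrum ℝ σ) := fun f => σ.finite_real_spectrum.continuousOn f
  have hs : ∀ x ∈ spectrum ℝ σ, 0 ≤ x := by
    intro x hx
    rw [hσ.1.spectrum_real_eq_range_eigenvalues] at hx
    obtain ⟨i, rfl⟩ := hx
    exact hσ.eigenvalues_nonneg i
  have mulc : ∀ f g h : ℝ → ℝ, (∀ x, 0 ≤ x → f x * g x = h x) → cfc f σ * cfc g σ = cfc h σ := by
    intro f g h hh
    rw [← cfc_mul f g σ (hc f) (hc g)]
    exact cfc_congr fun x hx => hh x (hs x hx)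
  have mulp : ∀ a b c : ℝ, a + b = c → ∀ x : ℝ, 0 ≤ x → (if x = 0 then 0 else x ^ a) * (if x = 0 then 0 else x ^ b) =
      if x = 0 then 0 else x ^ c := by
    intro a b c hab x hx
    by_cases h : x = 0
    · simp [h]
    · simp only [h, if_false]
      rw [← hab, Real.rpow_add (lt_of_le_of_ne hx (Ne.symm h))]
  have hid : mpow σ 1 = σ := by
    conv_rhs => rw [← cfc_id ℝ σ]
    refine cfc_congr fun x hx => ?_
    by_cases h : x = 0 <;> simp [h]
  refine ⟨mpow σ 0, cfc_herm _ _, mulc _ _ _ (mulp 0 0 0 (by norm_num)), cfc_herm _ _, cfc_herm _ _, ?_,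
    mulc _ _ _ (mulp _ _ _ (by norm_num)), mulc _ _ _ (mulp _ _ _ (by norm_num)), mulc _ _ _ (mulp _ _ _ (by norm_num)), ?_,
    mulc _ _ _ (mulp (1/2) 0 (1/2) (by norm_num)),
    mulc _ _ _ (mulp (-(1/2)) 0 (-(1/2)) (by norm_num))⟩
  · conv_rhs => rw [← hid]
    exact mulc _ _ _ (mulp (1/2) (1/2) 1 (by norm_num))
  · have : mpow σ 1 * mpow σ 0 = mpow σ 1 := mulc _ _ _ (mulp 1 0 1 (by norm_num))
    rwa [hid] at this

lemma ker_mul {n : ℕ} {σ ρ Z : Matrix (Fin n) (Fin n) ℂ} (h : ∀ v : Fin n → ℂ, σ *ᵥ v = 0 → ρ *ᵥ v = 0)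
    (hZ : σ * Z = 0) : ρ * Z = 0 := by
  ext i j
  have h1 : σ *ᵥ (fun k => Z k j) = 0 := by
    ext k; exact congrFun (congrFun hZ k) j
  exact congrFun (h _ h1) i

lemma ker_proj {n : ℕ} {σ ρ q : Matrix (Fin n) (Fin n) ℂ} (h : ∀ v : Fin n → ℂ, σ *ᵥ v = 0 → ρ *ᵥ v = 0)
    (hq : σ * q = σ) : ρ * q = ρ := by
  have := ker_mul h (Z := 1 - q) (by rw [mul_sub, hq, mul_one, sub_self])
  rw [mul_sub, mul_one, sub_eq_zero] at this
  exact this.symm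

lemma maxSf_sq {n : ℕ} (ρ σ : Matrix (Fin n) (Fin n) ℂ) (hρ : ρ.PosSemidef) (hσ : σ.PosSemidef)
    (h : ∀ v : Fin n → ℂ, σ *ᵥ v = 0 → ρ *ᵥ v = 0) :
    ((maxSf (fun x => x ^ 2) ρ σ : ℝ) : ℂ) = Matrix.trace (ρ * mpow σ (-1) * ρ) := by
  obtain ⟨q, hq, hqq, hs, hr, hss, hrr, hsr, hrs, hσq, hsq, hrq⟩ := mp_facts σ hσ
  have hρq := ker_proj h hσq
  have hqρ : q * ρ = ρ := by
    have := congrArg conjTranspose hρq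
    rwa [conjTranspose_mul, hρ.1.eq, hq.eq] at this
  unfold maxSf
  set s := mpow σ (1/2)
  set r := mpow σ (-(1/2))
  have hX : (r * ρ * r).IsHermitian := by
    have := isHermitian_conjTranspose_mul_mul r hρ.1
    rwa [hr.eq] at this
  have e : s * cfc (fun x : ℝ => x ^ 2) (r * ρ * r) * s = ρ * mpow σ (-1) * ρ := by
    rw [cfc_sq _ hX, ← hrr]
    calc s * (r * ρ * r) ^ 2 * s = (s * r) * ρ * (r * r) * (ρ * (r * s)) := by
          simp only [pow_two, mul_assoc]
      _ = _ := by rw [hsr, hrs, hρq, hqρ]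
  rw [e]
  have hp : (ρ * mpow σ (-1) * ρ).PosSemidef := by
    have := posSemidef_conjTranspose_mul_self (r * ρ)
    rw [conjTranspose_mul, hr.eq, hρ.1.eq] at this
    rw [← hrr]
    convert this using 1
    simp only [mul_assoc]
  have := hp.trace_nonneg
  exact Complex.ext rfl (by simpa using (Complex.le_def.1 this).2)

/-- equivalent characterizations of the preservation of the maximal
`f`-divergence by a positive trace-preserving map. -/
theorem stmt3 {n m : ℕ} (ρ σ : Matrix (Fin n) (Fin n) ℂ)
    (hρ : ρ.PosSemidef) (hσ : σ.PosSemidef)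
    (hsupp : ∀ v : Fin n → ℂ, σ *ᵥ v = 0 → ρ *ᵥ v = 0)
    (Φ : Matrix (Fin n) (Fin n) ℂ →ₗ[ℂ] Matrix (Fin m) (Fin m) ℂ)
    (hΦpos : ∀ X, X.PosSemidef → (Φ X).PosSemidef)
    (hΦtr : ∀ X, (Φ X).trace = X.trace) :
    ((∃ f : ℝ → ℝ, ContinuousOn f (Set.Ici (0 : ℝ)) ∧ OperatorConvexOn f ∧
        (¬ ∃ p q : ℝ, ∀ x : ℝ, 0 ≤ x → f x = p * x + q) ∧
        maxSf f (Φ ρ) (Φ σ) = maxSf f ρ σ)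
      ↔ (∀ f : ℝ → ℝ, ContinuousOn f (Set.Ici (0 : ℝ)) → OperatorConvexOn f →
          maxSf f (Φ ρ) (Φ σ) = maxSf f ρ σ))
    ∧ ((∀ f : ℝ → ℝ, ContinuousOn f (Set.Ici (0 : ℝ)) → OperatorConvexOn f →
          maxSf f (Φ ρ) (Φ σ) = maxSf f ρ σ)
      ↔ Matrix.trace (Φ ρ * mpow (Φ σ) (-1) * Φ ρ)
          = Matrix.trace (ρ * mpow σ (-1) * ρ))
    ∧ ((Matrix.trace (Φ ρ * mpow (Φ σ) (-1) * Φ ρ)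
          = Matrix.trace (ρ * mpow σ (-1) * ρ))
      ↔ Φ (ρ * mpow σ (-1) * ρ) = Φ ρ * mpow (Φ σ) (-1) * Φ ρ) := by
  obtain ⟨q, hq, hqq, hs, hr, hss, hrr, hsr, hrs, hσq, hsq, hrq⟩ := mp_facts σ hσ
  obtain ⟨Q, hQ, hQQ, hS, hR, hSS, hRR, hSR, hRS, hσQ, hSQ, hRQ⟩ := mp_facts (Φ σ) (hΦpos σ hσ)
  have hρq := ker_proj hsupp hσq
  have hqρ : q * ρ = ρ := by
    have := congrArg conjTranspose hρq
    rwa [conjTranspose_mul, hρ.1.eq, hq.eq] at this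
  have hΦρ := hΦpos ρ hρ
  set s := mpow σ (1/2) with hs_def
  set r := mpow σ (-(1/2)) with hr_def
  set S := mpow (Φ σ) (1/2) with hS_def
  set R := mpow (Φ σ) (-(1/2)) with hR_def
  have hX : (r * ρ * r).PosSemidef := by
    have := hρ.conjTranspose_mul_mul_same r
    rwa [hr.eq] at this
  have hTp : (R * Φ ρ * R).PosSemidef := by
    have := hΦρ.conjTranspose_mul_mul_same R
    rwa [hR.eq] at this
  obtain ⟨x, p, hx, hp, hXp, hp1⟩ := spec_mat _ hX
  set F : Fin n → Matrix (Fin m) (Fin m) ℂ := fun i => Φ (s * p i * s) with hF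
  have hFp : ∀ i, (F i).PosSemidef := by
    intro i
    refine hΦpos _ ?_
    have := (hp i).conjTranspose_mul_mul_same s
    rwa [hs.eq] at this
  have hsum : ∀ g : Fin n → ℝ, Φ (s * (∑ i, g i • p i) * s) = ∑ i, g i • F i := by
    intro g
    rw [Finset.mul_sum, Finset.sum_mul, map_sum]
    refine Finset.sum_congr rfl fun i _ => ?_
    rw [mul_smul_comm, smul_mul_assoc]
    exact LinearMap.map_smul_of_tower Φ _ _
  have hF1 : ∑ i, F i = Φ σ := by
    have := hsum (fun _ => 1)
    simp only [one_smul, hp1, mul_one, hss] at this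
    exact this.symm
  have hFker : ∀ i, ∀ v : Fin m → ℂ, Φ σ *ᵥ v = 0 → F i *ᵥ v = 0 := by
    intro i v hv
    rw [← (hFp i).dotProduct_mulVec_zero_iff]
    have h0 : ∑ i, star v ⬝ᵥ F i *ᵥ v = 0 := by
      rw [← dotProduct_sum, ← sum_mulVec, hF1, hv, dotProduct_zero]
    exact (Finset.sum_eq_zero_iff_of_nonneg (fun i _ => (hFp i).dotProduct_mulVec_nonneg v)).1 h0 i (Finset.mem_univ i)
  have hFQ : ∀ i, F i * Q = F i := fun i => ker_proj (hFker i) hσQ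
  have hQF : ∀ i, Q * F i = F i := by
    intro i
    have := congrArg conjTranspose (hFQ i)
    rwa [conjTranspose_mul, (hFp i).1.eq, hQ.eq] at this
  have hXsum : ∀ f : ℝ → ℝ, cfc f (r * ρ * r) = ∑ i, f (x i) • p i := fun f =>
    cfc_sum_eig f _ hX.1 x p hXp hp1
  have hXX : r * ρ * r = ∑ i, x i • p i := by
    conv_lhs => rw [← mul_one (r * ρ * r), ← hp1, Finset.mul_sum]
    exact Finset.sum_congr rfl fun i _ => hXp i
  have hρF : Φ ρ = ∑ i, x i • F i := by
    rw [← hsum, ← hXX]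
    congr 1
    calc ρ = (s * r) * (ρ * (r * s)) := by rw [hsr, hrs, hρq, hqρ]
      _ = _ := by simp only [mul_assoc]
  have hΦsupp : ∀ v : Fin m → ℂ, Φ σ *ᵥ v = 0 → Φ ρ *ᵥ v = 0 := by
    intro v hv
    rw [hρF, sum_mulVec]
    exact Finset.sum_eq_zero fun i _ => by rw [smul_mulVec, hFker i v hv, smul_zero]
  have hρQ := ker_proj hΦsupp hσQ
  have hQρ : Q * Φ ρ = Φ ρ := by
    have := congrArg conjTranspose hρQ
    rwa [conjTranspose_mul, hΦρ.1.eq, hQ.eq] at this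
  let E : Option (Fin n) → Matrix (Fin m) (Fin m) ℂ := fun o => o.elim (1 - Q) (fun i => R * F i * R)
  let y : Option (Fin n) → ℝ := fun o => o.elim 0 x
  have hy : ∀ o, 0 ≤ y o := by
    rintro (_ | i)
    · exact le_rfl
    · exact hx i
  have hE : ∀ o, (E o).PosSemidef := by
    rintro (_ | i)
    · exact proj_compl hQ hQQ
    · have := (hFp i).conjTranspose_mul_mul_same R
      rwa [hR.eq] at this
  have hEsum : ∀ f : ℝ → ℝ, ∑ o, f (y o) • E o = f 0 • (1 - Q) + R * (∑ i, f (x i) • F i) * R := by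
    intro f
    rw [Fintype.sum_option, Finset.mul_sum, Finset.sum_mul]
    simp only [mul_smul_comm, smul_mul_assoc]
    rfl
  have hE1 : ∑ o, E o = 1 := by
    have := hEsum (fun _ => 1)
    simp only [one_smul, hF1] at this
    rw [this, ← hSS]
    have : R * (S * S) * R = Q := by
      calc R * (S * S) * R = (R * S) * (S * R) := by simp only [mul_assoc]
        _ = Q := by rw [hRS, hSR, hQQ]
    rw [this]; simp
  have hET : ∑ o, y o • E o = R * Φ ρ * R := by
    have := hEsum id
    simp only [id, zero_smul, zero_add] at this
    rw [this, ← hρF]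
  have hSEsum : ∀ f : ℝ → ℝ, S * (∑ o, f (y o) • E o) * S = ∑ i, f (x i) • F i := by
    intro f
    rw [hEsum, mul_add, add_mul, mul_smul_comm, mul_sub, mul_one, hSQ, sub_self, smul_zero, zero_mul, zero_add]
    calc S * (R * (∑ i, f (x i) • F i) * R) * S = (S * R) * (∑ i, f (x i) • F i) * (R * S) := by
          simp only [mul_assoc]
      _ = _ := by
        rw [hSR, hRS, Finset.mul_sum, Finset.sum_mul]
        refine Finset.sum_congr rfl fun i _ => ?_
        rw [mul_smul_comm, smul_mul_assoc, hQF, hFQ]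
  have hmax : ∀ f : ℝ → ℝ, maxSf f ρ σ = (Matrix.trace (S * (∑ o, f (y o) • E o) * S)).re := by
    intro f
    rw [hSEsum, ← hsum, hΦtr, ← hXsum]
    rfl
  have hmax' : ∀ f : ℝ → ℝ, maxSf f (Φ ρ) (Φ σ) = (Matrix.trace (S * cfc f (R * Φ ρ * R) * S)).re :=
    fun f => rfl
  have back : (∀ o, (R * Φ ρ * R) * E o = y o • E o) → ∀ f : ℝ → ℝ, maxSf f (Φ ρ) (Φ σ) = maxSf f ρ σ := by
    intro he f
    rw [hmax, hmax', cfc_sum_eig f _ hTp.1 y E he hE1]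
  have fwd : ∀ f : ℝ → ℝ, ContinuousOn f (Set.Ici (0 : ℝ)) → OperatorConvexOn f →
      (¬ ∃ p q : ℝ, ∀ x : ℝ, 0 ≤ x → f x = p * x + q) → maxSf f (Φ ρ) (Φ σ) = maxSf f ρ σ →
      ∀ o, (R * Φ ρ * R) * E o = y o • E o := by
    intro f hc hf hna heq
    have hJ := jensen f hf hc E hE hE1 y hy
    rw [hET] at hJ
    refine eig_of_eq f (opconv_strict f hf hc hna) E hE hE1 y hy _ hET ?_
    rw [← sub_eq_zero]
    set G := (∑ o, f (y o) • E o) - cfc f (R * Φ ρ * R) with hG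
    have hSGS : (S * G * S).PosSemidef := by
      have := hJ.conjTranspose_mul_mul_same S
      rwa [hS.eq] at this
    have htr : (S * G * S).trace = 0 := by
      have h1 : (S * G * S).trace.re = 0 := by
        rw [hG, mul_sub, sub_mul, trace_sub, Complex.sub_re, ← hmax, ← hmax', heq, sub_self]
      have := hSGS.trace_nonneg
      exact Complex.ext h1 (Complex.le_def.1 this).2.symm
    have hz : S * G * S = 0 := hSGS.trace_eq_zero_iff.1 htr
    obtain ⟨K, hK⟩ := psd_factor G hJ
    have hKS : K * S = 0 := by
      rw [← conjTranspose_mul_self_eq_zero, conjTranspose_mul, hS.eq]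
      rw [hK] at hz
      rw [← hz]; simp only [mul_assoc]
    have hGS : G * S = 0 := by rw [hK, mul_assoc, hKS, mul_zero]
    have hGQ : G * Q = 0 := by rw [← hSR, ← mul_assoc, hGS, zero_mul]
    have hG1 : G * (1 - Q) = 0 := by
      have e1 : (R * Φ ρ * R) * (1 - Q) = (0:ℝ) • (1 - Q) := by
        rw [zero_smul, mul_assoc, mul_sub R, mul_one, hRQ, sub_self, mul_zero]
      have e2 := cfc_eig f _ (1 - Q) hTp.1 0 e1
      have e3 : (1 - Q) * (1 - Q) = 1 - Q := by simp [sub_mul, mul_sub, hQQ]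
      rw [hG, hEsum, sub_mul, e2, add_mul, smul_mul_assoc, e3, mul_assoc (R * _), mul_sub R, mul_one, hRQ]
      simp
    calc G = G * Q + G * (1 - Q) := by rw [← mul_add]; simp
      _ = 0 := by rw [hGQ, hG1, add_zero]
  have sqc : ContinuousOn (fun x : ℝ => x ^ 2) (Set.Ici (0 : ℝ)) := by fun_prop
  have hcsq : (Matrix.trace (Φ ρ * mpow (Φ σ) (-1) * Φ ρ) = Matrix.trace (ρ * mpow σ (-1) * ρ)) ↔
      maxSf (fun x => x ^ 2) (Φ ρ) (Φ σ) = maxSf (fun x => x ^ 2) ρ σ := by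
    rw [← maxSf_sq ρ σ hρ hσ hsupp, ← maxSf_sq (Φ ρ) (Φ σ) hΦρ (hΦpos σ hσ) hΦsupp]
    exact Complex.ofReal_inj
  have efd : (∀ o, (R * Φ ρ * R) * E o = y o • E o) →
      Φ (ρ * mpow σ (-1) * ρ) = Φ ρ * mpow (Φ σ) (-1) * Φ ρ := by
    intro he
    have e1 : ρ * mpow σ (-1) * ρ = s * (∑ i, (x i) ^ 2 • p i) * s := by
      rw [← hXsum (fun x => x ^ 2), cfc_sq _ hX.1, ← hrr]
      symm
      calc s * (r * ρ * r) ^ 2 * s = (s * r) * ρ * (r * r) * (ρ * (r * s)) := by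
            simp only [pow_two, mul_assoc]
        _ = _ := by rw [hsr, hrs, hρq, hqρ]
    have e2 := cfc_sum_eig (fun x => x ^ 2) _ hTp.1 y E he hE1
    have e3 := hSEsum (fun x => x ^ 2)
    rw [← e2, cfc_sq _ hTp.1] at e3
    rw [e1, hsum, ← e3, ← hRR]
    calc S * (R * Φ ρ * R) ^ 2 * S = (S * R) * Φ ρ * (R * R) * (Φ ρ * (R * S)) := by
            simp only [pow_two, mul_assoc]
        _ = _ := by rw [hSR, hRS, hρQ, hQρ]
  refine ⟨⟨?_, ?_⟩, ⟨?_, ?_⟩, ⟨?_, ?_⟩⟩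
  · rintro ⟨f, hc, hf, hna, heq⟩ f' _ _
    exact back (fwd f hc hf hna heq) f'
  · intro h
    exact ⟨fun x => x ^ 2, sqc, sq_opconv, sq_nonaffine, h _ sqc sq_opconv⟩
  · intro h
    exact hcsq.2 (h _ sqc sq_opconv)
  · intro h f _ _
    exact back (fwd _ sqc sq_opconv sq_nonaffine (hcsq.1 h)) f
  · intro h
    exact efd (fwd _ sqc sq_opconv sq_nonaffine (hcsq.1 h))
  · intro h
    rw [← h, hΦtr]
end

section
/- Let ρ, σ ∈ M_n(ℂ) be positive semidefinite with supp ρ ⊆ supp σ. For a continuous convex function f : [0,∞) → ℝ, define the projectively measured f-divergence S_f^{pr}(ρ‖σ) as the supremum, over all projective measurements (P_x)_{x∈X} on ℂ^n, of Σ_{x : Tr(σP_x) > 0} Tr(σP_x) · f( Tr(ρP_x) / Tr(σP_x) ) (the terms with Tr(σP_x) = 0 also have Tr(ρP_x) = 0 and contribute 0). Then ρσ = σρ if and only if S_f(ρ‖σ) = S_f^{pr}(ρ‖σ) holds for every continuous convex function f : [0,∞) → ℝ. -/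
open Matrix
open scoped ComplexOrder

/-- A projective measurement on `ℂ^n`: a finite family of mutually orthogonal
orthogonal projections summing to the identity. -/
def IsProjMeas {n k : ℕ} (P : Fin k → Matrix (Fin n) (Fin n) ℂ) : Prop :=
  (∀ x, (P x).IsHermitian) ∧ (∀ x, P x * P x = P x) ∧
    (∀ x y, x ≠ y → P x * P y = 0) ∧ ∑ x, P x = 1

/-- The projectively measured `f`-divergence: the supremum over all projective
measurements `(P_x)` of `Σ_{x : Tr(σ P_x) > 0} Tr(σ P_x) · f(Tr(ρ P_x)/Tr(σ P_x))`. -/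
noncomputable def SfPr {n : ℕ} (f : ℝ → ℝ) (ρ σ : Matrix (Fin n) (Fin n) ℂ) : ℝ :=
  sSup {r : ℝ | ∃ (k : ℕ) (P : Fin k → Matrix (Fin n) (Fin n) ℂ), IsProjMeas P ∧
    r = ∑ x, if 0 < (Matrix.trace (σ * P x)).re then
        (Matrix.trace (σ * P x)).re *
          f ((Matrix.trace (ρ * P x)).re / (Matrix.trace (σ * P x)).re)
      else 0}


section helpers
variable {n : ℕ}

lemma contSpec (A : Matrix (Fin n) (Fin n) ℂ) (g : ℝ → ℝ) : ContinuousOn g (spectrum ℝ A) :=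
  (Matrix.finite_real_spectrum (A := A)).continuousOn g

noncomputable def spF (A : Matrix (Fin n) (Fin n) ℂ) : Finset ℝ :=
  (Matrix.finite_real_spectrum (A := A)).toFinset

lemma mem_spF (A : Matrix (Fin n) (Fin n) ℂ) (a : ℝ) : a ∈ spF A ↔ a ∈ spectrum ℝ A := by
  simp [spF]

lemma cfc_eq_sum (A : Matrix (Fin n) (Fin n) ℂ) (g : ℝ → ℝ) :
    cfc g A = ∑ a ∈ spF A, g a • specProj A a := by
  have h1 : ∀ a, g a • specProj A a = cfc (fun x => g a • (if x = a then (1:ℝ) else 0)) A := by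
    intro a
    rw [specProj, cfc_smul (g a) _ A (contSpec A _)]
  simp_rw [h1]
  rw [← cfc_sum _ _ _ (fun i _ => contSpec A _)]
  apply cfc_congr
  intro x hx
  have hx' : x ∈ spF A := (mem_spF A x).2 hx
  simp [Finset.sum_apply, hx']

lemma specProj_herm (A : Matrix (Fin n) (Fin n) ℂ) (a : ℝ) : (specProj A a).IsHermitian :=
  cfc_predicate (R := ℝ) (p := IsSelfAdjoint) _ A

lemma specProj_idem (A : Matrix (Fin n) (Fin n) ℂ) (a : ℝ) :
    specProj A a * specProj A a = specProj A a := by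
  rw [specProj, ← cfc_mul _ _ A (contSpec A _) (contSpec A _)]
  congr 1
  ext x
  simp

lemma specProj_orth (A : Matrix (Fin n) (Fin n) ℂ) {a b : ℝ} (h : a ≠ b) :
    specProj A a * specProj A b = 0 := by
  rw [specProj, specProj, ← cfc_mul _ _ A (contSpec A _) (contSpec A _)]
  have : (fun x : ℝ => (if x = a then (1:ℝ) else 0) * (if x = b then (1:ℝ) else 0)) = fun _ => 0 := by
    ext x
    by_cases hx : x = a
    · subst hx; simp [h]
    · simp [hx]
  rw [this, cfc_const_zero]

lemma specProj_sum {A : Matrix (Fin n) (Fin n) ℂ} (hA : A.IsHermitian) :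
    ∑ a ∈ spF A, specProj A a = 1 := by
  have := cfc_eq_sum A (fun _ => 1)
  have hA' : IsSelfAdjoint A := hA
  rw [cfc_const_one ℝ A hA'] at this
  simpa using this.symm

lemma specProj_sum_id {A : Matrix (Fin n) (Fin n) ℂ} (hA : A.IsHermitian) :
    ∑ a ∈ spF A, a • specProj A a = A := by
  have := cfc_eq_sum A (fun x => x)
  have hA' : IsSelfAdjoint A := hA
  rw [cfc_id' ℝ A hA'] at this
  exact this.symm

lemma mul_specProj {A : Matrix (Fin n) (Fin n) ℂ} (hA : A.IsHermitian) (a : ℝ) :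
    A * specProj A a = a • specProj A a := by
  have hA' : IsSelfAdjoint A := hA
  have h : A * specProj A a = cfc (fun x : ℝ => x) A * specProj A a := by
    rw [cfc_id' ℝ A hA']
  rw [h, specProj, ← cfc_mul _ _ A (contSpec A _) (contSpec A _), ← cfc_smul a _ A (contSpec A _)]
  congr 1
  ext x
  by_cases hx : x = a <;> simp [hx]

lemma specProj_comm {A B : Matrix (Fin n) (Fin n) ℂ} (h : A * B = B * A) (a b : ℝ) :
    specProj A a * specProj B b = specProj B b * specProj A a := by
  have h0 : Commute A B := h
  have h1 : Commute (specProj A a) B := h0.cfc_real _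
  have h2 : Commute (specProj B b) (specProj A a) := h1.symm.cfc_real _
  exact h2.symm

lemma Sf_eq (f : ℝ → ℝ) (ρ σ : Matrix (Fin n) (Fin n) ℂ) :
    Sf f ρ σ = ∑ a ∈ spF ρ, ∑ b ∈ spF σ,
      b * f (a / b) * (Matrix.trace (specProj ρ a * specProj σ b)).re := by
  unfold Sf
  rw [finsum_mem_eq_finite_toFinset_sum _ (Matrix.finite_real_spectrum (A := ρ))]
  refine Finset.sum_congr rfl fun a _ => ?_
  rw [finsum_mem_eq_finite_toFinset_sum _ (Matrix.finite_real_spectrum (A := σ))]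
  refine Finset.sum_congr rfl fun b _ => ?_
  split_ifs with h
  · simp [h]
  · rfl

lemma trace_proj_nonneg {E P : Matrix (Fin n) (Fin n) ℂ} (hE : E.IsHermitian) (hE2 : E * E = E)
    (hP : P.IsHermitian) (hP2 : P * P = P) : 0 ≤ (Matrix.trace (E * P)).re := by
  have h := (Matrix.posSemidef_conjTranspose_mul_self (E * P)).trace_nonneg
  have h2 : Matrix.trace ((E * P)ᴴ * (E * P)) = Matrix.trace (E * P) := by
    rw [Matrix.conjTranspose_mul, hE.eq, hP.eq, Matrix.trace_mul_comm]
    have : E * P * (P * E) = E * P * E := by rw [← mul_assoc, mul_assoc E P P, hP2]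
    rw [this, Matrix.trace_mul_comm, ← mul_assoc, hE2]
  rw [h2] at h
  exact (Complex.le_def.1 h).1

lemma limit_lemma (Y s : Matrix (Fin n) (Fin n) ℂ)
    (h : ∀ ε > (0:ℝ), ∃ X : Matrix (Fin n) (Fin n) ℂ, (Matrix.trace (X * Xᴴ)).re < ε ∧
      Y - Yᴴ = Xᴴ * s - s * X) : Y = Yᴴ := by
  have h' : ∀ k : ℕ, ∃ X : Matrix (Fin n) (Fin n) ℂ, (Matrix.trace (X * Xᴴ)).re < 1 / ((k:ℝ) + 1) ∧
      Y - Yᴴ = Xᴴ * s - s * X := fun k => h _ (by positivity)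
  choose X hX hY using h'
  have hlim : Filter.Tendsto X Filter.atTop (nhds 0) := by
    refine tendsto_pi_nhds.2 fun i => tendsto_pi_nhds.2 fun j => ?_
    have hb : ∀ k, ‖X k i j‖ ^ 2 ≤ 1 / ((k:ℝ) + 1) := by
      intro k
      refine le_trans ?_ (hX k).le
      have : (Matrix.trace (X k * (X k)ᴴ)).re = ∑ i, ∑ j, ‖X k i j‖ ^ 2 := by
        simp only [Matrix.trace, Matrix.diag, Matrix.mul_apply, Matrix.conjTranspose_apply,
          Complex.re_sum]
        refine Finset.sum_congr rfl fun i _ => Finset.sum_congr rfl fun j _ => ?_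
        rw [Complex.star_def, Complex.mul_conj, Complex.ofReal_re, Complex.normSq_eq_norm_sq]
      rw [this]
      refine le_trans ?_ (Finset.single_le_sum (f := fun i => ∑ j, ‖X k i j‖ ^ 2)
        (fun i _ => Finset.sum_nonneg fun j _ => by positivity) (Finset.mem_univ i))
      exact Finset.single_le_sum (f := fun j => ‖X k i j‖ ^ 2)
        (fun j _ => by positivity) (Finset.mem_univ j)
    have h2 : Filter.Tendsto (fun k => ‖X k i j‖ ^ 2) Filter.atTop (nhds 0) :=
      squeeze_zero (fun k => by positivity) hb tendsto_one_div_add_atTop_nhds_zero_nat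
    have h3 := (Real.continuous_sqrt.tendsto 0).comp h2
    refine (tendsto_zero_iff_norm_tendsto_zero (f := fun k => X k i j)).2 ?_
    simpa [Function.comp_def] using h3
  have hc : Continuous fun Z : Matrix (Fin n) (Fin n) ℂ => Zᴴ * s - s * Z := by fun_prop
  have h4 := (hc.tendsto 0).comp hlim
  have h5 : Filter.Tendsto (fun _ : ℕ => Y - Yᴴ) Filter.atTop (nhds ((0:Matrix (Fin n) (Fin n) ℂ)ᴴ * s - s * 0)) := by
    refine h4.congr fun k => ?_
    exact (hY k).symm
  have h6 := tendsto_nhds_unique h5 tendsto_const_nhds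
  simp at h6
  exact (sub_eq_zero.1 h6.symm)

lemma spec_nonneg {A : Matrix (Fin n) (Fin n) ℂ} (hA : A.PosSemidef) (x : ℝ)
    (hx : x ∈ spectrum ℝ A) : 0 ≤ x := by
  rw [hA.1.spectrum_real_eq_range_eigenvalues] at hx
  obtain ⟨i, rfl⟩ := hx
  exact hA.eigenvalues_nonneg i

lemma Sf_sq (ρ σ : Matrix (Fin n) (Fin n) ℂ) (hρ : ρ.IsHermitian) :
    Sf (fun t => t ^ 2) ρ σ = (Matrix.trace (ρ * ρ * cfc (fun x : ℝ => x⁻¹) σ)).re := by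
  have hρ' : IsSelfAdjoint ρ := hρ
  have h1 : ρ * ρ = cfc (fun x : ℝ => x * x) ρ := by
    rw [cfc_mul _ _ ρ (contSpec ρ _) (contSpec ρ _), cfc_id' ℝ ρ hρ']
  rw [h1, cfc_eq_sum, cfc_eq_sum, Sf_eq, Finset.sum_mul_sum, Matrix.trace_sum, Complex.re_sum]
  refine Finset.sum_congr rfl fun a _ => ?_
  rw [Matrix.trace_sum, Complex.re_sum]
  refine Finset.sum_congr rfl fun b _ => ?_
  rw [Matrix.smul_mul, Matrix.mul_smul, Matrix.trace_smul, Matrix.trace_smul, Complex.smul_re,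
    Complex.smul_re, smul_eq_mul, smul_eq_mul]
  by_cases hb : b = 0
  · simp [hb]
  · field_simp

lemma rev_dir (ρ σ : Matrix (Fin n) (Fin n) ℂ)
    (hρ : ρ.PosSemidef) (hσ : σ.PosSemidef)
    (hsupp : ∀ v : Fin n → ℂ, σ *ᵥ v = 0 → ρ *ᵥ v = 0)
    (h : Sf (fun t => t ^ 2) ρ σ = SfPr (fun t => t ^ 2) ρ σ) : ρ * σ = σ * ρ := by
  have hσ' : IsSelfAdjoint σ := hσ.1
  have hρh : ρᴴ = ρ := hρ.1
  have hspec : ∀ x ∈ spectrum ℝ σ, 0 ≤ x := spec_nonneg hσ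
  obtain ⟨s, hs⟩ : ∃ s, s = cfc Real.sqrt σ := ⟨_, rfl⟩
  obtain ⟨t, ht⟩ : ∃ t, t = cfc (fun x => (Real.sqrt x)⁻¹) σ := ⟨_, rfl⟩
  obtain ⟨Q, hQ⟩ : ∃ Q, Q = cfc (fun x : ℝ => if x = 0 then (0:ℝ) else 1) σ := ⟨_, rfl⟩
  obtain ⟨τ, hτ⟩ : ∃ τ, τ = cfc (fun x : ℝ => x⁻¹) σ := ⟨_, rfl⟩
  have sH : sᴴ = s := by
    rw [hs]; exact cfc_predicate (R := ℝ) (p := IsSelfAdjoint) _ σ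
  have tH : tᴴ = t := by
    rw [ht]; exact cfc_predicate (R := ℝ) (p := IsSelfAdjoint) _ σ
  have QH : Qᴴ = Q := by
    rw [hQ]; exact cfc_predicate (R := ℝ) (p := IsSelfAdjoint) _ σ
  have ss : s * s = σ := by
    rw [hs, ← cfc_mul _ _ σ (contSpec σ _) (contSpec σ _)]
    conv_rhs => rw [← cfc_id' ℝ σ hσ']
    exact cfc_congr fun x hx => Real.mul_self_sqrt (hspec x hx)
  have tt : t * t = τ := by
    rw [ht, hτ, ← cfc_mul _ _ σ (contSpec σ _) (contSpec σ _)]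
    refine cfc_congr fun x hx => ?_
    have := Real.mul_self_sqrt (hspec x hx)
    rw [← mul_inv, this]
  have st : s * t = Q := by
    rw [hs, ht, hQ, ← cfc_mul _ _ σ (contSpec σ _) (contSpec σ _)]
    refine cfc_congr fun x hx => ?_
    split_ifs with h0
    · simp [h0]
    · exact mul_inv_cancel₀ (Real.sqrt_ne_zero'.2 (lt_of_le_of_ne (hspec x hx) (Ne.symm h0)))
  have ts : t * s = Q := by
    rw [← QH, ← st, Matrix.conjTranspose_mul, sH, tH]
  have σQ : σ * Q = σ := by
    have h2 : σ * Q = cfc (fun x : ℝ => x) σ * Q := by rw [cfc_id' ℝ σ hσ']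
    have h3 : σ = cfc (fun x : ℝ => x) σ := by rw [cfc_id' ℝ σ hσ']
    rw [h2, hQ, ← cfc_mul _ _ σ (contSpec σ _) (contSpec σ _)]
    refine Eq.trans (cfc_congr fun x hx => ?_) h3.symm
    by_cases h0 : x = 0 <;> simp [h0]
  have ρQ : ρ * Q = ρ := by
    have h0 : ρ * (Q - 1) = 0 := by
      apply Matrix.ext_of_mulVec_single
      intro i
      rw [← Matrix.mulVec_mulVec, Matrix.zero_mulVec]
      apply hsupp
      rw [Matrix.mulVec_mulVec, mul_sub, σQ, mul_one, sub_self, Matrix.zero_mulVec]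
    rw [mul_sub, mul_one] at h0
    exact sub_eq_zero.1 h0
  have Qρ : Q * ρ = ρ := by
    have := congrArg Matrix.conjTranspose ρQ
    rwa [Matrix.conjTranspose_mul, QH, hρh] at this
  have key : s * ρ * t = (s * ρ * t)ᴴ := by
    apply limit_lemma _ s
    intro ε hε
    have hlt : SfPr (fun t => t ^ 2) ρ σ - ε < SfPr (fun t => t ^ 2) ρ σ := by linarith
    obtain ⟨r, ⟨k, P, ⟨hP1, hP2, hP3, hP4⟩, hr⟩, hlt⟩ := exists_lt_of_lt_csSup (by
      refine ⟨_, 1, fun _ => 1, ⟨fun _ => Matrix.isHermitian_one, fun _ => by simp, ?_, by simp⟩, rfl⟩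
      intro x y hxy
      exact absurd (Subsingleton.elim x y) hxy) hlt
    obtain ⟨c, hc⟩ : ∃ c : Fin k → ℝ, c = fun x => if 0 < (Matrix.trace (σ * P x)).re then
      (Matrix.trace (ρ * P x)).re / (Matrix.trace (σ * P x)).re else 0 := ⟨_, rfl⟩
    obtain ⟨H, hH⟩ : ∃ H, H = ∑ x, c x • P x := ⟨_, rfl⟩
    have HH : Hᴴ = H := by
      rw [hH, Matrix.conjTranspose_sum]
      refine Finset.sum_congr rfl fun x _ => ?_
      rw [Matrix.conjTranspose_smul, (hP1 x).eq]; simp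
    have H2 : H * H = ∑ x, (c x * c x) • P x := by
      rw [hH, Finset.sum_mul_sum]
      refine Finset.sum_congr rfl fun x _ => ?_
      rw [Finset.sum_eq_single x]
      · rw [Matrix.smul_mul, Matrix.mul_smul, hP2, smul_smul]
      · intro y _ hy
        rw [Matrix.smul_mul, Matrix.mul_smul, hP3 x y hy.symm]; simp
      · simp
    have hval : r = 2 * (Matrix.trace (ρ * H)).re - (Matrix.trace (σ * (H * H))).re := by
      rw [hr, H2, hH, Finset.mul_sum, Finset.mul_sum, Matrix.trace_sum, Matrix.trace_sum,
        Complex.re_sum, Complex.re_sum, Finset.mul_sum, ← Finset.sum_sub_distrib]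
      refine Finset.sum_congr rfl fun x _ => ?_
      rw [Matrix.mul_smul, Matrix.mul_smul, Matrix.trace_smul, Matrix.trace_smul, Complex.smul_re,
        Complex.smul_re, smul_eq_mul, smul_eq_mul, hc]
      simp only
      split_ifs with hp
      · field_simp; ring
      · simp
    refine ⟨H * s - ρ * t, ?_, ?_⟩
    · have hX : (H * s - ρ * t) * (H * s - ρ * t)ᴴ = H * σ * H - H * ρ - ρ * H + ρ * τ * ρ := by
        rw [Matrix.conjTranspose_sub, Matrix.conjTranspose_mul, Matrix.conjTranspose_mul, sH, tH,
          HH, hρh]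
        have e1 : H * s * (s * H) = H * σ * H := by rw [← ss]; noncomm_ring
        have e2 : H * s * (t * ρ) = H * ρ := by
          rw [← mul_assoc, mul_assoc H s t, st, mul_assoc, Qρ]
        have e3 : ρ * t * (s * H) = ρ * H := by
          rw [← mul_assoc, mul_assoc ρ t s, ts, ρQ]
        have e4 : ρ * t * (t * ρ) = ρ * τ * ρ := by rw [← tt]; noncomm_ring
        rw [sub_mul, mul_sub, mul_sub, e1, e2, e3, e4]; abel
      rw [hX]
      have e1 : Matrix.trace (H * σ * H) = Matrix.trace (σ * (H * H)) := by
        rw [mul_assoc, Matrix.trace_mul_comm, mul_assoc]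
      have e2 : Matrix.trace (ρ * τ * ρ) = Matrix.trace (ρ * ρ * τ) := by
        rw [Matrix.trace_mul_comm, mul_assoc]
      rw [Matrix.trace_add, Matrix.trace_sub, Matrix.trace_sub, e1, e2,
        Matrix.trace_mul_comm H ρ]
      have e3 := Sf_sq ρ σ hρ.1
      rw [← hτ, h] at e3
      simp only [Complex.add_re, Complex.sub_re]
      linarith
    · simp only [Matrix.conjTranspose_sub, Matrix.conjTranspose_mul, sH, tH, HH, hρh]
      noncomm_ring
  rw [Matrix.conjTranspose_mul, Matrix.conjTranspose_mul, sH, tH, hρh] at key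
  have k2 : s * (s * ρ * t) * s = s * (t * (ρ * s)) * s := by rw [key]
  have l1 : s * (s * ρ * t) * s = σ * ρ := by
    calc s * (s * ρ * t) * s = (s * s) * (ρ * (t * s)) := by noncomm_ring
      _ = _ := by rw [ss, ts, ρQ]
  have l2 : s * (t * (ρ * s)) * s = ρ * σ := by
    calc s * (t * (ρ * s)) * s = (s * t) * ρ * (s * s) := by noncomm_ring
      _ = _ := by rw [ss, st, Qρ]
  rw [← l1, ← l2, k2]

lemma fwd_dir (ρ σ : Matrix (Fin n) (Fin n) ℂ)
    (hρ : ρ.PosSemidef) (hσ : σ.PosSemidef)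
    (hsupp : ∀ v : Fin n → ℂ, σ *ᵥ v = 0 → ρ *ᵥ v = 0) (hcomm : ρ * σ = σ * ρ)
    (f : ℝ → ℝ) (hf : ConvexOn ℝ (Set.Ici (0 : ℝ)) f) : Sf f ρ σ = SfPr f ρ σ := by
  obtain ⟨E, hE⟩ : ∃ E : ℝ × ℝ → Matrix (Fin n) (Fin n) ℂ,
    E = fun p => specProj ρ p.1 * specProj σ p.2 := ⟨_, rfl⟩
  obtain ⟨S, hS⟩ : ∃ S : Finset (ℝ × ℝ), S = spF ρ ×ˢ spF σ := ⟨_, rfl⟩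
  have hS1 : ∀ p ∈ S, 0 ≤ p.1 := fun p hp => by
    rw [hS, Finset.mem_product] at hp
    exact spec_nonneg hρ _ ((mem_spF _ _).1 hp.1)
  have hS2 : ∀ p ∈ S, 0 ≤ p.2 := fun p hp => by
    rw [hS, Finset.mem_product] at hp
    exact spec_nonneg hσ _ ((mem_spF _ _).1 hp.2)
  have hcm := fun a b => specProj_comm hcomm a b
  have hEH : ∀ p, (E p).IsHermitian := fun p => by
    rw [hE]
    change (_ * _)ᴴ = _ * _
    rw [Matrix.conjTranspose_mul, (specProj_herm ρ _).eq, (specProj_herm σ _).eq, hcm]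
  have hmul : ∀ p q, E p * E q = (specProj ρ p.1 * specProj ρ q.1) *
      (specProj σ p.2 * specProj σ q.2) := fun p q => by
    rw [hE]
    simp only
    rw [mul_assoc, ← mul_assoc (specProj σ p.2), ← hcm]
    simp only [mul_assoc]
  have hE2 : ∀ p, E p * E p = E p := fun p => by
    rw [hmul, specProj_idem, specProj_idem, hE]
  have hEo : ∀ p q, p ≠ q → E p * E q = 0 := fun p q hpq => by
    rw [hmul]
    by_cases h1 : p.1 = q.1
    · have h2 : p.2 ≠ q.2 := fun h2 => hpq (Prod.ext h1 h2)
      rw [specProj_orth σ h2, mul_zero]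
    · rw [specProj_orth ρ h1, zero_mul]
  have hEs : ∑ p ∈ S, E p = 1 := by
    rw [hS, Finset.sum_product, hE]
    simp only
    rw [← Finset.sum_mul_sum, specProj_sum hρ.1, specProj_sum hσ.1, mul_one]
  have hρE : ∀ p, ρ * E p = p.1 • E p := fun p => by
    rw [hE]
    simp only
    rw [← mul_assoc, mul_specProj hρ.1, Matrix.smul_mul]
  have hσE : ∀ p, σ * E p = p.2 • E p := fun p => by
    rw [hE]
    simp only
    rw [hcm, ← mul_assoc, mul_specProj hσ.1, Matrix.smul_mul]
  have hE0 : ∀ p, p.2 = 0 → p.1 • E p = 0 := fun p hp => by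
    rw [← hρE]
    apply Matrix.ext_of_mulVec_single
    intro i
    rw [← Matrix.mulVec_mulVec, Matrix.zero_mulVec]
    apply hsupp
    rw [Matrix.mulVec_mulVec, hσE, hp, zero_smul, Matrix.zero_mulVec]
  have hSf : Sf f ρ σ = ∑ p ∈ S, p.2 * f (p.1 / p.2) * (Matrix.trace (E p)).re := by
    rw [Sf_eq, hS, Finset.sum_product, hE]
  have hρP : ∀ P, (Matrix.trace (ρ * P)).re = ∑ p ∈ S, p.1 * (Matrix.trace (E p * P)).re := by
    intro P
    have : ρ * P = ∑ p ∈ S, p.1 • (E p * P) := by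
      calc ρ * P = ρ * (∑ p ∈ S, E p) * P := by rw [hEs, mul_one]
        _ = _ := by
          rw [Finset.mul_sum, Finset.sum_mul]
          exact Finset.sum_congr rfl fun p _ => by rw [hρE, Matrix.smul_mul]
    rw [this, Matrix.trace_sum, Complex.re_sum]
    exact Finset.sum_congr rfl fun p _ => by
      rw [Matrix.trace_smul, Complex.smul_re, smul_eq_mul]
  have hσP : ∀ P, (Matrix.trace (σ * P)).re = ∑ p ∈ S, p.2 * (Matrix.trace (E p * P)).re := by
    intro P
    have : σ * P = ∑ p ∈ S, p.2 • (E p * P) := by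
      calc σ * P = σ * (∑ p ∈ S, E p) * P := by rw [hEs, mul_one]
        _ = _ := by
          rw [Finset.mul_sum, Finset.sum_mul]
          exact Finset.sum_congr rfl fun p _ => by rw [hσE, Matrix.smul_mul]
    rw [this, Matrix.trace_sum, Complex.re_sum]
    exact Finset.sum_congr rfl fun p _ => by
      rw [Matrix.trace_smul, Complex.smul_re, smul_eq_mul]
  symm
  apply IsGreatest.csSup_eq
  constructor
  · refine ⟨Fintype.card S, fun i => E ((Fintype.equivFin S).symm i), ⟨fun _ => hEH _,
      fun _ => hE2 _, ?_, ?_⟩, ?_⟩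
    · intro x y hxy
      apply hEo
      intro h
      exact hxy ((Fintype.equivFin S).symm.injective (Subtype.ext h))
    · rw [Equiv.sum_comp (Fintype.equivFin S).symm (fun p : S => E p), Finset.sum_coe_sort S E, hEs]
    · rw [Equiv.sum_comp (Fintype.equivFin S).symm (fun p : S =>
        if 0 < (Matrix.trace (σ * E p)).re then (Matrix.trace (σ * E p)).re *
          f ((Matrix.trace (ρ * E p)).re / (Matrix.trace (σ * E p)).re) else 0),
        Finset.sum_coe_sort S (fun p =>
        if 0 < (Matrix.trace (σ * E p)).re then (Matrix.trace (σ * E p)).re *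
          f ((Matrix.trace (ρ * E p)).re / (Matrix.trace (σ * E p)).re) else 0), hSf]
      refine Finset.sum_congr rfl fun p hp => ?_
      have ht : 0 ≤ (Matrix.trace (E p)).re := by
        have := trace_proj_nonneg (hEH p) (hE2 p) (hEH p) (hE2 p)
        rwa [hE2] at this
      rw [hσE, hρE, Matrix.trace_smul, Matrix.trace_smul, Complex.smul_re, Complex.smul_re,
        smul_eq_mul, smul_eq_mul]
      have h2 := hS2 p hp
      split_ifs with h
      · have ht' : (Matrix.trace (E p)).re ≠ 0 := fun h0 => by simp [h0] at h
        rw [mul_div_mul_right _ _ ht']; ring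
      · have h0 : p.2 * (Matrix.trace (E p)).re = 0 :=
          le_antisymm (not_lt.1 h) (mul_nonneg h2 ht)
        rw [mul_right_comm, h0, zero_mul]
  · rintro r ⟨k, P, ⟨hP1, hP2, hP3, hP4⟩, rfl⟩
    have hsplit : Sf f ρ σ = ∑ x, ∑ p ∈ S, p.2 * f (p.1 / p.2) * (Matrix.trace (E p * P x)).re := by
      rw [Finset.sum_comm, hSf]
      refine Finset.sum_congr rfl fun p _ => ?_
      rw [← Finset.mul_sum, ← Complex.re_sum, ← Matrix.trace_sum, ← Finset.mul_sum, hP4, mul_one]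
    rw [hsplit]
    refine Finset.sum_le_sum fun x _ => ?_
    have ht : ∀ p, 0 ≤ (Matrix.trace (E p * P x)).re := fun p =>
      trace_proj_nonneg (hEH p) (hE2 p) (hP1 x) (hP2 x)
    have hbt : ∀ p ∈ S, 0 ≤ p.2 * (Matrix.trace (E p * P x)).re := fun p hp =>
      mul_nonneg (hS2 p hp) (ht p)
    obtain ⟨B, hB⟩ : ∃ B, B = (Matrix.trace (σ * P x)).re := ⟨_, rfl⟩
    have hBs := hσP (P x)
    rw [← hB] at hBs ⊢
    split_ifs with hpos
    · have hJ := hf.map_sum_le (t := S) (w := fun p => p.2 * (Matrix.trace (E p * P x)).re / B)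
        (p := fun p => p.1 / p.2) (fun p hp => div_nonneg (hbt p hp) hpos.le)
        (by rw [← Finset.sum_div, ← hBs, div_self hpos.ne'])
        (fun p hp => div_nonneg (hS1 p hp) (hS2 p hp))
      have hq : ∑ p ∈ S, (p.2 * (Matrix.trace (E p * P x)).re / B) • (p.1 / p.2) =
          (Matrix.trace (ρ * P x)).re / B := by
        rw [hρP, Finset.sum_div]
        refine Finset.sum_congr rfl fun p hp => ?_
        by_cases h0 : p.2 = 0
        · have h1 := congrArg (fun M => (Matrix.trace (M * P x)).re) (hE0 p h0)
          simp only [Matrix.smul_mul, Matrix.trace_smul, Complex.smul_re, smul_eq_mul,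
            Matrix.zero_mul, Matrix.trace_zero, Complex.zero_re] at h1
          rw [h1, h0]; simp
        · rw [smul_eq_mul]; field_simp
      rw [hq] at hJ
      calc B * f ((Matrix.trace (ρ * P x)).re / B) ≤ B * _ := mul_le_mul_of_nonneg_left hJ hpos.le
        _ = _ := by
          rw [Finset.mul_sum]
          refine Finset.sum_congr rfl fun p hp => ?_
          rw [smul_eq_mul]; field_simp
    · have hB0 : ∑ p ∈ S, p.2 * (Matrix.trace (E p * P x)).re = 0 :=
        le_antisymm (hBs ▸ not_lt.1 hpos) (Finset.sum_nonneg hbt)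
      rw [Finset.sum_eq_zero_iff_of_nonneg hbt] at hB0
      refine (Finset.sum_eq_zero fun p hp => ?_).ge
      rw [mul_right_comm, hB0 p hp, zero_mul]

end helpers

/-- for positive semidefinite `ρ, σ` with `supp ρ ⊆ supp σ`, `ρ` and `σ`
commute if and only if `S_f(ρ‖σ) = S_f^{pr}(ρ‖σ)` for every continuous convex
`f : [0,∞) → ℝ`. -/
theorem stmt4 {n : ℕ} (ρ σ : Matrix (Fin n) (Fin n) ℂ)
    (hρ : ρ.PosSemidef) (hσ : σ.PosSemidef)
    (hsupp : ∀ v : Fin n → ℂ, σ *ᵥ v = 0 → ρ *ᵥ v = 0) :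
    ρ * σ = σ * ρ ↔
      (∀ f : ℝ → ℝ, ContinuousOn f (Set.Ici (0 : ℝ)) →
        ConvexOn ℝ (Set.Ici (0 : ℝ)) f → Sf f ρ σ = SfPr f ρ σ) := by
  constructor
  · intro hc f _ hf
    exact fwd_dir ρ σ hρ hσ hsupp hc f hf
  · intro h
    exact rev_dir ρ σ hρ hσ hsupp (h (fun t => t ^ 2) (by fun_prop) (convexOn_pow 2))
end

section
/- Let Φ : M_n(ℂ) → M_n(ℂ) be a positive, unital, trace-preserving linear map, let σ ∈ M_n(ℂ) be positive semidefinite with Φ(σ) = σ, and let ρ ∈ M_n(ℂ) be positive semidefinite. Let α, z ∈ ℝ with 0 < α < 1 and α ≤ z ≤ 1. Then Tr( ( σ^{(1−α)/(2z)} Φ(ρ)^{α/z} σ^{(1−α)/(2z)} )^z ) ≥ Tr( ( σ^{(1−α)/(2z)} ρ^{α/z} σ^{(1−α)/(2z)} )^z ). (Since α − 1 < 0, this is exactly the monotonicity D_{α,z}(Φ(ρ)‖Φ(σ)) ≤ D_{α,z}(ρ‖σ) of the α-z-Rényi divergence D_{α,z}(ρ‖σ) := (α−1)^{−1} log Tr(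 ( σ^{(1−α)/(2z)} ρ^{α/z} σ^{(1−α)/(2z)} )^z ).) -/
open Matrix
open scoped ComplexOrder

lemma reprAux {n : ℕ}
    (Φ : Matrix (Fin n) (Fin n) ℂ →ₗ[ℂ] Matrix (Fin n) (Fin n) ℂ)
    (hΦpos : ∀ X, X.PosSemidef → (Φ X).PosSemidef)
    {A : Matrix (Fin n) (Fin n) ℂ} (hA : A.IsHermitian) :
    ∃ Q : Fin n → Matrix (Fin n) (Fin n) ℂ, (∀ i, (Q i).PosSemidef) ∧
      ∀ f : ℝ → ℝ, Φ (cfc f A) = ∑ i, (f (hA.eigenvalues i) : ℂ) • Q i := by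
  set U : Matrix (Fin n) (Fin n) ℂ := (hA.eigenvectorUnitary : Matrix (Fin n) (Fin n) ℂ) with hU
  refine ⟨fun i => Φ (U * diagonal (Pi.single i 1) * Uᴴ), fun i => hΦpos _ ?_, fun f => ?_⟩
  · apply PosSemidef.mul_mul_conjTranspose_same
    refine PosSemidef.diagonal ?_
    intro j
    by_cases h : j = i
    · subst h; simp
    · simp [h]
  · rw [hA.cfc_eq, IsHermitian.cfc, Unitary.conjStarAlgAut_apply]
    simp_rw [← map_smul, ← map_sum]
    congr 1
    have : diagonal (RCLike.ofReal ∘ f ∘ hA.eigenvalues : Fin n → ℂ) =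
        ∑ i, (f (hA.eigenvalues i) : ℂ) • diagonal (Pi.single i (1:ℂ)) := by
      ext a b
      simp only [Matrix.sum_apply, Matrix.smul_apply, diagonal_apply, Pi.single_apply]
      by_cases h : a = b <;> simp [h]
    rw [this, Finset.mul_sum, Finset.sum_mul]
    simp [hU, star_eq_conjTranspose]

lemma cfcAdd {n : ℕ} (A : Matrix (Fin n) (Fin n) ℂ) (hA : A.IsHermitian) : cfc (fun x : ℝ => x) A = A := 
  cfc_id' ℝ A hA.isSelfAdjoint

section
open scoped MatrixOrder Matrix.Norms.L2Operator
lemma monoAux {n : ℕ} {A B : Matrix (Fin n) (Fin n) ℂ} (hA : A.PosSemidef) (hAB : (B - A).PosSemidef) {p : ℝ}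
   (hp : p ∈ Set.Icc 0 1) : (cfc (fun x : ℝ => x ^ p) B - cfc (fun x : ℝ => x ^ p) A).PosSemidef := by
  have h : A ≤ B := hAB
  have h2 := CFC.rpow_le_rpow hp h
  rw [CFC.rpow_eq_cfc_real hA.nonneg, CFC.rpow_eq_cfc_real (hA.nonneg.trans h)] at h2
  exact h2
end

lemma quadAux {n : ℕ} (X : Matrix (Fin n) (Fin n) ℂ) (hX : X.IsHermitian)
    (h : ∀ x : Fin n → ℂ, 0 ≤ (star x ⬝ᵥ (X *ᵥ x)).re) : X.PosSemidef := by
  refine PosSemidef.of_dotProduct_mulVec_nonneg hX fun x => ?_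
  rw [Complex.nonneg_iff]
  exact ⟨h x, (hX.im_star_dotProduct_mulVec_self x).symm⟩

lemma hermAux {n : ℕ} (f : ℝ → ℝ) (A : Matrix (Fin n) (Fin n) ℂ) : (cfc f A).IsHermitian :=
  IsSelfAdjoint.cfc

lemma contAux {n : ℕ} (f : ℝ → ℝ) (A : Matrix (Fin n) (Fin n) ℂ) :
    ContinuousOn f (spectrum ℝ A) := (Matrix.finite_real_spectrum).continuousOn f

lemma specAux {n : ℕ} {A : Matrix (Fin n) (Fin n) ℂ} (hA : A.PosSemidef) :
    ∀ x ∈ spectrum ℝ A, 0 ≤ x := by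
  intro x hx
  have h := (posSemidef_iff_isHermitian_and_spectrum_nonneg.1 hA).2 hx
  exact Complex.zero_le_real.1 h

lemma cfcOne {n : ℕ} {A : Matrix (Fin n) (Fin n) ℂ} (hA : A.IsHermitian) :
    cfc (fun _ : ℝ => (1:ℝ)) A = 1 := cfc_const_one ℝ A hA.isSelfAdjoint

lemma resolventAux {n : ℕ}
    (Φ : Matrix (Fin n) (Fin n) ℂ →ₗ[ℂ] Matrix (Fin n) (Fin n) ℂ)
    (hΦpos : ∀ X, X.PosSemidef → (Φ X).PosSemidef) (hΦunital : Φ 1 = 1)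
    {A : Matrix (Fin n) (Fin n) ℂ} (hA : A.PosSemidef) {t : ℝ} (ht : 0 < t) :
    (Φ (cfc (fun x : ℝ => (t + x)⁻¹) A) - cfc (fun x : ℝ => (t + x)⁻¹) (Φ A)).PosSemidef := by
  obtain ⟨Q, hQ, hf⟩ := reprAux Φ hΦpos hA.1
  have hB := hΦpos A hA
  have h1 := hf (fun _ => 1)
  have h2 := hf (fun x => x)
  rw [cfcOne hA.1, hΦunital] at h1
  simp only [Complex.ofReal_one, one_smul] at h1
  rw [cfcAdd A hA.1] at h2
  have h3 := hf (fun x => (t + x)⁻¹)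
  set B := Φ A
  set R := cfc (fun x : ℝ => (t + x)⁻¹) B with hR
  have hRh : Rᴴ = R := hermAux _ _
  have hRB : ((t : ℂ) • R + B * R) = 1 := by
    have e1 : (t : ℂ) • R = cfc (fun x : ℝ => t * (t + x)⁻¹) B := by
      rw [cfc_const_mul t _ B (contAux _ _)]; rfl
    have e2 : B * R = cfc (fun x : ℝ => x * (t + x)⁻¹) B := by
      rw [cfc_mul _ _ B (contAux _ _) (contAux _ _), cfcAdd B hB.1]
    rw [e1, e2, ← cfc_add _ _ _ (contAux _ _) (contAux _ _), ← cfcOne hB.1]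
    refine cfc_congr fun x hx => ?_
    have := specAux hB x hx
    field_simp
  have key : (∑ i, (((t + hA.1.eigenvalues i)⁻¹ : ℝ) : ℂ) •
      ((1 - ((t + hA.1.eigenvalues i : ℝ) : ℂ) • R) * Q i *
        (1 - ((t + hA.1.eigenvalues i : ℝ) : ℂ) • R)ᴴ)).PosSemidef := by
    refine posSemidef_sum _ fun i _ => ?_
    refine PosSemidef.smul ((hQ i).mul_mul_conjTranspose_same _) ?_
    have := hA.eigenvalues_nonneg i
    rw [Complex.zero_le_real]
    positivity
  convert key using 1
  have : ∀ i, (((t + hA.1.eigenvalues i)⁻¹ : ℝ) : ℂ) •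
      ((1 - ((t + hA.1.eigenvalues i : ℝ) : ℂ) • R) * Q i *
        (1 - ((t + hA.1.eigenvalues i : ℝ) : ℂ) • R)ᴴ) =
        (((t + hA.1.eigenvalues i)⁻¹ : ℝ) : ℂ) • Q i - R * Q i - Q i * R
         + (t : ℂ) • (R * Q i * R) + R * ((hA.1.eigenvalues i : ℂ) • Q i) * R := by
    intro i
    have := hA.eigenvalues_nonneg i
    have h0 : (t + hA.1.eigenvalues i : ℂ) ≠ 0 := by
      have : t + hA.1.eigenvalues i ≠ 0 := by positivity
      exact_mod_cast this
    rw [conjTranspose_sub, conjTranspose_smul, hRh]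
    simp only [conjTranspose_one, Complex.star_def, Complex.conj_ofReal, sub_mul, mul_sub, smul_mul_assoc,
      mul_smul_comm, one_mul, mul_one, smul_sub, smul_smul]
    push_cast
    simp only [smul_smul, one_smul, inv_mul_cancel₀ h0, inv_mul_cancel_left₀ h0, add_smul]
    abel
  simp_rw [this]
  simp only [Finset.sum_add_distrib, Finset.sum_sub_distrib, ← Finset.mul_sum, ← Finset.sum_mul,
    ← Finset.smul_sum]
  rw [← h1, ← h2, ← h3]
  simp only [mul_one, one_mul]
  have : (t : ℂ) • (R * R) + R * B * R = R := by
    have := congrArg (R * ·) hRB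
    simp only [mul_add, mul_smul_comm, mul_one, ← mul_assoc] at this
    exact this
  rw [add_assoc, this]
  abel

lemma kadison {n : ℕ}
    (Φ : Matrix (Fin n) (Fin n) ℂ →ₗ[ℂ] Matrix (Fin n) (Fin n) ℂ)
    (hΦpos : ∀ X, X.PosSemidef → (Φ X).PosSemidef) (hΦunital : Φ 1 = 1)
    {A : Matrix (Fin n) (Fin n) ℂ} (hA : A.IsHermitian) :
    (Φ A).IsHermitian ∧ (Φ (A * A) - Φ A * Φ A).PosSemidef := by
  obtain ⟨Q, hQ, hf⟩ := reprAux Φ hΦpos hA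
  have h1 := hf (fun _ => 1)
  have h2 := hf (fun x => x)
  have h3 := hf (fun x => x * x)
  rw [cfc_mul _ _ A (contAux _ _) (contAux _ _)] at h3
  rw [cfcOne hA, hΦunital] at h1
  rw [cfcAdd A hA] at h2 h3
  have hB : (Φ A).IsHermitian := by
    rw [h2]
    simp only [IsHermitian, conjTranspose_sum, conjTranspose_smul, (hQ _).1.eq]
    simp
  refine ⟨hB, ?_⟩
  set B := Φ A
  have key : (∑ i, ((((hA.eigenvalues i : ℝ) : ℂ) • 1 - B) * Q i *
        (((hA.eigenvalues i : ℝ) : ℂ) • 1 - B)ᴴ)).PosSemidef :=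
    posSemidef_sum _ fun i _ => (hQ i).mul_mul_conjTranspose_same _
  convert key using 1
  have : ∀ i, ((((hA.eigenvalues i : ℝ) : ℂ) • 1 - B) * Q i *
        (((hA.eigenvalues i : ℝ) : ℂ) • 1 - B)ᴴ) =
      ((hA.eigenvalues i * hA.eigenvalues i : ℝ) : ℂ) • Q i
       - B * ((hA.eigenvalues i : ℂ) • Q i) - ((hA.eigenvalues i : ℂ) • Q i) * B
        + B * (((1:ℝ) : ℂ) • Q i) * B := by
    intro i
    rw [conjTranspose_sub, conjTranspose_smul, hB.eq]
    simp only [conjTranspose_one, Complex.star_def, Complex.conj_ofReal, sub_mul, mul_sub, smul_mul_assoc,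
      mul_smul_comm, one_mul, mul_one, smul_sub, smul_smul]
    push_cast
    simp only [one_smul]
    abel
  simp_rw [this]
  simp only [Finset.sum_add_distrib, Finset.sum_sub_distrib, ← Finset.mul_sum, ← Finset.sum_mul]
  rw [← h1, ← h2, ← h3]
  simp

lemma jensenAux {n : ℕ}
    (Φ : Matrix (Fin n) (Fin n) ℂ →ₗ[ℂ] Matrix (Fin n) (Fin n) ℂ)
    (hΦpos : ∀ X, X.PosSemidef → (Φ X).PosSemidef) (hΦunital : Φ 1 = 1)
    {A : Matrix (Fin n) (Fin n) ℂ} (hA : A.PosSemidef) {p : ℝ} (hp : p ∈ Set.Ioc 0 1) :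
    (cfc (fun x : ℝ => x ^ p) (Φ A) - Φ (cfc (fun x : ℝ => x ^ p) A)).PosSemidef := by
  have hB := hΦpos A hA
  rcases eq_or_lt_of_le hp.2 with rfl | hp1
  · simp only [Real.rpow_one]
    rw [cfcAdd _ hA.1, cfcAdd _ hB.1, sub_self]
    exact PosSemidef.zero
  refine quadAux _ ((hermAux _ _).sub (kadison Φ hΦpos hΦunital (hermAux _ _)).1) fun x => ?_
  obtain ⟨Q, hQ, hf⟩ := reprAux Φ hΦpos hA.1
  obtain ⟨P, hP, hg⟩ := reprAux LinearMap.id (fun X hX => hX) hB.1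
  simp only [LinearMap.id_apply] at hg
  set l := hA.1.eigenvalues with hl
  set m := hB.1.eigenvalues with hm
  have hl0 : ∀ i, 0 ≤ l i := hA.eigenvalues_nonneg
  have hm0 : ∀ i, 0 ≤ m i := hB.eigenvalues_nonneg
  have hL : ∀ f : ℝ → ℝ, (star x ⬝ᵥ ((cfc f (Φ A) - Φ (cfc f A)) *ᵥ x)).re =
      ∑ i, f (m i) * (star x ⬝ᵥ (P i *ᵥ x)).re - ∑ i, f (l i) * (star x ⬝ᵥ (Q i *ᵥ x)).re := by
    intro f
    rw [hf, hg, sub_mulVec, sum_mulVec, sum_mulVec, dotProduct_sub, dotProduct_sum, dotProduct_sum]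
    simp [smul_mulVec]
  rw [hL]
  obtain ⟨μ, hμ⟩ := Real.exists_measure_rpow_eq_integral_rpowIntegrand₀₁ (p := p) ⟨hp.1, hp1⟩
  have em := fun i => hμ (m i) (hm0 i)
  have el := fun i => hμ (l i) (hl0 i)
  simp_rw [(em _).2, (el _).2, ← MeasureTheory.integral_mul_const]
  rw [← MeasureTheory.integral_finsetSum, ← MeasureTheory.integral_finsetSum,
    ← MeasureTheory.integral_sub]
  · refine MeasureTheory.setIntegral_nonneg measurableSet_Ioi fun t ht => ?_
    have ht : 0 < t := ht
    have k1 := hL (fun _ => 1)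
    rw [cfcOne hA.1, cfcOne hB.1, hΦunital] at k1
    simp only [sub_self, zero_mulVec, dotProduct_zero, Complex.zero_re, one_mul] at k1
    have k2 := hL (fun x => (t + x)⁻¹)
    have k3 := (resolventAux Φ hΦpos hΦunital hA ht).re_dotProduct_nonneg x
    rw [← neg_sub, neg_mulVec, dotProduct_neg] at k2
    simp only [Complex.neg_re] at k2
    replace k3 : 0 ≤ (star x ⬝ᵥ ((Φ (cfc (fun x : ℝ => (t + x)⁻¹) A) -
      cfc (fun x : ℝ => (t + x)⁻¹) (Φ A)) *ᵥ x)).re := k3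
    simp only [Real.rpowIntegrand₀₁, mul_assoc, ← Finset.mul_sum, sub_mul, Finset.sum_sub_distrib]
    rw [← mul_sub]
    refine mul_nonneg (by positivity) ?_
    have : ∑ i, (star x ⬝ᵥ (P i *ᵥ x)).re = ∑ i, (star x ⬝ᵥ (Q i *ᵥ x)).re := by linarith
    rw [this]
    linarith
  · exact MeasureTheory.integrable_finsetSum _ fun i _ => (em i).1.mul_const _
  · exact MeasureTheory.integrable_finsetSum _ fun i _ => (el i).1.mul_const _
  · exact fun i _ => (el i).1.mul_const _
  · exact fun i _ => (em i).1.mul_const _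

section fixed
variable {n : ℕ}

lemma linZero {X B : Matrix (Fin n) (Fin n) ℂ} (hB : B.IsHermitian)
    (h : ∀ t : ℝ, (X + (t : ℂ) • B).PosSemidef) : B = 0 := by
  have hq : ∀ x : Fin n → ℂ, (star x ⬝ᵥ (B *ᵥ x)).re = 0 := by
    intro x
    have h1 : ∀ t : ℝ, 0 ≤ (star x ⬝ᵥ (X *ᵥ x)).re + t * (star x ⬝ᵥ (B *ᵥ x)).re := by
      intro t
      have := (h t).re_dotProduct_nonneg x
      simpa [add_mulVec, smul_mulVec] using this
    set a := (star x ⬝ᵥ (X *ᵥ x)).re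
    set b := (star x ⬝ᵥ (B *ᵥ x)).re
    by_contra hb
    have := h1 (-(a + 1) / b)
    rw [div_mul_cancel₀ _ hb] at this
    linarith
  have p1 : B.PosSemidef := quadAux B hB fun x => (hq x).ge
  have p2 : (-B).PosSemidef := quadAux (-B) hB.neg fun x => by
    rw [neg_mulVec, dotProduct_neg, Complex.neg_re, hq, neg_zero]
  have t1 := p1.trace_nonneg
  have t2 := p2.trace_nonneg
  rw [trace_neg] at t2
  exact p1.trace_eq_zero_iff.1 (le_antisymm (neg_nonneg.1 t2) t1)

variable (Φ : Matrix (Fin n) (Fin n) ℂ →ₗ[ℂ] Matrix (Fin n) (Fin n) ℂ)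
    (hΦpos : ∀ X, X.PosSemidef → (Φ X).PosSemidef)
    (hΦunital : Φ 1 = 1) (hΦtr : ∀ X, (Φ X).trace = X.trace)

include hΦpos hΦunital hΦtr

lemma fixSq {T : Matrix (Fin n) (Fin n) ℂ} (hT : T.IsHermitian) (h : Φ T = T) :
    Φ (T * T) = T * T := by
  have k := (kadison Φ hΦpos hΦunital hT).2
  rw [h] at k
  exact sub_eq_zero.1 (k.trace_eq_zero_iff.1 (by rw [trace_sub, hΦtr, sub_self]))

lemma jordanH {T X : Matrix (Fin n) (Fin n) ℂ} (hT : T.IsHermitian) (h : Φ T = T)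
    (hX : X.IsHermitian) : Φ (X * T + T * X) = Φ X * T + T * Φ X := by
  have hΦX := (kadison Φ hΦpos hΦunital hX).1
  have hh : (X * T + T * X).IsHermitian := by
    simp [IsHermitian, hT.eq, hX.eq, add_comm]
  have hB : (Φ (X * T + T * X) - (Φ X * T + T * Φ X)).IsHermitian := by
    refine (kadison Φ hΦpos hΦunital hh).1.sub ?_
    simp [IsHermitian, hT.eq, hΦX.eq, add_comm]
  refine sub_eq_zero.1 (linZero (X := Φ (X * X) - Φ X * Φ X) hB fun t => ?_)
  have hXT : (X + (t : ℂ) • T).IsHermitian := by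
    simp [IsHermitian, hT.eq, hX.eq]
  have k := (kadison Φ hΦpos hΦunital hXT).2
  convert k using 1
  have e : (X + (t : ℂ) • T) * (X + (t : ℂ) • T) =
      X * X + (t : ℂ) • (X * T + T * X) + ((t : ℂ) * t) • (T * T) := by
    simp only [add_mul, mul_add, smul_mul_assoc, mul_smul_comm, smul_smul, smul_add]
    abel
  rw [e]
  simp only [map_add, map_smul, fixSq Φ hΦpos hΦunital hΦtr hT h, h]
  simp only [add_mul, mul_add, smul_mul_assoc, mul_smul_comm, smul_smul, smul_add, smul_sub]
  abel

lemma jordan {T : Matrix (Fin n) (Fin n) ℂ} (hT : T.IsHermitian) (h : Φ T = T)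
    (X : Matrix (Fin n) (Fin n) ℂ) : Φ (X * T + T * X) = Φ X * T + T * Φ X := by
  have h1 := jordanH Φ hΦpos hΦunital hΦtr hT h (realPart X).2
  have h2 := jordanH Φ hΦpos hΦunital hΦtr hT h (imaginaryPart X).2
  have e := realPart_add_I_smul_imaginaryPart X
  rw [← e]
  generalize ((realPart X : selfAdjoint _) : Matrix (Fin n) (Fin n) ℂ) = Y at *
  generalize ((imaginaryPart X : selfAdjoint _) : Matrix (Fin n) (Fin n) ℂ) = Z at *
  calc Φ ((Y + Complex.I • Z) * T + T * (Y + Complex.I • Z))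
      = Φ (Y * T + T * Y) + Complex.I • Φ (Z * T + T * Z) := by
        rw [← map_smul, ← map_add]
        congr 1
        simp only [add_mul, mul_add, smul_mul_assoc, mul_smul_comm, smul_add]
        abel
    _ = _ := by
        rw [h1, h2]
        simp only [map_add, map_smul, add_mul, mul_add, smul_mul_assoc, mul_smul_comm, smul_add]
        abel

lemma jordanConj {T : Matrix (Fin n) (Fin n) ℂ} (hT : T.IsHermitian) (h : Φ T = T)
    (X : Matrix (Fin n) (Fin n) ℂ) : Φ (T * X * T) = T * Φ X * T := by
  have h2 := fixSq Φ hΦpos hΦunital hΦtr hT h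
  have hT2 : (T * T).IsHermitian := by simp [IsHermitian, hT.eq]
  have j1 := jordan Φ hΦpos hΦunital hΦtr hT h X
  have j2 := jordan Φ hΦpos hΦunital hΦtr hT h (X * T + T * X)
  have j3 := jordan Φ hΦpos hΦunital hΦtr hT2 h2 X
  rw [j1] at j2
  have e1 : (X * T + T * X) * T + T * (X * T + T * X) =
    (2 : ℂ) • (T * X * T) + (X * (T * T) + T * T * X) := by
    rw [two_smul]; noncomm_ring
  rw [e1, map_add, j3, map_smul] at j2
  have e2 : (Φ X * T + T * Φ X) * T + T * (Φ X * T + T * Φ X) =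
    (2 : ℂ) • (T * Φ X * T) + (Φ X * (T * T) + T * T * Φ X) := by
    rw [two_smul]; noncomm_ring
  rw [e2] at j2
  exact smul_right_injective _ (two_ne_zero (α := ℂ)) (add_right_cancel j2)

lemma fixPow {T : Matrix (Fin n) (Fin n) ℂ} (hT : T.IsHermitian) (h : Φ T = T) (k : ℕ) :
    Φ (T ^ k) = T ^ k := by
  induction k with
  | zero => simpa using hΦunital
  | succ k ih =>
    have j := jordan Φ hΦpos hΦunital hΦtr hT h (T ^ k)
    rw [ih, ← pow_succ, ← pow_succ', ← two_smul ℂ, map_smul] at j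
    exact smul_right_injective _ (two_ne_zero (α := ℂ)) j

lemma fixCfc {T : Matrix (Fin n) (Fin n) ℂ} (hT : T.IsHermitian) (h : Φ T = T) (f : ℝ → ℝ) :
    Φ (cfc f T) = cfc f T := by
  classical
  have hfin : (spectrum ℝ T).Finite := Matrix.finite_real_spectrum
  set q : Polynomial ℝ := Lagrange.interpolate hfin.toFinset id f
  have hq : cfc f T = cfc q.eval T := by
    refine cfc_congr fun x hx => ?_
    exact (Lagrange.eval_interpolate_at_node f (v := id) Function.injective_id.injOn
      (hfin.mem_toFinset.2 hx)).symm
  rw [hq, cfc_polynomial q T hT.isSelfAdjoint, Polynomial.aeval_eq_sum_range, map_sum]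
  refine Finset.sum_congr rfl fun i _ => ?_
  rw [LinearMap.map_smul_of_tower, fixPow Φ hΦpos hΦunital hΦtr hT h]
end fixed

lemma mpow_eq {n : ℕ} (A : Matrix (Fin n) (Fin n) ℂ) {t : ℝ} (ht : 0 < t) :
    mpow A t = cfc (fun x : ℝ => x ^ t) A := by
  unfold mpow
  congr 1
  ext x
  split_ifs with h
  · rw [h, Real.zero_rpow ht.ne']
  · rfl

lemma psdPow {n : ℕ} {A : Matrix (Fin n) (Fin n) ℂ} (hA : A.PosSemidef) (t : ℝ) :
    (cfc (fun x : ℝ => x ^ t) A).PosSemidef := by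
  obtain ⟨P, hP, hg⟩ := reprAux LinearMap.id (fun X hX => hX) hA.1
  have := hg (fun x : ℝ => x ^ t)
  rw [LinearMap.id_apply] at this
  rw [this]
  refine posSemidef_sum _ fun i _ => (hP i).smul ?_
  rw [Complex.zero_le_real]
  exact Real.rpow_nonneg (hA.eigenvalues_nonneg i) _

lemma traceMono {n : ℕ} {A B : Matrix (Fin n) (Fin n) ℂ} (h : (B - A).PosSemidef) :
    A.trace.re ≤ B.trace.re := by
  have := (Complex.le_def.1 h.trace_nonneg).1
  rw [trace_sub, Complex.sub_re, Complex.zero_re] at this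
  linarith

/-- monotonicity of the α-z-Rényi trace functional (`0 < α < 1`,
`α ≤ z ≤ 1`) under a positive unital trace-preserving map fixing `σ`:
`Tr((σ^{(1−α)/(2z)} Φ(ρ)^{α/z} σ^{(1−α)/(2z)})^z) ≥ Tr((σ^{(1−α)/(2z)} ρ^{α/z} σ^{(1−α)/(2z)})^z)`. -/
theorem stmt5 {n : ℕ}
    (Φ : Matrix (Fin n) (Fin n) ℂ →ₗ[ℂ] Matrix (Fin n) (Fin n) ℂ)
    (hΦpos : ∀ X, X.PosSemidef → (Φ X).PosSemidef)
    (hΦunital : Φ 1 = 1) (hΦtr : ∀ X, (Φ X).trace = X.trace)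
    (σ : Matrix (Fin n) (Fin n) ℂ) (hσ : σ.PosSemidef) (hfix : Φ σ = σ)
    (ρ : Matrix (Fin n) (Fin n) ℂ) (hρ : ρ.PosSemidef)
    (α z : ℝ) (hα0 : 0 < α) (hα1 : α < 1) (hαz : α ≤ z) (hz1 : z ≤ 1) :
    (Matrix.trace (mpow (mpow σ ((1 - α) / (2 * z)) * mpow ρ (α / z) *
        mpow σ ((1 - α) / (2 * z))) z)).re
      ≤ (Matrix.trace (mpow (mpow σ ((1 - α) / (2 * z)) * mpow (Φ ρ) (α / z) *
          mpow σ ((1 - α) / (2 * z))) z)).re := by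
  have hz : 0 < z := hα0.trans_le hαz
  have hs : 0 < (1 - α) / (2 * z) := by
    have : 0 < 1 - α := by linarith
    positivity
  have hp : α / z ∈ Set.Ioc (0:ℝ) 1 := ⟨by positivity, (div_le_one hz).2 hαz⟩
  simp only [mpow_eq _ hz, mpow_eq _ hs, mpow_eq _ hp.1]
  set S := cfc (fun x : ℝ => x ^ ((1 - α) / (2 * z))) σ
  have hS : S.IsHermitian := hermAux _ _
  have hΦS : Φ S = S := fixCfc Φ hΦpos hΦunital hΦtr hσ.1 hfix _
  have hC : (S * cfc (fun x : ℝ => x ^ (α / z)) ρ * S).PosSemidef := by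
    have := (psdPow hρ (α / z)).mul_mul_conjTranspose_same S
    rwa [hS.eq] at this
  have j1 := (jensenAux Φ hΦpos hΦunital hρ hp).mul_mul_conjTranspose_same S
  rw [hS.eq, mul_sub, sub_mul, ← jordanConj Φ hΦpos hΦunital hΦtr hS hΦS] at j1
  have j2 := monoAux (hΦpos _ hC) j1 (p := z) ⟨hz.le, hz1⟩
  have j3 := jensenAux Φ hΦpos hΦunital hC (p := z) ⟨hz, hz1⟩
  have t2 := traceMono j2
  have t3 := traceMono j3
  rw [hΦtr] at t3
  exact t3.trans t2
end
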